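/- arXiv:1003.5615 — 15 statements merged into one kernel-verified Lean document; each statement's English description precedes it below -/
import Mathlib

section
/- Let n ≥ 2 be an integer, k > 0 and λ ∈ ℝ. Suppose w : ℝ → ℝ is twice continuously differentiable on (0,1) and satisfies the radial hypergeometric equation E(n, λ/k) on (0,1). Then the function f(r) := w(sin²(√k·r/2)) satisfies f''(r) + (n−1)·√k·cot(√k·r)·f'(r) − (k(n−1)/4)·(sec²(√k·r/2) + n − 1)·f(r) = −λ·f(r) for every r ∈ (0, π/√k). -/
open Real Set

/-- A function `w` satisfies the radial hypergeometric equation `E(n, τ)` on the set `I`: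
`z(1−z)w'' + (n/2 − nz)w' − (((n−1)/4)(n−1+1/(1−z)) − τ)w = 0` on `I`. -/
def SatisfiesRadialHG (n : ℕ) (τ : ℝ) (w : ℝ → ℝ) (I : Set ℝ) : Prop :=
  ∀ z ∈ I, z * (1 - z) * deriv (deriv w) z + ((n : ℝ) / 2 - n * z) * deriv w z
    - (((n : ℝ) - 1) / 4 * ((n : ℝ) - 1 + 1 / (1 - z)) - τ) * w z = 0

theorem radial_substitution (n : ℕ) (hn : 2 ≤ n) (k : ℝ) (hk : 0 < k) (lam : ℝ)
    (w : ℝ → ℝ) (hw : ContDiffOn ℝ 2 w (Ioo 0 1))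
    (hE : SatisfiesRadialHG n (lam / k) w (Ioo 0 1))
    (f : ℝ → ℝ) (hf : ∀ r, f r = w (Real.sin (Real.sqrt k * r / 2) ^ 2)) :
    ∀ r ∈ Ioo 0 (π / Real.sqrt k),
      deriv (deriv f) r
        + ((n : ℝ) - 1) * Real.sqrt k * Real.cot (Real.sqrt k * r) * deriv f r
        - k * ((n : ℝ) - 1) / 4
            * ((Real.cos (Real.sqrt k * r / 2))⁻¹ ^ 2 + (n : ℝ) - 1) * f r
      = -lam * f r := by
  intro r hr
  have ha : 0 < Real.sqrt k := Real.sqrt_pos.mpr hk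
  have hak : Real.sqrt k ^ 2 = k := Real.sq_sqrt hk.le
  set a := Real.sqrt k with hadef
  have hpos : ∀ x ∈ Ioo 0 (π / a), 0 < Real.sin (a * x / 2) ∧ 0 < Real.cos (a * x / 2) := by
    intro x hx
    have h1 : 0 < a * x := mul_pos ha hx.1
    have h2 : a * x < π := by
      have := (lt_div_iff₀ ha).mp hx.2
      linarith
    have hpi := Real.pi_pos
    exact ⟨Real.sin_pos_of_pos_of_lt_pi (by linarith) (by linarith),
      Real.cos_pos_of_mem_Ioo ⟨by linarith, by linarith⟩⟩
  have hz : ∀ x ∈ Ioo 0 (π / a), Real.sin (a * x / 2) ^ 2 ∈ Ioo (0:ℝ) 1 := by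
    intro x hx
    obtain ⟨h1, h2⟩ := hpos x hx
    have h3 := Real.sin_sq_add_cos_sq (a * x / 2)
    exact ⟨by positivity, by nlinarith [pow_pos h2 2]⟩
  have hlin : ∀ x, HasDerivAt (fun x : ℝ => a * x / 2) (a / 2) x := by
    intro x
    simpa using ((hasDerivAt_id x).const_mul a).div_const 2
  have hZ : ∀ x, HasDerivAt (fun x : ℝ => Real.sin (a * x / 2) ^ 2)
      (a * Real.sin (a * x / 2) * Real.cos (a * x / 2)) x := by
    intro x
    have h := (hlin x).sin.fun_pow 2
    refine h.congr_deriv ?_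
    norm_num
    ring
  have hw1 : ∀ z ∈ Ioo (0:ℝ) 1, HasDerivAt w (deriv w z) z := fun z h =>
    ((hw.differentiableOn (by norm_num)).differentiableAt (isOpen_Ioo.mem_nhds h)).hasDerivAt
  have hw2 : ∀ z ∈ Ioo (0:ℝ) 1, HasDerivAt (deriv w) (deriv (deriv w) z) z := fun z h =>
    (((hw.deriv_of_isOpen (m := 1) isOpen_Ioo (by norm_num)).differentiableOn
      (by norm_num)).differentiableAt (isOpen_Ioo.mem_nhds h)).hasDerivAt
  have hfe : f = fun r => w (Real.sin (a * r / 2) ^ 2) := funext hf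
  have hf1 : ∀ x ∈ Ioo 0 (π / a), deriv f x = deriv w (Real.sin (a * x / 2) ^ 2) *
      (a * Real.sin (a * x / 2) * Real.cos (a * x / 2)) := by
    intro x hx
    rw [hfe]
    exact ((hw1 _ (hz x hx)).comp x (hZ x)).deriv
  have hf2 : deriv (deriv f) r =
      deriv (deriv w) (Real.sin (a * r / 2) ^ 2) *
        (a * Real.sin (a * r / 2) * Real.cos (a * r / 2)) ^ 2 +
      deriv w (Real.sin (a * r / 2) ^ 2) *
        (a ^ 2 / 2 * (Real.cos (a * r / 2) ^ 2 - Real.sin (a * r / 2) ^ 2)) := by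
    have he : deriv f =ᶠ[nhds r] fun x => deriv w (Real.sin (a * x / 2) ^ 2) *
        (a * Real.sin (a * x / 2) * Real.cos (a * x / 2)) :=
      Filter.eventuallyEq_of_mem (isOpen_Ioo.mem_nhds hr) hf1
    rw [he.deriv_eq]
    have h1 : HasDerivAt (fun x => deriv w (Real.sin (a * x / 2) ^ 2))
        (deriv (deriv w) (Real.sin (a * r / 2) ^ 2) *
          (a * Real.sin (a * r / 2) * Real.cos (a * r / 2))) r :=
      HasDerivAt.comp r (hw2 _ (hz r hr)) (hZ r)
    have h2 := (((hlin r).sin.const_mul a).mul (hlin r).cos)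
    refine (h1.mul h2).deriv.trans ?_
    simp only [Pi.mul_apply]
    ring
  rw [hf2, hf1 r hr, hf r]
  have hE' := hE _ (hz r hr)
  obtain ⟨hs, hc⟩ := hpos r hr
  have hsc := Real.sin_sq_add_cos_sq (a * r / 2)
  have hcot : Real.cot (a * r) = (Real.cos (a * r / 2) ^ 2 - Real.sin (a * r / 2) ^ 2) /
      (2 * Real.sin (a * r / 2) * Real.cos (a * r / 2)) := by
    rw [Real.cot_eq_cos_div_sin, show a * r = 2 * (a * r / 2) by ring, Real.cos_two_mul',
      Real.sin_two_mul, show 2 * (a * r / 2) / 2 = a * r / 2 by ring]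
  rw [hcot]
  clear hcot hf2 hf1
  generalize Real.sin (a * r / 2) = s at *
  generalize Real.cos (a * r / 2) = c at *
  have h1 : 1 - s ^ 2 = c ^ 2 := by linarith
  rw [h1] at hE'
  generalize deriv (deriv w) (s ^ 2) = W2 at *
  generalize deriv w (s ^ 2) = W1 at *
  generalize w (s ^ 2) = W at *
  have e1 : ((n : ℝ) - 1) * a * ((c ^ 2 - s ^ 2) / (2 * s * c)) * (W1 * (a * s * c))
      = ((n : ℝ) - 1) * a ^ 2 * (c ^ 2 - s ^ 2) / 2 * W1 := by
    field_simp
  have e2 : lam = k * (lam / k) := by field_simp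
  rw [e1, hak, mul_pow, mul_pow, hak]
  generalize lam / k = τ at *
  subst e2
  have h3 : c ^ 2 = 1 - s ^ 2 := h1.symm
  rw [one_div, ← inv_pow] at hE'
  generalize c⁻¹ ^ 2 = C at *
  rw [h3] at hE' ⊢
  linear_combination k * hE'
end

section
/- Let n ≥ 2 be an integer and j ∈ ℕ. The function w(z) := √(1−z) · ₂F₁(n+j, −j, n/2; z) (a polynomial multiple of √(1−z), since the hypergeometric series terminates) satisfies the radial hypergeometric equation E(n, (n/2 + j)²) on the interval (0,1). -/
open Real Set

lemma hg_poly (n : ℕ) (hn : 2 ≤ n) (j : ℕ) : ∃ P : Polynomial ℝ,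
    (∀ z : ℝ, ₂F₁ ((n : ℝ) + j) (-(j : ℝ)) ((n : ℝ) / 2) z = P.eval z) ∧
    ∀ z : ℝ, z * (1 - z) * P.derivative.derivative.eval z
      + ((n : ℝ) / 2 - (n + 1) * z) * P.derivative.eval z + j * (n + j) * P.eval z = 0 := by
  obtain ⟨c, hc⟩ : ∃ c : ℕ → ℝ, c = ordinaryHypergeometricCoefficient ((n : ℝ) + j) (-(j : ℝ)) ((n : ℝ) / 2) :=
    ⟨_, rfl⟩
  have hn0 : (0 : ℝ) < n := by positivity
  have hz : ∀ m, j < m → c m = 0 := by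
    intro m hm
    have : (ascPochhammer ℝ m).eval (-(j : ℝ)) = 0 := ascPochhammer_eval_neg_coe_nat_of_lt hm
    simp [hc, ordinaryHypergeometricCoefficient, this]
  have hrec : ∀ m : ℕ, ((m : ℝ) + 1) * (n / 2 + m) * c (m + 1) = (n + j + m) * (-j + m) * c m := by
    intro m
    have h1 : ((n : ℝ) / 2 + m) ≠ 0 := by positivity
    have h2 : (ascPochhammer ℝ m).eval ((n : ℝ) / 2) ≠ 0 :=
      (ascPochhammer_pos m _ (by positivity)).ne'
    have h3 : ((m.factorial : ℕ) : ℝ) ≠ 0 := by positivity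
    have h4 : (m : ℝ) + 1 ≠ 0 := by positivity
    simp only [hc, ordinaryHypergeometricCoefficient, ascPochhammer_succ_eval, Nat.factorial_succ]
    push_cast
    field_simp
  let P : Polynomial ℝ := ∑ m ∈ Finset.range (j + 1), Polynomial.monomial m (c m)
  have hP : ∀ m, P.coeff m = c m := by
    intro m
    simp only [P, Polynomial.finsetSum_coeff, Polynomial.coeff_monomial]
    simp only [Finset.sum_ite_eq', Finset.mem_range]
    split_ifs with h
    · rfl
    · rw [hz m (by omega)]
  clear_value P
  refine ⟨P, ?_, ?_⟩
  · intro z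
    have hd : P.natDegree < j + 1 := by
      refine Nat.lt_succ_of_le (Polynomial.natDegree_le_iff_coeff_eq_zero.2 ?_)
      intro m hm
      rw [hP, hz m hm]
    rw [ordinaryHypergeometric_eq_tsum, Polynomial.eval_eq_sum_range' hd]
    simp only [hP]
    rw [tsum_eq_sum (s := Finset.range (j + 1))]
    · refine Finset.sum_congr rfl fun m _ => ?_
      simp [hc, ordinaryHypergeometricCoefficient]
    · intro m hm
      have := hz m (by simpa using hm)
      rw [hc] at this
      simp only [ordinaryHypergeometricCoefficient] at this
      rw [this, zero_smul]
  · have key : Polynomial.X * P.derivative.derivative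
        - Polynomial.X * (Polynomial.X * P.derivative.derivative)
        + Polynomial.C ((n : ℝ) / 2) * P.derivative
        - Polynomial.C ((n : ℝ) + 1) * (Polynomial.X * P.derivative)
        + Polynomial.C ((j : ℝ) * (n + j)) * P = 0 := by
      ext m
      simp only [Polynomial.coeff_add, Polynomial.coeff_sub, Polynomial.coeff_C_mul]
      rcases m with _ | _ | m
      · have := hrec 0
        simp [Polynomial.coeff_derivative, hP, Polynomial.mul_coeff_zero] at this ⊢
        linarith
      · have := hrec 1
        simp [Polynomial.coeff_derivative, hP, Polynomial.coeff_X_mul, Polynomial.coeff_C_mul,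
          Polynomial.mul_coeff_zero] at this ⊢
        norm_num at this ⊢
        linarith
      · have := hrec (m + 2)
        simp [Polynomial.coeff_derivative, hP, Polynomial.coeff_X_mul, Polynomial.coeff_C_mul] at this ⊢
        ring_nf at this ⊢
        linarith
    intro z
    have := congrArg (Polynomial.eval z) key
    simp at this
    linarith

theorem discrete_eigenfunction (n : ℕ) (hn : 2 ≤ n) (j : ℕ)
    (w : ℝ → ℝ)
    (hw : ∀ z : ℝ, w z = Real.sqrt (1 - z) *
      ₂F₁ ((n : ℝ) + j) (-(j : ℝ)) ((n : ℝ) / 2) z) :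
    SatisfiesRadialHG n (((n : ℝ) / 2 + j) ^ 2) w (Ioo 0 1) := by
  obtain ⟨P, hP, hode⟩ := hg_poly n hn j
  have hw' : w = fun z => Real.sqrt (1 - z) * P.eval z := by
    funext z; rw [hw, hP]
  have hs : ∀ z : ℝ, z < 1 → HasDerivAt (fun z : ℝ => Real.sqrt (1 - z))
      (-1 / (2 * Real.sqrt (1 - z))) z := by
    intro z hz
    exact ((hasDerivAt_id z).const_sub 1).sqrt (by simp only [id]; linarith)
  have h1 : ∀ z : ℝ, z < 1 → deriv w z = -1 / (2 * Real.sqrt (1 - z)) * P.eval z +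
      Real.sqrt (1 - z) * P.derivative.eval z := by
    intro z hz
    rw [hw']
    exact ((hs z hz).mul (P.hasDerivAt z)).deriv
  intro z hz
  have hz1 : z < 1 := hz.2
  obtain ⟨s, hsd⟩ : ∃ s, s = Real.sqrt (1 - z) := ⟨_, rfl⟩
  have hs0 : 0 < s := by rw [hsd]; exact Real.sqrt_pos.2 (by linarith)
  have hss : s ^ 2 = 1 - z := by rw [hsd]; exact Real.sq_sqrt (by linarith)
  have h2 : deriv (deriv w) z = s * P.derivative.derivative.eval z - P.derivative.eval z / s
      - P.eval z / (4 * s ^ 3) := by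
    have he : deriv w =ᶠ[nhds z] fun z => -1 / (2 * Real.sqrt (1 - z)) * P.eval z +
      Real.sqrt (1 - z) * P.derivative.eval z := by
      filter_upwards [Iio_mem_nhds hz1] with y hy using h1 y hy
    rw [he.deriv_eq]
    have hd := ((((hasDerivAt_const z (-1 : ℝ)).div ((hs z hz1).const_mul 2)
      (by rw [← hsd]; positivity)).mul (P.hasDerivAt z)).add
      ((hs z hz1).mul (P.derivative.hasDerivAt z))).deriv
    refine Eq.trans hd ?_
    simp only [Pi.div_apply, ← hsd]
    field_simp
    ring
  rw [h2, h1 z hz1, hw']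
  simp only [← hsd]
  have hzz : z = 1 - s ^ 2 := by linarith
  have ho := hode z
  generalize P.derivative.derivative.eval z = F2 at *
  generalize P.derivative.eval z = F1 at *
  generalize P.eval z = F0 at *
  clear h2 hsd
  subst hzz
  rw [show (1 : ℝ) - (1 - s ^ 2) = s ^ 2 by ring] at *
  have : F2 * (1 - s ^ 2) * s ^ 2 = -(((n : ℝ) / 2 - (n + 1) * (1 - s ^ 2)) * F1 + j * (n + j) * F0) := by
    linarith
  field_simp
  linear_combination (16 * s ^ 2) * this
end

section
/- Let n ≥ 2 be an integer and σ ∈ ℝ. The complex-valued function w(z) := √(1−z) · ₂F₁(n/2 + iσ, n/2 − iσ, n/2; z) satisfies the radial hypergeometric equation E(n, −σ²) on the interval (−1, 0); moreover w(z) is real for every z ∈ (−1, 0). -/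
open Real Set Complex

/-- A complex-valued function `w` of a real variable satisfies the radial hypergeometric
equation `E(n, τ)` on the set `I`:
`z(1−z)w'' + (n/2 − nz)w' − (((n−1)/4)(n−1+1/(1−z)) − τ)w = 0` on `I`. -/
def SatisfiesRadialHGC (n : ℕ) (τ : ℂ) (w : ℝ → ℂ) (I : Set ℝ) : Prop :=
  ∀ z ∈ I, (z : ℂ) * (1 - z) * deriv (deriv w) z + ((n : ℂ) / 2 - n * z) * deriv w z
    - (((n : ℂ) - 1) / 4 * ((n : ℂ) - 1 + 1 / (1 - (z : ℂ))) - τ) * w z = 0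

lemma hgc_deriv (c : ℕ → ℂ) (f : ℂ → ℂ)
    (h : ∀ z : ℂ, ‖z‖ < 1 → HasSum (fun m => c m * z ^ m) (f z)) (z : ℂ) (hz : ‖z‖ < 1) :
    DifferentiableAt ℂ f z ∧
      HasSum (fun m : ℕ => (((m : ℂ) + 1) * c (m + 1)) * z ^ m) (deriv f z) := by
  obtain ⟨r, hr1, hr2⟩ := exists_between hz
  have hr0 : 0 ≤ r := (norm_nonneg z).trans hr1.le
  have hu : Summable (fun m => ‖c m‖ * r ^ m) := by
    have := (h (r : ℂ) (by simpa [abs_of_nonneg hr0] using hr2)).summable.norm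
    simpa [abs_of_nonneg hr0] using this
  have hU : IsOpen (Metric.ball (0 : ℂ) r) := Metric.isOpen_ball
  have hzU : z ∈ Metric.ball (0 : ℂ) r := by simpa using hr1
  have hd : ∀ i : ℕ, DifferentiableOn ℂ (fun w : ℂ => c i * w ^ i) (Metric.ball (0 : ℂ) r) :=
    fun i => by fun_prop
  have hb : ∀ (i : ℕ) (w : ℂ), w ∈ Metric.ball (0 : ℂ) r → ‖c i * w ^ i‖ ≤ ‖c i‖ * r ^ i := by
    intro i w hw
    have : ‖w‖ ≤ r := by simpa using (mem_ball_zero_iff.1 hw).le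
    rw [norm_mul, norm_pow]
    gcongr
  have hev : f =ᶠ[nhds z] (fun w => ∑' m, c m * w ^ m) := by
    filter_upwards [hU.mem_nhds hzU] with w hw
    exact (h w ((mem_ball_zero_iff.1 hw).trans hr2)).tsum_eq.symm
  have h1 := Complex.differentiableOn_tsum_of_summable_norm hu hd hU hb
  have h2 := Complex.hasSum_deriv_of_summable_norm hu hd hU hb hzU
  refine ⟨hev.differentiableAt_iff.2 (h1.differentiableAt (hU.mem_nhds hzU)), ?_⟩
  rw [hev.deriv_eq]
  have h3 := (hasSum_nat_add_iff' 1).2 h2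
  simp only [Finset.range_one, Finset.sum_singleton, pow_zero, deriv_const, sub_zero] at h3
  convert! h3 using 2 with m
  rw [deriv_const_mul _ (by fun_prop), deriv_pow_field]
  push_cast
  try simp only [Nat.add_sub_cancel]
  ring

lemma hgc_shift (c d : ℕ → ℂ) (z S : ℂ) (h : HasSum (fun m => c m * z ^ m) S)
    (h0 : d 0 = 0) (hs : ∀ m, d (m + 1) = c m) : HasSum (fun m => d m * z ^ m) (z * S) := by
  have := h.mul_left z
  rw [← hasSum_nat_add_iff' 1]
  simp only [Finset.range_one, Finset.sum_singleton, h0, zero_mul, sub_zero]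
  convert! this using 2 with m
  rw [hs]; ring

lemma hgc_ode (a b c : ℂ) (u : ℕ → ℂ) (f : ℂ → ℂ)
    (h : ∀ z : ℂ, ‖z‖ < 1 → HasSum (fun m => u m * z ^ m) (f z))
    (hrec : ∀ m : ℕ, ((m : ℂ) + 1) * (c + m) * u (m + 1) = (a + m) * (b + m) * u m)
    (z : ℂ) (hz : ‖z‖ < 1) :
    DifferentiableAt ℂ f z ∧ DifferentiableAt ℂ (deriv f) z ∧
    z * (1 - z) * deriv (deriv f) z + (c - (a + b + 1) * z) * deriv f z - a * b * f z = 0 := by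
  have H1 := fun z hz => (hgc_deriv u f h z hz).2
  have H2 := hgc_deriv _ _ H1 z hz
  refine ⟨(hgc_deriv u f h z hz).1, H2.1, ?_⟩
  have S0 := h z hz
  have S1 := H1 z hz
  have S2 := H2.2
  have T1 := hgc_shift _ (fun m => (m : ℂ) * u m) _ _ S1 (by simp) (by intro m; push_cast; ring)
  have T2 := hgc_shift _ (fun m => (m : ℂ) * (m + 1) * u (m + 1)) _ _ S2 (by simp)
    (by intro m; push_cast; ring)
  have T3 := hgc_shift _ (fun m => (m : ℂ) * (m - 1) * u m) _ _ T2 (by simp)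
    (by intro m; push_cast; ring)
  have key := (((T2.sub T3).add (S1.mul_left c)).sub (T1.mul_left (a + b + 1))).sub
    (S0.mul_left (a * b))
  have z0 : (fun m : ℕ => ((m : ℂ) * (m + 1) * u (m + 1) * z ^ m - (m : ℂ) * (m - 1) * u m * z ^ m
      + c * (((m : ℂ) + 1) * u (m + 1) * z ^ m) - (a + b + 1) * ((m : ℂ) * u m * z ^ m)
      - a * b * (u m * z ^ m))) = fun _ => 0 := by
    funext m
    linear_combination z ^ m * hrec m
  have := key.unique (by rw [z0]; exact hasSum_zero)
  linear_combination this

lemma hgc_conj (a : ℂ) (m : ℕ) : (starRingEnd ℂ) ((ascPochhammer ℂ m).eval a) =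
    (ascPochhammer ℂ m).eval ((starRingEnd ℂ) a) := by
  induction m with
  | zero => simp
  | succ k ih => simp [ascPochhammer_succ_eval, ih]

theorem continuous_eigenfunction (n : ℕ) (hn : 2 ≤ n) (σ : ℝ)
    (w : ℝ → ℂ)
    (hw : ∀ z : ℝ, w z = (Real.sqrt (1 - z) : ℂ) *
      ₂F₁ ((n : ℂ) / 2 + σ * Complex.I) ((n : ℂ) / 2 - σ * Complex.I) ((n : ℂ) / 2) (z : ℂ)) :
    SatisfiesRadialHGC n (-(σ : ℂ) ^ 2) w (Ioo (-1) 0) ∧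
      ∀ z ∈ Ioo (-1 : ℝ) 0, (w z).im = 0 := by
  have hn' : (2 : ℝ) ≤ n := by exact_mod_cast hn
  obtain ⟨a, ha⟩ : ∃ a, a = (n : ℂ) / 2 + σ * Complex.I := ⟨_, rfl⟩
  obtain ⟨b, hb⟩ : ∃ b, b = (n : ℂ) / 2 - σ * Complex.I := ⟨_, rfl⟩
  obtain ⟨c, hc⟩ : ∃ c, c = (n : ℂ) / 2 := ⟨_, rfl⟩
  have hca : (starRingEnd ℂ) a = b := by
    simp [ha, hb, Complex.conj_ofNat, sub_eq_add_neg]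
  have hcb : (starRingEnd ℂ) b = a := by rw [← hca]; simp
  have hcc : (starRingEnd ℂ) c = c := by simp [hc, Complex.conj_ofNat]
  have hare : a.re = n / 2 := by simp [ha]
  have hbre : b.re = n / 2 := by simp [hb]
  have hcre : c.re = n / 2 := by simp [hc]
  rw [← ha, ← hb, ← hc] at hw
  have hne : ∀ x : ℂ, x.re = n / 2 → ∀ k : ℕ, (k : ℂ) ≠ -x := by
    intro x hx k h
    have := congrArg Complex.re h
    simp [hx] at this
    have hk : (0 : ℝ) ≤ k := Nat.cast_nonneg k
    linarith
  have hrad : (ordinaryHypergeometricSeries ℂ a b c).radius = 1 :=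
    ordinaryHypergeometricSeries_radius_eq_one _ _ _ _
      (fun k => ⟨hne a hare k, hne b hbre k, hne c hcre k⟩)
  set u := ordinaryHypergeometricCoefficient a b c with hu
  set f : ℂ → ℂ := ₂F₁ a b c with hf
  have h : ∀ z : ℂ, ‖z‖ < 1 → HasSum (fun m => u m * z ^ m) (f z) := by
    intro z hz
    have hs := (ordinaryHypergeometricSeries ℂ a b c).hasSum (x := z) (by
      rw [hrad, mem_eball_zero_iff, enorm_eq_nnnorm]; exact_mod_cast hz)
    simp only [ordinaryHypergeometricSeries_apply_eq, smul_eq_mul] at hs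
    exact hs
  have hrec : ∀ m : ℕ, ((m : ℂ) + 1) * (c + m) * u (m + 1) = (a + m) * (b + m) * u m := by
    intro m
    have h1 : c + m ≠ 0 := fun h => hne c hcre m (by linear_combination h)
    have h2 : (m : ℂ) + 1 ≠ 0 := Nat.cast_add_one_ne_zero m
    simp only [hu, ordinaryHypergeometricCoefficient, ascPochhammer_succ_eval, Nat.factorial_succ,
      mul_inv]
    push_cast
    simp only [mul_inv]
    field_simp
  have hode := hgc_ode a b c u f h hrec
  have hnorm : ∀ z ∈ Ioo (-1 : ℝ) 0, ‖(z : ℂ)‖ < 1 := by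
    intro z hz
    rw [Complex.norm_real, Real.norm_eq_abs, abs_lt]
    exact ⟨hz.1, by linarith [hz.2]⟩
  have hw' : w = fun z : ℝ => (Real.sqrt (1 - z) : ℂ) * f (z : ℂ) := funext hw
  have hsq : ∀ z ∈ Ioo (-1 : ℝ) 0, HasDerivAt (fun z : ℝ => (Real.sqrt (1 - z) : ℂ))
      (-(Real.sqrt (1 - z) : ℂ) / (2 * (1 - z))) z := by
    intro z hz
    have hp : 0 < 1 - z := by linarith [hz.2]
    have h1 := (((hasDerivAt_id z).const_sub 1).sqrt hp.ne').ofReal_comp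
    convert! h1 using 1
    have h2 : Real.sqrt (1 - z) ≠ 0 := (Real.sqrt_pos.2 hp).ne'
    have h3 : Real.sqrt (1 - z) ^ 2 = 1 - z := Real.sq_sqrt hp.le
    have : -Real.sqrt (1 - z) / (2 * (1 - z)) = -1 / (2 * Real.sqrt (1 - z)) := by
      rw [← h3, Real.sqrt_sq (Real.sqrt_nonneg _)]; field_simp
    simpa using congrArg (fun x : ℝ => (x : ℂ)) this
  have hne1 : ∀ z ∈ Ioo (-1 : ℝ) 0, (1 - (z : ℂ)) ≠ 0 := by
    intro z hz h
    have : (1 - z : ℝ) = 0 := by exact_mod_cast h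
    linarith [hz.2]
  have hd1 : ∀ z ∈ Ioo (-1 : ℝ) 0, HasDerivAt w
      ((Real.sqrt (1 - z) : ℂ) * (deriv f z - f z / (2 * (1 - z)))) z := by
    intro z hz
    rw [hw']
    have h2 := (hode z (hnorm z hz)).1.hasDerivAt.comp_ofReal
    convert! (hsq z hz).mul h2 using 1
    have := hne1 z hz
    field_simp
    ring
  have hd2 : ∀ z ∈ Ioo (-1 : ℝ) 0, HasDerivAt (deriv w)
      ((Real.sqrt (1 - z) : ℂ) * (deriv (deriv f) z - deriv f z / (1 - z)
        - f z / (4 * (1 - z) ^ 2))) z := by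
    intro z hz
    have hev : deriv w =ᶠ[nhds z] fun z : ℝ =>
        ((Real.sqrt (1 - z) : ℂ) * (deriv f z - f z / (2 * (1 - z)))) := by
      filter_upwards [isOpen_Ioo.mem_nhds hz] with y hy
      exact (hd1 y hy).deriv
    refine HasDerivAt.congr_of_eventuallyEq ?_ hev
    have h1 := (hode z (hnorm z hz)).1.hasDerivAt
    have h2 := (hode z (hnorm z hz)).2.1.hasDerivAt
    have hn1 := hne1 z hz
    have h3 : HasDerivAt (fun y : ℂ => 2 * (1 - y)) (2 * (-1)) (z : ℂ) :=
      ((hasDerivAt_id _).const_sub 1).const_mul 2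
    have h4 := (h2.sub (h1.div h3 (mul_ne_zero two_ne_zero hn1))).comp_ofReal
    convert! (hsq z hz).mul h4 using 1
    simp only [Pi.sub_apply, Pi.div_apply]
    field_simp
    ring
  refine ⟨?_, ?_⟩
  · intro z hz
    rw [(hd2 z hz).deriv, (hd1 z hz).deriv, hw z]
    have e := (hode z (hnorm z hz)).2.2
    have hn1 := hne1 z hz
    have hab : a * b = (n : ℂ) ^ 2 / 4 + σ ^ 2 := by
      rw [ha, hb]; linear_combination (-(σ : ℂ) ^ 2) * Complex.I_sq
    have hsum : a + b = n := by rw [ha, hb]; ring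
    rw [hab, hsum, hc] at e
    have e2 := congrArg (fun x => (Real.sqrt (1 - z) : ℂ) * x) e
    simp only [mul_zero] at e2
    rw [← e2]
    field_simp
    ring
  · intro z hz
    rw [← Complex.conj_eq_iff_im, hw z, map_mul, Complex.conj_ofReal]
    congr 1
    have s := h z (hnorm z hz)
    have s2 := (Complex.hasSum_conj' ).2 s
    refine s2.unique ?_
    convert! s using 2 with m
    simp only [hu, ordinaryHypergeometricCoefficient, map_mul, map_inv₀, map_natCast, map_pow,
      Complex.conj_ofReal, hgc_conj, hca, hcb, hcc]
    ring
end

section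
/- Let n ≥ 2 be an integer and s > 0 a real number such that s − n/2 is not a nonnegative integer. Then the function z ↦ √(1−z) · ₂F₁(n/2 + s, n/2 − s, n/2; z) is unbounded on the interval (0,1). (Consequently, the bounded-eigenfunction condition forces the eigenvalue quantization s = n/2 + j, j ∈ ℕ, in the positive-curvature case.) -/
open Real Set

lemma aux_unbdd (e : ℕ → ℝ) (M : ℕ) (δ : ℝ) (hδ : 0 < δ) (he : ∀ m, M ≤ m → δ ≤ e m)
    (hsum : ∀ z ∈ Ioo (0 : ℝ) 1, Summable fun m => e m * z ^ m) (C : ℝ)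
    (hC : ∀ z ∈ Ioo (0 : ℝ) 1, Real.sqrt (1 - z) * ∑' m, e m * z ^ m ≤ C) : False := by
  set D := ∑ m ∈ Finset.range M, |e m - δ| with hD
  have hD0 : 0 ≤ D := Finset.sum_nonneg fun _ _ => abs_nonneg _
  have key : ∀ z ∈ Ioo (0 : ℝ) 1, δ / (1 - z) - D ≤ ∑' m, e m * z ^ m := by
    intro z hz
    have h1 := (hasSum_geometric_of_lt_one hz.1.le hz.2).mul_left δ
    have h2 := (hsum z hz).hasSum.sub h1
    have h3 : ∑ m ∈ Finset.range M, (e m * z ^ m - δ * z ^ m)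
        ≤ (∑' m, e m * z ^ m) - δ * (1 - z)⁻¹ := by
      refine sum_le_hasSum _ (fun m hm => ?_) h2
      have := he m (by simpa using hm)
      have h4 := pow_nonneg hz.1.le m
      nlinarith
    have h5 : -D ≤ ∑ m ∈ Finset.range M, (e m * z ^ m - δ * z ^ m) := by
      rw [hD, ← Finset.sum_neg_distrib]
      refine Finset.sum_le_sum fun m _ => ?_
      have h4 := pow_nonneg hz.1.le m
      have h6 := pow_le_one₀ (n := m) hz.1.le hz.2.le
      have h7 := neg_abs_le (e m - δ)
      have h8 := abs_nonneg (e m - δ)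
      nlinarith
    rw [div_eq_mul_inv]
    linarith
  set E := |C| + D + 1 with hE
  have hE0 : 0 < E := by positivity
  set t := min (1 / 2) (δ / (2 * E)) with ht
  have ht0 : 0 < t := by positivity
  have ht1 : t ≤ 1 / 2 := min_le_left _ _
  have ht2 : t * (2 * E) ≤ δ := by
    rw [← le_div_iff₀ (by positivity)]; exact min_le_right _ _
  have hz : 1 - t ^ 2 ∈ Ioo (0 : ℝ) 1 := ⟨by nlinarith, by nlinarith⟩
  have h1 := key _ hz
  have h2 := hC _ hz
  have h3 : 1 - (1 - t ^ 2) = t ^ 2 := by ring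
  rw [h3] at h1 h2
  rw [Real.sqrt_sq ht0.le] at h2
  have h4 : t * (δ / t ^ 2 - D) ≤ C := (mul_le_mul_of_nonneg_left h1 ht0.le).trans h2
  have h5 : t * (t * (δ / t ^ 2 - D)) = δ - t ^ 2 * D := by field_simp
  have h6 := mul_le_mul_of_nonneg_left h4 ht0.le
  rw [h5] at h6
  have h7 := le_abs_self C
  have h8 : t ^ 2 * D ≤ t * D := by
    apply mul_le_mul_of_nonneg_right _ hD0; nlinarith
  nlinarith

theorem unbounded_unless_quantized (n : ℕ) (hn : 2 ≤ n) (s : ℝ) (hs : 0 < s)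
    (hquant : ∀ j : ℕ, s - (n : ℝ) / 2 ≠ j) :
    ¬ ∃ C : ℝ, ∀ z ∈ Ioo (0 : ℝ) 1,
      |Real.sqrt (1 - z) * ₂F₁ ((n : ℝ) / 2 + s) ((n : ℝ) / 2 - s) ((n : ℝ) / 2) z| ≤ C := by
  rintro ⟨C, hC⟩
  have hc : (1 : ℝ) ≤ (n : ℝ) / 2 := by
    have : (2 : ℝ) ≤ n := by exact_mod_cast hn
    linarith
  generalize (n : ℝ) / 2 = c at *
  have habc : ∀ k : ℕ, (k : ℝ) ≠ -(c + s) ∧ (k : ℝ) ≠ -(c - s) ∧ (k : ℝ) ≠ -c := by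
    intro k
    have hk : (0 : ℝ) ≤ k := k.cast_nonneg
    refine ⟨by linarith, fun h => hquant k (by linarith), by linarith⟩
  have hrad := ordinaryHypergeometricSeries_radius_eq_one ℝ _ _ _ habc
  set a : ℕ → ℝ := ordinaryHypergeometricCoefficient (c + s) (c - s) c with ha
  have hF : ∀ z : ℝ, ₂F₁ (c + s) (c - s) c z = ∑' m, a m * z ^ m := by
    intro z
    rw [ordinaryHypergeometric_eq_tsum]
    rfl
  have hsum : ∀ z ∈ Ioo (0 : ℝ) 1, Summable fun m => a m * z ^ m := by
    intro z hz
    have := (ordinaryHypergeometricSeries ℝ (c + s) (c - s) c).summable (x := z) (by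
      rw [hrad]
      simp [Real.enorm_eq_ofReal hz.1.le, hz.2])
    rw [ordinaryHypergeometricSeries_apply_eq'] at this
    exact this
  have ha0 : ∀ m, a m ≠ 0 := by
    intro m hm
    have : ordinaryHypergeometricSeries ℝ (c + s) (c - s) c m = 0 := by
      rw [ordinaryHypergeometricSeries, FormalMultilinearSeries.ofScalars_eq_zero]; exact hm
    rw [ordinaryHypergeometricSeries_eq_zero_iff] at this
    obtain ⟨k, _, h⟩ := this
    have := habc k
    tauto
  have hrec : ∀ m : ℕ, a (m + 1) = a m * (((c + m) ^ 2 - s ^ 2) / ((c + m) * (1 + m))) := by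
    intro m
    have h1 : (ascPochhammer ℝ m).eval c ≠ 0 := (ascPochhammer_pos m c (by linarith)).ne'
    have h2 : c + m ≠ 0 := by positivity
    have h3 : (1 + m : ℝ) ≠ 0 := by positivity
    have h4 : (m.factorial : ℝ) ≠ 0 := by exact_mod_cast m.factorial_ne_zero
    simp only [ha, ordinaryHypergeometricCoefficient, ascPochhammer_succ_eval,
      Nat.factorial_succ, Nat.cast_mul, Nat.cast_add, Nat.cast_one]
    have h5 : (m + 1 : ℝ) ≠ 0 := by positivity
    field_simp
    ring
  clear_value a
  obtain ⟨M, hM⟩ := exists_nat_gt (s ^ 2)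
  have hM0 : (0 : ℝ) < M := lt_of_le_of_lt (sq_nonneg s) hM
  have hg : 0 < 1 - s ^ 2 / M := by
    rw [sub_pos, div_lt_one hM0]; exact hM
  have hind : ∀ m, M ≤ m → 1 - s ^ 2 / M ≤ a m / a M * (1 - s ^ 2 / m) := by
    intro m hm
    induction m, hm using Nat.le_induction with
    | base => rw [div_self (ha0 M), one_mul]
    | succ m hm ih =>
      refine ih.trans ?_
      have hmM : (M : ℝ) ≤ m := by exact_mod_cast hm
      have hm0 : (0 : ℝ) < m := by linarith
      have hgm : 0 < 1 - s ^ 2 / m := by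
        rw [sub_pos, div_lt_one hm0]; linarith
      have he : 0 < a m / a M := pos_of_mul_pos_left (hg.trans_le ih) hgm.le
      rw [hrec, mul_div_right_comm, mul_assoc]
      refine mul_le_mul_of_nonneg_left ?_ he.le
      have hr : 1 - s ^ 2 / (1 + m) ^ 2 ≤ ((c + m) ^ 2 - s ^ 2) / ((c + m) * (1 + m)) := by
        have e1 : ((c + m) ^ 2 - s ^ 2) / ((c + m) * (1 + m))
            = (c + m) / (1 + m) - s ^ 2 / ((c + m) * (1 + m)) := by
          have h2 : c + m ≠ 0 := by positivity
          field_simp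
        rw [e1]
        have e2 : 1 ≤ (c + m) / (1 + m) := by
          rw [le_div_iff₀ (by positivity)]; linarith
        have e3 : s ^ 2 / ((c + m) * (1 + m)) ≤ s ^ 2 / (1 + m) ^ 2 := by
          apply div_le_div_of_nonneg_left (sq_nonneg s) (by positivity)
          nlinarith
        linarith
      have hg1 : 0 < 1 - s ^ 2 / ((m + 1 : ℕ) : ℝ) := by
        rw [sub_pos, div_lt_one (by positivity)]; push_cast; linarith
      refine le_trans ?_ (mul_le_mul_of_nonneg_right hr hg1.le)
      have : (1 - s ^ 2 / (1 + m) ^ 2) * (1 - s ^ 2 / ((m + 1 : ℕ) : ℝ)) - (1 - s ^ 2 / m)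
          = s ^ 2 / (m * (m + 1) ^ 2) + (s ^ 2) ^ 2 / (1 + m) ^ 3 := by
        push_cast
        field_simp
        ring
      have h9 : 0 ≤ s ^ 2 / (m * (m + 1) ^ 2) + (s ^ 2) ^ 2 / (1 + m) ^ 3 := by positivity
      linarith
  have he : ∀ z, ∑' m, a m / a M * z ^ m = (∑' m, a m * z ^ m) / a M := by
    intro z
    rw [← tsum_div_const]
    exact tsum_congr fun m => by ring
  refine aux_unbdd (fun m => a m / a M) M _ hg ?_ ?_ (C / |a M|) ?_
  · intro m hm
    have h := hind m hm
    have hmM : (M : ℝ) ≤ m := by exact_mod_cast hm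
    have hm0 : (0 : ℝ) < m := by linarith
    have hgm : 0 < 1 - s ^ 2 / m := by
      rw [sub_pos, div_lt_one hm0]; linarith
    have he : 0 < a m / a M := pos_of_mul_pos_left (hg.trans_le h) hgm.le
    have : 0 ≤ s ^ 2 / m := by positivity
    nlinarith
  · intro z hz
    refine ((hsum z hz).div_const (a M)).congr fun m => ?_
    ring
  · intro z hz
    rw [he, ← mul_div_assoc]
    have := hC z hz
    rw [hF] at this
    refine (le_abs_self _).trans ?_
    rw [abs_div]
    gcongr
end

section
/- Let n ≥ 2 be an integer and define, for z < 0, p(z) := (z(z−1))^{n−1}, ω(z) := (z(z−1))^{n/2−1} (real powers, well defined since z(z−1) > 0 for z < 0) and q(z) := −((n−1)/4)·(n−1 + 1/(1−z)). Then for every z < 0 one has q(z) + (1/4)·[ (1/ω(z))·(d/dz)( p'(z)/ω(z) ) − p'(z)²/(4·ω(z)²·p(z)) ] = (n−1)(n+4z−3)/(16·z·(z−1)), and this expression tends to 0 as z → −∞. -/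
open Real Set Filter

theorem effective_potential_decay (n : ℕ) (hn : 2 ≤ n)
    (p ω q : ℝ → ℝ)
    (hp : ∀ z : ℝ, p z = (z * (z - 1)) ^ ((n : ℝ) - 1))
    (hω : ∀ z : ℝ, ω z = (z * (z - 1)) ^ ((n : ℝ) / 2 - 1))
    (hq : ∀ z : ℝ, q z = -(((n : ℝ) - 1) / 4) * ((n : ℝ) - 1 + 1 / (1 - z))) :
    (∀ z : ℝ, z < 0 →
      q z + (1 / 4) * ((1 / ω z) * deriv (fun y => deriv p y / ω y) z
          - (deriv p z) ^ 2 / (4 * (ω z) ^ 2 * p z))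
        = ((n : ℝ) - 1) * ((n : ℝ) + 4 * z - 3) / (16 * z * (z - 1))) ∧
    Tendsto (fun z : ℝ => ((n : ℝ) - 1) * ((n : ℝ) + 4 * z - 3) / (16 * z * (z - 1)))
      atBot (nhds 0) := by
  have hu : ∀ z : ℝ, z < 0 → 0 < z * (z - 1) := fun z hz => by nlinarith
  have hud : ∀ z : ℝ, HasDerivAt (fun y : ℝ => y * (y - 1)) (2 * z - 1) z := by
    intro z
    have h := (hasDerivAt_id z).mul ((hasDerivAt_id z).sub_const 1)
    refine h.congr_deriv ?_
    simp only [id]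
    ring
  have hωpos : ∀ z : ℝ, z < 0 → 0 < ω z := fun z hz => by
    rw [hω]; exact Real.rpow_pos_of_pos (hu z hz) _
  have hpω : ∀ z : ℝ, z < 0 → p z = ω z ^ 2 * (z * (z - 1)) := by
    intro z hz
    have h := hu z hz
    rw [hp, hω, pow_two, ← Real.rpow_add h]
    nth_rewrite 3 [← Real.rpow_one (z * (z - 1))]
    rw [← Real.rpow_add h]
    congr 1
    ring
  have hωd : ∀ z : ℝ, z < 0 →
      HasDerivAt ω (((n : ℝ) / 2 - 1) * (2 * z - 1) * ω z / (z * (z - 1))) z := by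
    intro z hz
    have h := (hud z).rpow_const (p := (n : ℝ) / 2 - 1) (Or.inl (hu z hz).ne')
    rw [show ω = fun y : ℝ => (y * (y - 1)) ^ ((n : ℝ) / 2 - 1) from funext hω]
    refine h.congr_deriv ?_
    rw [Real.rpow_sub_one (hu z hz).ne']
    ring
  have hpd : ∀ z : ℝ, z < 0 → deriv p z = ((n : ℝ) - 1) * (2 * z - 1) * ω z ^ 2 := by
    intro z hz
    have h := (hud z).rpow_const (p := (n : ℝ) - 1) (Or.inl (hu z hz).ne')
    rw [show p = fun y : ℝ => (y * (y - 1)) ^ ((n : ℝ) - 1) from funext hp, h.deriv,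
      Real.rpow_sub_one (hu z hz).ne', ← hp, hpω z hz]
    have := (hu z hz).ne'
    rw [mul_div_cancel_right₀ _ this]
    ring
  constructor
  · intro z hz
    have hd : deriv (fun y => deriv p y / ω y) z
        = ((n : ℝ) - 1) * (2 * ω z
          + (2 * z - 1) * (((n : ℝ) / 2 - 1) * (2 * z - 1) * ω z / (z * (z - 1)))) := by
      have he : (fun y => deriv p y / ω y)
          =ᶠ[nhds z] fun y => ((n : ℝ) - 1) * ((2 * y - 1) * ω y) := by
        filter_upwards [Iio_mem_nhds hz] with y hy
        have := (hωpos y hy).ne'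
        rw [hpd y hy]
        field_simp
      rw [he.deriv_eq]
      have h1 : HasDerivAt (fun y : ℝ => 2 * y - 1) 2 z := by
        simpa using ((hasDerivAt_id z).const_mul 2).sub_const 1
      exact ((h1.mul (hωd z hz)).const_mul _).deriv
    rw [hd, hpd z hz, hpω z hz, hq]
    have h1 := (hωpos z hz).ne'
    have h2 : z ≠ 0 := hz.ne
    have h3 : z - 1 ≠ 0 := by linarith
    have h4 : 1 / (1 - z) = -1 / (z - 1) := by
      rw [show (1 - z) = -(z - 1) by ring, div_neg, neg_div]
    rw [h4]
    generalize ω z = W at *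
    field_simp
    ring
  · have ha : Tendsto (fun z : ℝ => z⁻¹) atBot (nhds 0) := tendsto_inv_atBot_zero
    have hb : Tendsto (fun z : ℝ => (z - 1)⁻¹) atBot (nhds 0) :=
      tendsto_inv_atBot_zero.comp (tendsto_atBot_add_const_right _ (-1) tendsto_id)
    have hc : Tendsto (fun z : ℝ => ((n : ℝ) - 1) / 16 * ((((n : ℝ) - 3) * z⁻¹ + 4) * (z - 1)⁻¹))
        atBot (nhds (((n : ℝ) - 1) / 16 * ((((n : ℝ) - 3) * 0 + 4) * 0))) :=
      (((ha.const_mul _).add_const 4).mul hb).const_mul _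
    rw [mul_zero, mul_zero] at hc
    refine hc.congr' ?_
    filter_upwards [Iio_mem_atBot (0 : ℝ)] with z hz
    have hz : z < 0 := hz
    have h2 : z ≠ 0 := hz.ne
    have h3 : z - 1 ≠ 0 := by linarith
    field_simp
    ring
end

section
/- Let n ≥ 2 be an integer and s ∈ ℂ such that 1 − 2s is not a nonpositive integer. Then the complex-valued function w(z) := (−z)^{s − n/2} · √(1−z) · ₂F₁(n/2 − s, 1 − s, 1 − 2s; 1/z), where (−z)^{s−n/2} := exp((s − n/2)·log(−z)) with the real logarithm, satisfies the radial hypergeometric equation E(n, s²) on the interval (−∞, −1). -/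
open Real Set Complex

theorem aux_series (A : ℕ → ℂ) (f : ℂ → ℂ)
    (hf : ∀ x ∈ Metric.ball (0 : ℂ) 1, HasSum (fun m => A m * x ^ m) (f x)) :
    ∀ x ∈ Metric.ball (0 : ℂ) 1, HasDerivAt f (deriv f x) x ∧
      HasSum (fun m : ℕ => ((m : ℂ) + 1) * A (m + 1) * x ^ m) (deriv f x) ∧
      HasSum (fun m : ℕ => (m : ℂ) * A m * x ^ m) (x * deriv f x) := by
  intro x hx
  have hx1 : ‖x‖ < 1 := by simpa using hx
  obtain ⟨r, hxr, hr1⟩ := exists_between hx1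
  have hr0 : 0 ≤ r := (norm_nonneg x).trans hxr.le
  have hu : Summable (fun m => ‖A m‖ * r ^ m) := by
    have h := (hf (r : ℂ) (by simpa [abs_of_nonneg hr0] using hr1)).summable.norm
    simpa [abs_of_nonneg hr0] using h
  have hd : ∀ m : ℕ, DifferentiableOn ℂ (fun y : ℂ => A m * y ^ m) (Metric.ball 0 r) := by
    intro m; fun_prop
  have hle : ∀ (m : ℕ) (y : ℂ), y ∈ Metric.ball (0 : ℂ) r → ‖A m * y ^ m‖ ≤ ‖A m‖ * r ^ m := by
    intro m y hy
    have hy : ‖y‖ < r := by simpa using hy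
    rw [norm_mul, norm_pow]
    gcongr
  have hxb : x ∈ Metric.ball (0 : ℂ) r := by simpa using hxr
  have heq : ∀ y ∈ Metric.ball (0 : ℂ) r, f y = ∑' m, A m * y ^ m := by
    intro y hy
    refine ((hf y ?_).tsum_eq).symm
    have hy : ‖y‖ < r := by simpa using hy
    simpa using hy.trans hr1
  have hev : f =ᶠ[nhds x] (fun y => ∑' m, A m * y ^ m) := by
    filter_upwards [Metric.isOpen_ball.mem_nhds hxb] with y hy using heq y hy
  have hs := hasSum_deriv_of_summable_norm hu hd Metric.isOpen_ball hle hxb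
  have hdiff := (differentiableOn_tsum_of_summable_norm hu hd Metric.isOpen_ball hle).differentiableAt
    (Metric.isOpen_ball.mem_nhds hxb)
  rw [← hev.deriv_eq] at hs
  have hder : ∀ m : ℕ, deriv (fun y : ℂ => A m * y ^ m) x = A m * (m * x ^ (m - 1)) := by
    intro m
    simp
  simp only [hder] at hs
  refine ⟨(hdiff.congr_of_eventuallyEq hev).hasDerivAt, ?_, ?_⟩
  · have h := (hasSum_nat_add_iff' 1).2 hs
    simp only [Finset.sum_range_one, Nat.cast_zero, zero_mul, mul_zero, sub_zero,
      Nat.add_sub_cancel, Nat.cast_add, Nat.cast_one] at h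
    have e : (fun m : ℕ => ((m : ℂ) + 1) * A (m + 1) * x ^ m) =
        fun m : ℕ => A (m + 1) * (((m : ℂ) + 1) * x ^ m) := by
      funext m; ring
    rw [e]; exact h
  · have e : (fun m : ℕ => (m : ℂ) * A m * x ^ m) =
        fun m : ℕ => x * (A m * ((m : ℂ) * x ^ (m - 1))) := by
      funext m
      rcases m with _ | m
      · simp
      · simp [pow_succ]; ring
    rw [e]; exact hs.mul_left x

theorem aux_hasSum (a b c : ℂ) (hc : ∀ m : ℕ, c ≠ -(m : ℂ)) :
    ∀ x ∈ Metric.ball (0 : ℂ) 1,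
      HasSum (fun m => ordinaryHypergeometricCoefficient a b c m * x ^ m) (₂F₁ a b c x) := by
  have hrad : 1 ≤ (ordinaryHypergeometricSeries ℂ a b c).radius := by
    by_cases ha : ∃ k : ℕ, a = -(k : ℂ)
    · obtain ⟨k, rfl⟩ := ha
      rw [ordinaryHypergeometric_radius_top_of_neg_nat₁]; exact le_top
    by_cases hb : ∃ k : ℕ, b = -(k : ℂ)
    · obtain ⟨k, rfl⟩ := hb
      rw [ordinaryHypergeometric_radius_top_of_neg_nat₂]; exact le_top
    push Not at ha hb
    rw [ordinaryHypergeometricSeries_radius_eq_one]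
    intro k
    refine ⟨fun h => ha k ?_, fun h => hb k ?_, fun h => hc k ?_⟩ <;> rw [h, neg_neg]
  intro x hx
  have hx' : x ∈ Metric.eball (0 : ℂ) (ordinaryHypergeometricSeries ℂ a b c).radius := by
    refine Metric.eball_subset_eball hrad ?_
    rw [← ENNReal.ofReal_one, Metric.eball_ofReal]
    exact hx
  have h := (ordinaryHypergeometricSeries ℂ a b c).hasSum hx'
  simp only [ordinaryHypergeometricSeries_apply_eq, smul_eq_mul] at h
  exact h

theorem aux_ode (a b c : ℂ) (hc : ∀ m : ℕ, c ≠ -(m : ℂ)) :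
    ∀ x ∈ Metric.ball (0 : ℂ) 1,
      HasDerivAt (₂F₁ a b c : ℂ → ℂ) (deriv (₂F₁ a b c) x) x ∧
      HasDerivAt (deriv (₂F₁ a b c : ℂ → ℂ)) (deriv (deriv (₂F₁ a b c)) x) x ∧
      x * (1 - x) * deriv (deriv (₂F₁ a b c)) x + (c - (a + b + 1) * x) * deriv (₂F₁ a b c) x
        - a * b * ₂F₁ a b c x = 0 := by
  intro x hx
  have h0 := aux_hasSum a b c hc
  have h1 := aux_series _ _ h0
  have h2 := aux_series _ _ (fun y hy => (h1 y hy).2.1)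
  have h3 := aux_series _ _ (fun y hy => (h1 y hy).2.2)
  refine ⟨(h1 x hx).1, (h2 x hx).1, ?_⟩
  have hg : deriv (fun y => y * deriv (₂F₁ a b c) y) x =
      deriv (₂F₁ a b c) x + x * deriv (deriv (₂F₁ a b c)) x := by
    have := ((hasDerivAt_id' x).fun_mul (h2 x hx).1).deriv
    simpa using this
  have e1 := (h2 x hx).2.2
  have e2 := (h3 x hx).2.2
  have e3 := (h1 x hx).2.1
  have e4 := (h1 x hx).2.2
  rw [hg] at e2
  have E := ((e1.sub (e2.sub e4)).add ((e3.mul_left c).sub (e4.mul_left (a + b + 1)))).sub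
    ((h0 x hx).mul_left (a * b))
  have hz := E.unique (a₂ := 0) ?_
  · linear_combination hz
  · refine Eq.subst (motive := fun g : ℕ → ℂ => HasSum g 0) (funext fun m => ?_)
      (hasSum_zero (α := ℂ) (β := ℕ))
    refine Eq.symm ?_
    have hm : c + m ≠ 0 := fun h => hc m (by linear_combination h)
    have hp : (Polynomial.eval c (ascPochhammer ℂ m)) ≠ 0 := by
      rw [Ne, ascPochhammer_eval_eq_zero_iff]
      push Not
      intro k _ h
      exact hc k (by rw [h, neg_neg])
    have hf : ((m.factorial : ℕ) : ℂ) ≠ 0 := by exact_mod_cast m.factorial_ne_zero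
    have hm1 : (m : ℂ) + 1 ≠ 0 := by exact_mod_cast m.succ_ne_zero
    simp only [ordinaryHypergeometricCoefficient, ascPochhammer_succ_eval, Nat.factorial_succ,
      Nat.cast_mul, Nat.cast_add, Nat.cast_one]
    field_simp
    ring

theorem solution_at_infinity (n : ℕ) (hn : 2 ≤ n) (s : ℂ)
    (hs : ∀ m : ℕ, (1 : ℂ) - 2 * s ≠ -(m : ℂ))
    (w : ℝ → ℂ)
    (hw : ∀ z : ℝ, w z = Complex.exp ((s - (n : ℂ) / 2) * (Real.log (-z) : ℂ)) *
      (Real.sqrt (1 - z) : ℂ) *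
      ₂F₁ ((n : ℂ) / 2 - s) (1 - s) (1 - 2 * s) ((z : ℂ)⁻¹)) :
    SatisfiesRadialHGC n (s ^ 2) w (Iio (-1)) := by
  have hode := aux_ode ((n : ℂ) / 2 - s) (1 - s) (1 - 2 * s) hs
  set F : ℂ → ℂ := ₂F₁ ((n : ℂ) / 2 - s) (1 - s) (1 - 2 * s) with hF
  set α : ℂ := s - (n : ℂ) / 2 with hα
  set P : ℝ → ℂ := fun z => Complex.exp (α * (Real.log (-z) : ℂ)) * (Real.sqrt (1 - z) : ℂ) with hP
  have hball : ∀ z : ℝ, z < -1 → ((z : ℂ)⁻¹) ∈ Metric.ball (0 : ℂ) 1 := by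
    intro z hz
    have : 1 < |z| := by rw [abs_of_neg (by linarith)]; linarith
    simpa using inv_lt_one_of_one_lt₀ this
  have hz0 : ∀ z : ℝ, z < -1 → (z : ℂ) ≠ 0 := by
    intro z hz; exact_mod_cast (by linarith : z < 0).ne
  have hz1 : ∀ z : ℝ, z < -1 → (1 : ℂ) - z ≠ 0 := by
    intro z hz; exact_mod_cast (by linarith : 0 < 1 - z).ne'
  have hPd : ∀ z : ℝ, z < -1 → HasDerivAt P (P z * (α / z - 1 / (2 * (1 - z)))) z := by
    intro z hz
    have h1 : HasDerivAt (fun z : ℝ => Real.log (-z)) (z⁻¹) z := by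
      have := (hasDerivAt_neg z).log (by linarith : 0 < -z).ne'
      convert this using 1
      rw [neg_div_neg_eq, one_div]
    have h2 : HasDerivAt (fun z : ℝ => Real.sqrt (1 - z)) (-1 / (2 * Real.sqrt (1 - z))) z :=
      ((hasDerivAt_id z).const_sub 1).sqrt (by simp only [id]; linarith)
    have h3 := ((h1.ofReal_comp.const_mul α).cexp).mul h2.ofReal_comp
    refine h3.congr_deriv ?_
    simp only [hP]
    have hsq : ((Real.sqrt (1 - z) : ℝ) : ℂ) * (Real.sqrt (1 - z) : ℝ) = 1 - z := by
      rw [← Complex.ofReal_mul, Real.mul_self_sqrt (by linarith)]; simp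
    have hS : ((Real.sqrt (1 - z) : ℝ) : ℂ) ≠ 0 := by
      intro h; rw [h] at hsq; exact hz1 z hz (by rw [← hsq]; simp)
    push_cast
    rw [← hsq]
    have := hz0 z hz
    field_simp
    ring
  have hinv : ∀ z : ℝ, z < -1 → HasDerivAt (fun z : ℝ => (z : ℂ)⁻¹) (-1 / (z : ℂ) ^ 2) z := by
    intro z hz
    exact (Complex.ofRealCLM.hasDerivAt (x := z)).fun_inv (hz0 z hz)
  have hFd : ∀ z : ℝ, z < -1 → HasDerivAt (fun z : ℝ => F (z : ℂ)⁻¹)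
      (deriv F (z : ℂ)⁻¹ * (-1 / (z : ℂ) ^ 2)) z := fun z hz =>
    (hode _ (hball z hz)).1.comp z (hinv z hz)
  have hFdd : ∀ z : ℝ, z < -1 → HasDerivAt (fun z : ℝ => deriv F (z : ℂ)⁻¹)
      (deriv (deriv F) (z : ℂ)⁻¹ * (-1 / (z : ℂ) ^ 2)) z := fun z hz =>
    HasDerivAt.comp (h₂ := deriv F) z (hode _ (hball z hz)).2.1 (hinv z hz)
  have hw' : w = fun z => P z * F (z : ℂ)⁻¹ := funext hw
  set L : ℝ → ℂ := fun z => α * (z : ℂ)⁻¹ - (1 / 2) * (1 - (z : ℂ))⁻¹ with hL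
  have hPd' : ∀ z : ℝ, z < -1 → HasDerivAt P (P z * L z) z := by
    intro z hz
    convert hPd z hz using 2
    simp only [hL]
    have := hz0 z hz
    have := hz1 z hz
    field_simp
  have hLd : ∀ z : ℝ, z < -1 → HasDerivAt L
      (α * (-1 / (z : ℂ) ^ 2) - (1 / 2) * (1 / (1 - (z : ℂ)) ^ 2)) z := by
    intro z hz
    have h : HasDerivAt (fun z : ℝ => (1 - (z : ℂ))⁻¹) (-(-1) / (1 - (z : ℂ)) ^ 2) z :=
      ((Complex.ofRealCLM.hasDerivAt (x := z)).const_sub 1).fun_inv (hz1 z hz)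
    rw [neg_neg] at h
    exact ((hinv z hz).const_mul α).sub (h.const_mul (1 / 2))
  have hwd : ∀ z : ℝ, z < -1 → HasDerivAt w
      (P z * (L z * F (z : ℂ)⁻¹ - deriv F (z : ℂ)⁻¹ * ((z : ℂ)⁻¹ * (z : ℂ)⁻¹))) z := by
    intro z hz
    rw [hw']
    refine ((hPd' z hz).mul (hFd z hz)).congr_deriv ?_
    have := hz0 z hz
    field_simp
    ring
  intro z hz
  have hz : z < -1 := hz
  have hdw : deriv w =ᶠ[nhds z] fun z =>
      P z * (L z * F (z : ℂ)⁻¹ - deriv F (z : ℂ)⁻¹ * ((z : ℂ)⁻¹ * (z : ℂ)⁻¹)) := by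
    filter_upwards [Iio_mem_nhds hz] with y hy using (hwd y hy).deriv
  have hdd := (hPd' z hz).fun_mul (((hLd z hz).fun_mul (hFd z hz)).fun_sub
    ((hFdd z hz).fun_mul ((hinv z hz).fun_mul (hinv z hz))))
  rw [hdw.deriv_eq, hdd.deriv, (hwd z hz).deriv, hw']
  have key := (hode _ (hball z hz)).2.2
  have h0 := hz0 z hz
  have h1 := hz1 z hz
  simp only [hL]
  generalize deriv (deriv F) (z : ℂ)⁻¹ = F2 at *
  generalize deriv F (z : ℂ)⁻¹ = F1 at *
  generalize F (z : ℂ)⁻¹ = F0 at *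
  generalize P z = p at *
  rw [hα]
  generalize (z : ℂ) = x at *
  have key' : F2 = (((n : ℂ) / 2 - s) * (1 - s) * F0 -
      (1 - 2 * s - ((n : ℂ) / 2 - s + (1 - s) + 1) * x⁻¹) * F1) * x ^ 2 / (x - 1) := by
    have h1' : x - 1 ≠ 0 := fun h => h1 (by linear_combination -h)
    field_simp
    field_simp at key
    linear_combination key
  have h1' : x - 1 ≠ 0 := fun h => h1 (by linear_combination -h)
  have e : 1 - x = -(x - 1) := by ring
  rw [key', e]
  field_simp
  ring
end

section
/- Let n ≥ 2 be an integer, σ > 0, and set s := iσ. Define on (−∞, −1) the two solutions w₊(z) := (−z)^{−s − n/2} · √(1−z) · ₂F₁(n/2 + s, 1 + s, 1 + 2s; 1/z) and w₋(z) := (−z)^{s − n/2} · √(1−z) · ₂F₁(n/2 − s, 1 − s, 1 − 2s; 1/z), where (−z)^{w} := exp(w·log(−z)) with the real logarithm. Then the reduced Wronskian z ↦ (z(z−1))^{n/2} · ( w₊'(z)·w₋(z) − w₊(z)·w₋'(z) ) is constant on (−∞, −1), and its value is 2iσ. -/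
open Real Set Complex

lemma rw_deriv_series (f : ℂ → ℂ) (q : ℕ → ℂ)
    (hf : HasFPowerSeriesOnBall f (FormalMultilinearSeries.ofScalars ℂ q) 0 1) :
    HasFPowerSeriesOnBall (deriv f)
      (FormalMultilinearSeries.ofScalars ℂ (fun k => ((k : ℂ) + 1) * q (k + 1))) 0 1 := by
  have h := (ContinuousLinearMap.apply ℂ ℂ (1 : ℂ)).comp_hasFPowerSeriesOnBall hf.fderiv
  have e : (ContinuousLinearMap.apply ℂ ℂ (1 : ℂ)).compFormalMultilinearSeries
      (FormalMultilinearSeries.ofScalars ℂ q).derivSeries =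
      FormalMultilinearSeries.ofScalars ℂ (fun k => ((k : ℂ) + 1) * q (k + 1)) := by
    ext k
    have := FormalMultilinearSeries.derivSeries_coeff_one (FormalMultilinearSeries.ofScalars ℂ q) k
    simp only [FormalMultilinearSeries.coeff_ofScalars, nsmul_eq_mul] at this
    simp only [FormalMultilinearSeries.coeff] at this
    simp [FormalMultilinearSeries.ofScalars]
  rw [e] at h
  exact h

lemma rw_hasSum (f : ℂ → ℂ) (q : ℕ → ℂ)
    (hf : HasFPowerSeriesOnBall f (FormalMultilinearSeries.ofScalars ℂ q) 0 1)
    (x : ℂ) (hx : ‖x‖ < 1) : HasSum (fun k => q k * x ^ k) (f x) := by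
  have := hf.hasSum (y := x) (by simpa [← ofReal_norm] using hx)
  simpa [FormalMultilinearSeries.ofScalars_apply_eq, mul_comm] using this

lemma HasSum.rw_congr {f g : ℕ → ℂ} {S : ℂ} (h : HasSum f S) (e : ∀ k, g k = f k) :
    HasSum g S := by
  rwa [show g = f from funext e]

lemma rw_shift (g : ℕ → ℂ) (S : ℂ) (h0 : g 0 = 0) (h : HasSum (fun k => g (k + 1)) S) :
    HasSum g S := by
  have := (hasSum_nat_add_iff (f := g) 1).1 h
  simpa [h0] using this

lemma rw_pow (a b c : ℂ) 
    (habc : ∀ kn : ℕ, (kn : ℂ) ≠ -a ∧ (kn : ℂ) ≠ -b ∧ (kn : ℂ) ≠ -c) :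
    HasFPowerSeriesOnBall (₂F₁ a b c : ℂ → ℂ) (FormalMultilinearSeries.ofScalars ℂ
      (ordinaryHypergeometricCoefficient a b c)) 0 1 := by
  have hr := ordinaryHypergeometricSeries_radius_eq_one ℂ a b c habc
  have := (ordinaryHypergeometricSeries ℂ a b c).hasFPowerSeriesOnBall (by rw [hr]; simp)
  rw [hr] at this
  exact this

lemma rw_ode (a b c : ℂ) 
    (habc : ∀ kn : ℕ, (kn : ℂ) ≠ -a ∧ (kn : ℂ) ≠ -b ∧ (kn : ℂ) ≠ -c)
    (x : ℂ) (hx : ‖x‖ < 1) :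
    HasDerivAt (₂F₁ a b c : ℂ → ℂ) (deriv (₂F₁ a b c) x) x ∧
    HasDerivAt (deriv (₂F₁ a b c : ℂ → ℂ)) (deriv (deriv (₂F₁ a b c)) x) x ∧
    x * (1 - x) * deriv (deriv (₂F₁ a b c)) x + (c - (a + b + 1) * x) * deriv (₂F₁ a b c) x
      - a * b * ₂F₁ a b c x = 0 := by
  have h0 := rw_pow a b c habc
  have h1 := rw_deriv_series _ _ h0
  have h2 := rw_deriv_series _ _ h1
  have hm : x ∈ Metric.eball (0 : ℂ) 1 := by simpa [← ofReal_norm] using hx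
  refine ⟨(h0.analyticAt_of_mem hm).differentiableAt.hasDerivAt,
    (h1.analyticAt_of_mem hm).differentiableAt.hasDerivAt, ?_⟩
  have s0 := rw_hasSum _ _ h0 x hx
  have s1 := rw_hasSum _ _ h1 x hx
  have s2 := rw_hasSum _ _ h2 x hx
  set q := ordinaryHypergeometricCoefficient a b c with hq
  have hrec : ∀ k : ℕ, ((k : ℂ) + 1) * (c + k) * q (k + 1) = (a + k) * (b + k) * q k := by
    intro k
    have hc : c + k ≠ 0 := fun h => (habc k).2.2 (by linear_combination h)
    have hk : (k : ℂ) + 1 ≠ 0 := Nat.cast_add_one_ne_zero k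
    simp only [hq, ordinaryHypergeometricCoefficient, ascPochhammer_succ_eval, Nat.factorial_succ]
    push_cast
    rw [mul_inv, mul_inv]
    field_simp
  have t1 : HasSum (fun k : ℕ => k * q k * x ^ k) (x * deriv (₂F₁ a b c) x) := by
    apply rw_shift
    · simp
    · refine (s1.mul_left x).rw_congr (fun k => ?_)
      push_cast; ring
  have t2 : HasSum (fun k : ℕ => k * (k + 1) * q (k + 1) * x ^ k)
      (x * deriv (deriv (₂F₁ a b c)) x) := by
    apply rw_shift
    · simp
    · refine (s2.mul_left x).rw_congr (fun k => ?_)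
      push_cast; ring
  have t3 : HasSum (fun k : ℕ => k * (k - 1) * q k * x ^ k)
      (x * (x * deriv (deriv (₂F₁ a b c)) x)) := by
    apply rw_shift
    · simp
    · refine (t2.mul_left x).rw_congr (fun k => ?_)
      push_cast; ring
  have T := (((t2.sub t3).add (s1.mul_left c)).sub (t1.mul_left (a + b + 1))).sub
    (s0.mul_left (a * b))
  have Z : HasSum (fun _ : ℕ => (0 : ℂ)) 0 := hasSum_zero
  have := T.unique (by
    refine Z.rw_congr (fun k => ?_)
    linear_combination x ^ k * hrec k)
  linear_combination this

lemma rw_main (ν s : ℂ) 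
    (h1 : ∀ kn : ℕ, (kn : ℂ) ≠ -(ν + s) ∧ (kn : ℂ) ≠ -(1 + s) ∧ (kn : ℂ) ≠ -(1 + 2 * s))
    (h2 : ∀ kn : ℕ, (kn : ℂ) ≠ -(ν - s) ∧ (kn : ℂ) ≠ -(1 - s) ∧ (kn : ℂ) ≠ -(1 - 2 * s))
    (F G : ℂ → ℂ) (hF : F = ₂F₁ (ν + s) (1 + s) (1 + 2 * s))
    (hG : G = ₂F₁ (ν - s) (1 - s) (1 - 2 * s))
    (x : ℂ) (hx : ‖x‖ < 1) :
    (1 - x) ^ (ν + 1) * (2 * s * F x * G x + x * (deriv F x * G x - F x * deriv G x)) = 2 * s := by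
  set H : ℂ → ℂ := fun x => 
    (1 - x) ^ (ν + 1) * (2 * s * F x * G x + x * (deriv F x * G x - F x * deriv G x)) with hH
  have hd : ∀ y : ℂ, ‖y‖ < 1 → HasDerivAt H 0 y := by
    intro y hy
    obtain ⟨f1, f2, f3⟩ := rw_ode _ _ _ h1 y hy
    obtain ⟨g1, g2, g3⟩ := rw_ode _ _ _ h2 y hy
    rw [← hF] at f1 f2 f3
    rw [← hG] at g1 g2 g3
    have hre : 0 < (1 - y).re := by
      have := (Complex.re_le_norm y)
      simp; linarith
    have hne : 1 - y ≠ 0 := by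
      intro h; rw [h] at hre; simp at hre
    have p := ((hasDerivAt_id y).const_sub 1).cpow_const (c := ν + 1) (Or.inl hre)
    have B := (((f1.const_mul (2 * s)).mul g1).add ((hasDerivAt_id y).mul
      ((f2.mul g1).sub (f1.mul g2))))
    have := p.mul B
    refine (this.congr_deriv ?_ : HasDerivAt H 0 y)
    have e : (1 - y) ^ (ν + 1) = (1 - y) ^ ν * (1 - y) := by
      rw [Complex.cpow_add _ _ hne, Complex.cpow_one]
    simp only [id, add_sub_cancel_right, Pi.mul_apply, Pi.add_apply, Pi.sub_apply]
    rw [e]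
    linear_combination (1 - y) ^ ν * (G y * f3 - F y * g3)
  have := (convex_ball (0 : ℂ) 1).is_const_of_fderivWithin_eq_zero (𝕜 := ℂ) (f := H)
    (fun y hy => (hd y (by simpa using hy)).differentiableAt.differentiableWithinAt)
    (fun y hy => by
      rw [fderivWithin_of_isOpen Metric.isOpen_ball hy]
      have := (hd y (by simpa using hy)).hasFDerivAt.fderiv
      rw [this]; ext; simp) (x := x) (y := 0) (by simpa using hx) (by simp)
  refine this.trans ?_
  simp [hH, hF, hG]

theorem reduced_wronskian (n : ℕ) (hn : 2 ≤ n) (σ : ℝ) (hσ : 0 < σ)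
    (s : ℂ) (hs : s = Complex.I * σ)
    (wp wm : ℝ → ℂ)
    (hwp : ∀ z : ℝ, wp z = Complex.exp ((-s - (n : ℂ) / 2) * (Real.log (-z) : ℂ)) *
      (Real.sqrt (1 - z) : ℂ) *
      ₂F₁ ((n : ℂ) / 2 + s) (1 + s) (1 + 2 * s) ((z : ℂ)⁻¹))
    (hwm : ∀ z : ℝ, wm z = Complex.exp ((s - (n : ℂ) / 2) * (Real.log (-z) : ℂ)) *
      (Real.sqrt (1 - z) : ℂ) *
      ₂F₁ ((n : ℂ) / 2 - s) (1 - s) (1 - 2 * s) ((z : ℂ)⁻¹)) :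
    ∀ z ∈ Iio (-1 : ℝ),
      (((z * (z - 1)) ^ ((n : ℝ) / 2) : ℝ) : ℂ) *
        (deriv wp z * wm z - wp z * deriv wm z) = 2 * Complex.I * σ := by
  intro z hz
  have hz1 : z < -1 := hz
  have hz0 : z ≠ 0 := by linarith
  have hzc : (z : ℂ) ≠ 0 := by exact_mod_cast hz0
  have hn' : (n : ℂ) / 2 = ((n / 2 : ℝ) : ℂ) := by push_cast; rfl
  have h1 : ∀ kn : ℕ, (kn : ℂ) ≠ -((n : ℂ) / 2 + s) ∧ (kn : ℂ) ≠ -(1 + s) ∧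
      (kn : ℂ) ≠ -(1 + 2 * s) := by
    intro k
    refine ⟨fun h => ?_, fun h => ?_, fun h => ?_⟩ <;>
    · have := congrArg Complex.im h
      simp [hs] at this
      linarith
  have h2 : ∀ kn : ℕ, (kn : ℂ) ≠ -((n : ℂ) / 2 - s) ∧ (kn : ℂ) ≠ -(1 - s) ∧
      (kn : ℂ) ≠ -(1 - 2 * s) := by
    intro k
    refine ⟨fun h => ?_, fun h => ?_, fun h => ?_⟩ <;>
    · have := congrArg Complex.im h
      simp [hs] at this
      linarith
  have hx : ‖(z : ℂ)⁻¹‖ < 1 := by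
    rw [norm_inv, Complex.norm_real, Real.norm_eq_abs]
    apply inv_lt_one_of_one_lt₀
    rw [abs_of_neg (by linarith)]; linarith
  have key := rw_main ((n : ℂ) / 2) s h1 h2 _ _ rfl rfl _ hx
  have fd := (rw_ode _ _ _ h1 _ hx).1
  have gd := (rw_ode _ _ _ h2 _ hx).1
  set F : ℂ → ℂ := ₂F₁ ((n : ℂ) / 2 + s) (1 + s) (1 + 2 * s) with hF
  set G : ℂ → ℂ := ₂F₁ ((n : ℂ) / 2 - s) (1 - s) (1 - 2 * s) with hG
  have hinv : HasDerivAt (fun y : ℝ => (y : ℂ)⁻¹) (-((z : ℂ) ^ 2)⁻¹) z := 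
    (hasDerivAt_inv hzc).comp_ofReal
  have Fd : HasDerivAt (fun y : ℝ => F ((y : ℂ)⁻¹)) _ z := fd.comp z hinv
  have Gd : HasDerivAt (fun y : ℝ => G ((y : ℂ)⁻¹)) _ z := gd.comp z hinv
  have hlog : HasDerivAt (fun y : ℝ => ((Real.log (-y) : ℝ) : ℂ)) ((z : ℂ)⁻¹) z := by
    have := (((hasDerivAt_id z).neg.log (by simpa using hz0))).ofReal_comp
    refine this.congr_deriv ?_
    simp
  have hpos : 0 < 1 - z := by linarith
  have hsq0 : Real.sqrt (1 - z) ≠ 0 := (Real.sqrt_pos.2 hpos).ne'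
  have hsq0c : (Real.sqrt (1 - z) : ℂ) ≠ 0 := by exact_mod_cast hsq0
  have hsqrt : HasDerivAt (fun y : ℝ => ((Real.sqrt (1 - y) : ℝ) : ℂ))
      (-1 / (2 * (Real.sqrt (1 - z) : ℂ))) z := by
    have := (((hasDerivAt_id z).const_sub 1).sqrt hpos.ne').ofReal_comp
    refine this.congr_deriv ?_
    simp
  have wpd := (((hlog.const_mul (-s - (n : ℂ) / 2)).cexp.mul hsqrt).mul Fd)
  have wmd := (((hlog.const_mul (s - (n : ℂ) / 2)).cexp.mul hsqrt).mul Gd)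
  have dp := (wpd.congr_of_eventuallyEq (f₁ := wp) (Filter.Eventually.of_forall hwp)).deriv
  have dm := (wmd.congr_of_eventuallyEq (f₁ := wm) (Filter.Eventually.of_forall hwm)).deriv
  have hsq : (Real.sqrt (1 - z) : ℂ) * Real.sqrt (1 - z) = 1 - z := by
    exact_mod_cast Real.mul_self_sqrt hpos.le
  have hE : Complex.exp ((-s - (n : ℂ) / 2) * (Real.log (-z) : ℂ)) *
      Complex.exp ((s - (n : ℂ) / 2) * (Real.log (-z) : ℂ)) * 
      (((z * (z - 1)) ^ ((n : ℝ) / 2) : ℝ) : ℂ) * (1 - z) = 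
      (1 - (z : ℂ)⁻¹) ^ ((n : ℂ) / 2 + 1) * (- z) := by
    have hq : 0 < 1 - z⁻¹ := by
      have : z⁻¹ < 0 := inv_lt_zero.2 (by linarith)
      linarith
    have e1 : (1 - (z : ℂ)⁻¹) ^ ((n : ℂ) / 2 + 1) =
       (((1 - z⁻¹) ^ ((n : ℝ) / 2 + 1) : ℝ) : ℂ) := by
      rw [Complex.ofReal_cpow hq.le]; push_cast; rfl
    have e2 : Complex.exp ((-s - (n : ℂ) / 2) * (Real.log (-z) : ℂ)) *
      Complex.exp ((s - (n : ℂ) / 2) * (Real.log (-z) : ℂ)) = 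
      (((-z) ^ (-(n : ℝ)) : ℝ) : ℂ) := by
      rw [← Complex.exp_add, Real.rpow_def_of_pos (by linarith)]
      push_cast
      congr 1; ring
    rw [e1, e2]
    suffices h : (-z) ^ (-(n : ℝ)) * (z * (z - 1)) ^ ((n : ℝ) / 2) * (1 - z) =
        (1 - z⁻¹) ^ ((n : ℝ) / 2 + 1) * (-z) by exact_mod_cast h
    have e3 : z * (z - 1) = (-z) * ((-z) * (1 - z⁻¹)) := by field_simp
    have hz' : 0 < -z := by linarith
    rw [e3, Real.mul_rpow hz'.le (by positivity), Real.mul_rpow hz'.le hq.le,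
      Real.rpow_add hq, Real.rpow_one]
    have e4 : (-z) ^ (-(n : ℝ)) * ((-z) ^ ((n : ℝ) / 2) * (-z) ^ ((n : ℝ) / 2)) = 1 := by
      rw [← Real.rpow_add hz', ← Real.rpow_add hz']; simp
    have e5 : 1 - z = (1 - z⁻¹) * (-z) := by field_simp; ring
    rw [e5]
    linear_combination (1 - z⁻¹) ^ ((n : ℝ) / 2) * ((1 - z⁻¹) * -z) * e4
  rw [dp, dm, hwp, hwm]
  rw [show 2 * Complex.I * (σ : ℂ) = 2 * s by rw [hs]; ring, ← key]
  simp only [Pi.mul_apply]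
  generalize Complex.exp ((-s - (n : ℂ) / 2) * (Real.log (-z) : ℂ)) = Ep at *
  generalize Complex.exp ((s - (n : ℂ) / 2) * (Real.log (-z) : ℂ)) = Em at *
  generalize (((z * (z - 1)) ^ ((n : ℝ) / 2) : ℝ) : ℂ) = R at *
  generalize (1 - (z : ℂ)⁻¹) ^ ((n : ℂ) / 2 + 1) = Q at *
  generalize deriv F (z : ℂ)⁻¹ = F' at *
  generalize deriv G (z : ℂ)⁻¹ = G' at *
  generalize F (z : ℂ)⁻¹ = F0 at *
  generalize G (z : ℂ)⁻¹ = G0 at *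
  generalize (Real.sqrt (1 - z) : ℂ) = r at *
  have hQ : Q = -(Ep * Em * R * (r * r)) * (z : ℂ)⁻¹ := by
    rw [hsq, hE]; field_simp
  rw [hQ]
  field_simp
  ring
end

section
/- Let n ≥ 3 be an integer and s ∈ ℂ such that neither n/2 + s nor n/2 − s is a nonpositive integer. Then lim_{z → 0⁺} z^{n/2 − 1} · ₂F₁(n/2 + s, n/2 − s, n/2 + 1; 1 − z) = Γ(n/2 − 1)·Γ(n/2 + 1) / ( Γ(n/2 + s)·Γ(n/2 − s) ), where the limit is taken over real z decreasing to 0 and z^{n/2−1} is the real power. -/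
open Real Set Complex Filter Topology

lemma aux_toeplitz (l : Filter ℝ) (w : ℕ → ℝ → ℝ) (r : ℕ → ℂ) (L : ℂ)
    (hw : ∀ᶠ z in l, ∀ m, 0 ≤ w m z) (hs : ∀ᶠ z in l, HasSum (fun m => w m z) 1)
    (h0 : ∀ m, Tendsto (w m) l (𝓝 0)) (hr : Tendsto r atTop (𝓝 L)) :
    Tendsto (fun z => ∑' m, r m * (w m z : ℂ)) l (𝓝 L) := by
  rw [Metric.tendsto_nhds]
  intro ε hε
  obtain ⟨N, hN⟩ := (Metric.tendsto_atTop.1 hr) (ε / 2) (by positivity)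
  have hfin : Tendsto (fun z => ∑ m ∈ Finset.range N, ‖r m - L‖ * w m z) l (𝓝 0) := by
    have := tendsto_finsetSum (Finset.range N) (fun m _ => (h0 m).const_mul ‖r m - L‖)
    simpa using this
  filter_upwards [hw, hs, hfin.eventually_lt_const (show (0:ℝ) < ε / 2 by positivity)]
    with z hz hsz hlt
  have hD : HasSum (fun m => ε / 2 * w m z + if m ∈ Finset.range N then ‖r m - L‖ * w m z else 0)
      (ε / 2 * 1 + ∑ m ∈ Finset.range N, ‖r m - L‖ * w m z) := by
    refine (hsz.mul_left _).add ?_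
    have h := hasSum_sum_of_ne_finset_zero (L := .unconditional ℕ) (s := Finset.range N)
      (f := fun m => if m ∈ Finset.range N then ‖r m - L‖ * w m z else 0)
      (fun m hm => by simp only [if_neg hm])
    rwa [Finset.sum_congr rfl (fun m hm => if_pos hm)] at h
  have hle : ∀ m, ‖(r m - L) * (w m z : ℂ)‖ ≤
      ε / 2 * w m z + if m ∈ Finset.range N then ‖r m - L‖ * w m z else 0 := by
    intro m
    rw [norm_mul, Complex.norm_real, Real.norm_of_nonneg (hz m)]
    split_ifs with h
    · have := mul_nonneg hε.le (hz m)
      linarith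
    · have h1 := (hN m (by simpa using h)).le
      rw [dist_eq_norm] at h1
      have := mul_le_mul_of_nonneg_right h1 (hz m)
      linarith
  have hsum : Summable (fun m => (r m - L) * (w m z : ℂ)) :=
    Summable.of_norm_bounded hD.summable hle
  have hb : ‖∑' m, (r m - L) * (w m z : ℂ)‖ ≤ _ := tsum_of_norm_bounded hD hle
  have hc : HasSum (fun m => L * (w m z : ℂ)) (L * 1) :=
    (by simpa using (Complex.hasSum_ofReal.2 hsz) : HasSum (fun m => (w m z : ℂ)) 1).mul_left L
  have : ∑' m, r m * (w m z : ℂ) = (∑' m, (r m - L) * (w m z : ℂ)) + L := by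
    have h := (hsum.hasSum.add hc).tsum_eq
    rw [mul_one] at h
    rw [← h]
    exact tsum_congr fun m => by ring
  rw [this, dist_eq_norm, add_sub_cancel_right]
  linarith

lemma aux_poch (s : ℂ) (m : ℕ) :
    (ascPochhammer ℂ m).eval s = ∏ j ∈ Finset.range m, (s + j) := by
  induction m with
  | zero => simp
  | succ k ih => rw [ascPochhammer_succ_eval, ih, Finset.prod_range_succ]

lemma aux_ne (s : ℂ) (hs : ∀ m : ℕ, s ≠ -(m : ℂ)) (m : ℕ) :
    (ascPochhammer ℂ m).eval s ≠ 0 := by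
  rw [aux_poch]
  exact Finset.prod_ne_zero_iff.2 fun j _ h => hs j (eq_neg_of_add_eq_zero_left h)

lemma aux_ratio (a b c p : ℂ) (ha : ∀ m : ℕ, a ≠ -(m : ℂ)) (hb : ∀ m : ℕ, b ≠ -(m : ℂ))
    (hc : ∀ m : ℕ, c ≠ -(m : ℂ)) (hp : ∀ m : ℕ, p ≠ -(m : ℂ)) (h : a + b = p + c) :
    Tendsto (fun m => (ascPochhammer ℂ m).eval a * (ascPochhammer ℂ m).eval b /
      ((ascPochhammer ℂ m).eval c * (ascPochhammer ℂ m).eval p)) atTop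
      (𝓝 (Complex.Gamma p * Complex.Gamma c / (Complex.Gamma a * Complex.Gamma b))) := by
  rw [← tendsto_add_atTop_iff_nat 1]
  have hlim := ((Complex.GammaSeq_tendsto_Gamma p).mul (Complex.GammaSeq_tendsto_Gamma c)).div
    ((Complex.GammaSeq_tendsto_Gamma a).mul (Complex.GammaSeq_tendsto_Gamma b))
    (mul_ne_zero (Complex.Gamma_ne_zero ha) (Complex.Gamma_ne_zero hb))
  refine hlim.congr' ?_
  filter_upwards [eventually_gt_atTop 0] with m hm
  have hm0 : (m : ℂ) ≠ 0 := by exact_mod_cast hm.ne'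
  have hf : ((m.factorial : ℕ) : ℂ) ≠ 0 := by exact_mod_cast m.factorial_ne_zero
  have hA := aux_ne a ha (m + 1)
  have hB := aux_ne b hb (m + 1)
  have hC := aux_ne c hc (m + 1)
  have hP := aux_ne p hp (m + 1)
  have hpow : (m : ℂ) ^ a * (m : ℂ) ^ b = (m : ℂ) ^ p * (m : ℂ) ^ c := by
    rw [← Complex.cpow_add _ _ hm0, ← Complex.cpow_add _ _ hm0, h]
  have e1 : (m : ℂ) ^ a ≠ 0 := by simp [Complex.cpow_eq_zero_iff, hm0]
  have e2 : (m : ℂ) ^ b ≠ 0 := by simp [Complex.cpow_eq_zero_iff, hm0]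
  simp only [Pi.div_apply, Complex.GammaSeq, ← aux_poch]
  field_simp
  linear_combination (-1 : ℂ) * hpow

lemma aux_choose (p : ℝ) (m : ℕ) :
    Ring.choose (p + m - 1) m = (m.factorial : ℝ)⁻¹ * (ascPochhammer ℝ m).eval p := by
  have h := Ring.factorial_nsmul_multichoose_eq_ascPochhammer p m
  rw [Ring.multichoose_eq, Polynomial.ascPochhammer_smeval_eq_eval, nsmul_eq_mul] at h
  have hf : ((m.factorial : ℕ) : ℝ) ≠ 0 := by exact_mod_cast m.factorial_ne_zero
  rw [← h, inv_mul_cancel_left₀ hf]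

theorem connection_asymptotics (n : ℕ) (hn : 3 ≤ n) (s : ℂ)
    (ha : ∀ m : ℕ, (n : ℂ) / 2 + s ≠ -(m : ℂ))
    (hb : ∀ m : ℕ, (n : ℂ) / 2 - s ≠ -(m : ℂ)) :
    Tendsto
      (fun z : ℝ => ((z ^ ((n : ℝ) / 2 - 1) : ℝ) : ℂ) *
        ₂F₁ ((n : ℂ) / 2 + s) ((n : ℂ) / 2 - s) ((n : ℂ) / 2 + 1) (((1 - z : ℝ)) : ℂ))
      (𝓝[>] (0 : ℝ))
      (𝓝 (Complex.Gamma ((n : ℂ) / 2 - 1) * Complex.Gamma ((n : ℂ) / 2 + 1) /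
        (Complex.Gamma ((n : ℂ) / 2 + s) * Complex.Gamma ((n : ℂ) / 2 - s)))) := by
  have hn' : (3 : ℝ) ≤ n := by exact_mod_cast hn
  obtain ⟨p, hp⟩ : ∃ p : ℝ, p = (n : ℝ) / 2 - 1 := ⟨_, rfl⟩
  have hp0 : 0 < p := by rw [hp]; linarith
  have hpc : (p : ℂ) = (n : ℂ) / 2 - 1 := by rw [hp]; push_cast; ring
  have hpne : ∀ x : ℝ, 0 < x → ∀ m : ℕ, (x : ℂ) ≠ -(m : ℂ) := by
    intro x hx m h
    have h' : x = -(m : ℝ) := by exact_mod_cast h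
    have : (0 : ℝ) ≤ m := m.cast_nonneg
    linarith
  have hcne : ∀ m : ℕ, (n : ℂ) / 2 + 1 ≠ -(m : ℂ) := by
    have := hpne ((n : ℝ) / 2 + 1) (by linarith)
    push_cast at this
    exact this
  have hr := aux_ratio _ _ _ (p : ℂ) ha hb hcne (hpne p hp0) (by rw [hpc]; ring)
  rw [hpc] at hr
  have hposch : ∀ m, 0 < (ascPochhammer ℝ m).eval p := fun m => ascPochhammer_pos m p hp0
  have key := aux_toeplitz (𝓝[>] (0 : ℝ))
    (fun m z => z ^ p * (((m.factorial : ℝ)⁻¹ * (ascPochhammer ℝ m).eval p) * (1 - z) ^ m))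
    _ _ ?_ ?_ ?_ hr
  · refine key.congr fun z => ?_
    rw [ordinaryHypergeometric_eq_tsum, ← tsum_mul_left, ← hp]
    refine tsum_congr fun m => ?_
    have hP := aux_ne p (hpne p hp0) m
    have hC := aux_ne _ hcne m
    have hcast : (((ascPochhammer ℝ m).eval p : ℝ) : ℂ) = (ascPochhammer ℂ m).eval (p : ℂ) := by
      rw [← ascPochhammer_map Complex.ofRealHom m]
      exact (Polynomial.eval_map_apply (f := Complex.ofRealHom) p).symm
    rw [← hpc]
    push_cast
    rw [hcast, smul_eq_mul]
    field_simp
  · filter_upwards [Ioo_mem_nhdsGT (show (0:ℝ) < 1 by norm_num)] with z hz m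
    have := hposch m
    have h1 : 0 ≤ 1 - z := by linarith [hz.2]
    have h2 := hz.1.le
    positivity
  · filter_upwards [Ioo_mem_nhdsGT (show (0:ℝ) < 1 by norm_num)] with z hz
    have h := (Real.one_div_one_sub_rpow_hasFPowerSeriesOnBall_zero p).hasSum (y := 1 - z) (by
      rw [Metric.mem_eball, edist_zero_right, ← ofReal_norm, Real.norm_of_nonneg (by linarith [hz.2])]
      rw [ENNReal.ofReal_lt_one]
      linarith [hz.1])
    simp only [FormalMultilinearSeries.ofScalars_apply_eq, aux_choose, smul_eq_mul, zero_add,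
      sub_sub_cancel] at h
    have h2 := h.mul_left (z ^ p)
    rwa [mul_one_div_cancel (Real.rpow_pos_of_pos hz.1 p).ne'] at h2
  · intro m
    have : ContinuousAt (fun z : ℝ => z ^ p * (((m.factorial : ℝ)⁻¹ *
        (ascPochhammer ℝ m).eval p) * (1 - z) ^ m)) 0 := by
      refine ContinuousAt.mul (Real.continuousAt_rpow_const _ _ (Or.inr hp0.le)) (by fun_prop)
    have h := this.tendsto
    simp only [Real.zero_rpow hp0.ne', zero_mul] at h
    exact h.mono_left nhdsWithin_le_nhds
end

section
/- Let s ∈ ℂ be such that s is not a nonzero integer. Then lim_{z → 0⁺} ₂F₁(1 + s, 1 − s, 2; 1 − z) / log(1/z) = 1 / ( Γ(1 + s)·Γ(1 − s) ), where the limit is taken over real z decreasing to 0. -/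
open Real Set Complex Filter Topology

lemma aux_abel (e : ℕ → ℂ) (he : Tendsto e atTop (𝓝 0)) :
    Tendsto (fun z : ℝ => (∑' m : ℕ, e m * (((1 - z) ^ (m + 1) / ((m : ℝ) + 1) : ℝ) : ℂ)) /
      ((Real.log (1 / z) : ℝ) : ℂ)) (𝓝[>] (0 : ℝ)) (𝓝 0) := by
  rw [Metric.tendsto_nhds]
  intro ε hε
  obtain ⟨N, hN⟩ := Metric.tendsto_atTop.1 he (ε / 2) (by positivity)
  have hlog : Tendsto (fun z : ℝ => Real.log (1 / z)) (𝓝[>] (0 : ℝ)) atTop := by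
    simp only [one_div]
    exact Real.tendsto_log_atTop.comp tendsto_inv_nhdsGT_zero
  set C : ℝ := ∑ m ∈ Finset.range N, ‖e m‖ with hC
  have hC0 : 0 ≤ C := Finset.sum_nonneg fun _ _ => norm_nonneg _
  filter_upwards [hlog.eventually_gt_atTop (2 * C / ε), hlog.eventually_gt_atTop 0,
    Ioo_mem_nhdsGT (show (0 : ℝ) < 1 by norm_num)] with z h1 h2 hz
  obtain ⟨hz0, hz1⟩ := hz
  have hs : HasSum (fun m : ℕ => (1 - z) ^ (m + 1) / ((m : ℝ) + 1)) (Real.log (1 / z)) := by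
    have := Real.hasSum_pow_div_log_of_abs_lt_one (x := 1 - z)
      (by rw [abs_lt]; constructor <;> linarith)
    simpa using this
  have hf : HasSum (fun m : ℕ => if m < N then ‖e m‖ else 0) C := by
    have := hasSum_sum_of_ne_finset_zero (f := fun m : ℕ => if m < N then ‖e m‖ else 0)
      (s := Finset.range N) (L := SummationFilter.unconditional ℕ) (by intro b hb; simp at hb; simp [hb])
    convert this using 1
    exact Finset.sum_congr rfl fun m hm => by simp [Finset.mem_range.1 hm]
  have hb := tsum_of_norm_bounded (f := fun m : ℕ => e m * (((1 - z) ^ (m + 1) / ((m : ℝ) + 1) : ℝ) : ℂ))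
    ((hs.mul_left (ε / 2)).add hf) (by
      intro m
      have hp : 0 ≤ (1 - z) ^ (m + 1) / ((m : ℝ) + 1) := by
        have : 0 ≤ 1 - z := by linarith
        positivity
      have hp1 : (1 - z) ^ (m + 1) / ((m : ℝ) + 1) ≤ 1 := by
        rw [div_le_one (by positivity)]
        have : (1 - z) ^ (m + 1) ≤ 1 := pow_le_one₀ (by linarith) (by linarith)
        have : (0 : ℝ) ≤ m := by positivity
        linarith
      rw [norm_mul, Complex.norm_real, Real.norm_of_nonneg hp]
      split_ifs with h
      · have := mul_le_mul_of_nonneg_left hp1 (norm_nonneg (e m))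
        have : 0 ≤ ε / 2 * ((1 - z) ^ (m + 1) / ((m : ℝ) + 1)) := by positivity
        linarith
      · have := hN m (by omega)
        rw [dist_zero_right] at this
        have := mul_le_mul_of_nonneg_right this.le hp
        linarith)
  rw [dist_zero_right, norm_div, Complex.norm_real, Real.norm_of_nonneg h2.le, div_lt_iff₀ h2]
  rw [div_lt_iff₀ hε] at h1
  linarith

lemma aux_prod (a : ℂ) (n : ℕ) :
    (ascPochhammer ℂ n).eval a = ∏ j ∈ Finset.range n, (a + j) := by
  induction n with
  | zero => simp
  | succ n ih => rw [ascPochhammer_succ_eval, ih, Finset.prod_range_succ]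

lemma aux_coeff (s : ℂ) (hs : ∀ m : ℤ, m ≠ 0 → s ≠ (m : ℂ)) :
    Tendsto (fun m : ℕ => ((m : ℂ) + 1) * ((m.factorial : ℂ)⁻¹ * (ascPochhammer ℂ m).eval (1 + s) *
      (ascPochhammer ℂ m).eval (1 - s) * ((ascPochhammer ℂ m).eval 2)⁻¹)) atTop
      (𝓝 (1 / (Complex.Gamma (1 + s) * Complex.Gamma (1 - s)))) := by
  have hp1 : ∀ m : ℕ, 1 + s + m ≠ 0 := by
    intro m h
    refine hs (-1 - m) (by omega) ?_
    push_cast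
    linear_combination h
  have hp2 : ∀ m : ℕ, 1 - s + m ≠ 0 := by
    intro m h
    refine hs (1 + m) (by omega) ?_
    push_cast
    linear_combination -h
  have g1 : Complex.Gamma (1 + s) ≠ 0 := Complex.Gamma_ne_zero fun m h => hp1 m (by rw [h]; ring)
  have g2 : Complex.Gamma (1 - s) ≠ 0 := Complex.Gamma_ne_zero fun m h => hp2 m (by rw [h]; ring)
  have h2 : ∀ n : ℕ, (ascPochhammer ℂ n).eval 2 = ((n + 1).factorial : ℂ) := by
    intro n
    induction n with
    | zero => simp
    | succ n ih =>
      rw [ascPochhammer_succ_eval, ih, Nat.factorial_succ (n + 1)]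
      push_cast
      ring
  rw [← tendsto_add_atTop_iff_nat 1]
  have hr : Tendsto (fun n : ℕ => ((n : ℂ) / (n + 1)) ^ 2) atTop (𝓝 (1 ^ 2)) :=
    (tendsto_natCast_div_add_atTop (1 : ℂ)).pow 2
  have := hr.div ((Complex.GammaSeq_tendsto_Gamma (1 + s)).mul
    (Complex.GammaSeq_tendsto_Gamma (1 - s))) (mul_ne_zero g1 g2)
  rw [one_pow] at this
  refine this.congr' ?_
  filter_upwards [eventually_ne_atTop 0] with n hn
  have hn' : (n : ℂ) ≠ 0 := by exact_mod_cast hn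
  simp only [Pi.div_apply, Complex.GammaSeq]
  rw [h2, aux_prod, aux_prod]
  have q1 : ∏ j ∈ Finset.range (n + 1), (1 + s + (j : ℂ)) ≠ 0 :=
    Finset.prod_ne_zero_iff.2 fun j _ => hp1 j
  have q2 : ∏ j ∈ Finset.range (n + 1), (1 - s + (j : ℂ)) ≠ 0 :=
    Finset.prod_ne_zero_iff.2 fun j _ => hp2 j
  set P := ∏ j ∈ Finset.range (n + 1), (1 + s + (j : ℂ))
  set Q := ∏ j ∈ Finset.range (n + 1), (1 - s + (j : ℂ))
  have hpow : (n : ℂ) ^ (1 + s) * (n : ℂ) ^ (1 - s) = (n : ℂ) ^ 2 := by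
    rw [← Complex.cpow_add _ _ hn', ← Complex.cpow_natCast]
    congr 1
    push_cast
    ring
  have hden : (n : ℂ) ^ (1 + s) * n.factorial / P * ((n : ℂ) ^ (1 - s) * n.factorial / Q) =
      (n : ℂ) ^ 2 * (n.factorial : ℂ) ^ 2 / (P * Q) := by
    rw [← hpow]; field_simp
  rw [hden]
  have f0 : (n.factorial : ℂ) ≠ 0 := by exact_mod_cast n.factorial_ne_zero
  have e1 : (n : ℂ) + 1 ≠ 0 := by exact_mod_cast n.succ_ne_zero
  have e2 : (n : ℂ) + 1 + 1 ≠ 0 := by exact_mod_cast (n + 1).succ_ne_zero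
  rw [Nat.factorial_succ (n + 1), Nat.factorial_succ n]
  push_cast
  field_simp

theorem connection_asymptotics_log (s : ℂ) (hs : ∀ m : ℤ, m ≠ 0 → s ≠ (m : ℂ)) :
    Tendsto
      (fun z : ℝ =>
        ₂F₁ (1 + s) (1 - s) (2 : ℂ) (((1 - z : ℝ)) : ℂ) / ((Real.log (1 / z) : ℝ) : ℂ))
      (𝓝[>] (0 : ℝ))
      (𝓝 (1 / (Complex.Gamma (1 + s) * Complex.Gamma (1 - s)))) := by
  have hc := aux_coeff s hs
  set L := 1 / (Complex.Gamma (1 + s) * Complex.Gamma (1 - s)) with hL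
  set c : ℕ → ℂ := fun m => (m.factorial : ℂ)⁻¹ * (ascPochhammer ℂ m).eval (1 + s) *
      (ascPochhammer ℂ m).eval (1 - s) * ((ascPochhammer ℂ m).eval 2)⁻¹ with hcdef
  have he : Tendsto (fun m : ℕ => ((m : ℂ) + 1) * c m - L) atTop (𝓝 0) := by
    simpa using hc.sub_const L
  have hbd : ∃ B : ℝ, ∀ m : ℕ, ‖((m : ℂ) + 1) * c m - L‖ ≤ B := by
    obtain ⟨B, hB⟩ := he.norm.bddAbove_range
    exact ⟨B, fun m => hB ⟨m, rfl⟩⟩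
  obtain ⟨B, hB⟩ := hbd
  have hinv : Tendsto (fun z : ℝ => (((1 - z : ℝ) : ℂ))⁻¹) (𝓝[>] (0 : ℝ)) (𝓝 1) := by
    have : ContinuousAt (fun z : ℝ => (((1 - z : ℝ) : ℂ))⁻¹) 0 := by
      refine ContinuousAt.inv₀ (by fun_prop) (by simp)
    have := this.tendsto.mono_left (nhdsWithin_le_nhds (s := Ioi 0))
    simpa using this
  have hlog : Tendsto (fun z : ℝ => Real.log (1 / z)) (𝓝[>] (0 : ℝ)) atTop := by
    simp only [one_div]
    exact Real.tendsto_log_atTop.comp tendsto_inv_nhdsGT_zero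
  have hmain := hinv.mul ((aux_abel _ he).add_const L)
  rw [one_mul, zero_add] at hmain
  refine hmain.congr' ?_
  filter_upwards [hlog.eventually_gt_atTop 0,
    Ioo_mem_nhdsGT (show (0 : ℝ) < 1 by norm_num)] with z h2 hz
  obtain ⟨hz0, hz1⟩ := hz
  have hsum : HasSum (fun m : ℕ => (1 - z) ^ (m + 1) / ((m : ℝ) + 1)) (Real.log (1 / z)) := by
    have := Real.hasSum_pow_div_log_of_abs_lt_one (x := 1 - z)
      (by rw [abs_lt]; constructor <;> linarith)
    simpa using this
  have hS : Summable fun m : ℕ => (((m : ℂ) + 1) * c m - L) *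
      (((1 - z) ^ (m + 1) / ((m : ℝ) + 1) : ℝ) : ℂ) := by
    refine Summable.of_norm_bounded (hsum.summable.mul_left B) fun m => ?_
    have hp : 0 ≤ (1 - z) ^ (m + 1) / ((m : ℝ) + 1) := by
      have : 0 ≤ 1 - z := by linarith
      positivity
    rw [norm_mul, Complex.norm_real, Real.norm_of_nonneg hp]
    exact mul_le_mul_of_nonneg_right (hB m) hp
  have hsC := (Complex.hasSum_ofReal.2 hsum).mul_left L
  have htot := hS.hasSum.add hsC
  have hx : ((1 - z : ℝ) : ℂ) ≠ 0 := by
    rw [Complex.ofReal_ne_zero]; linarith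
  have hF : ₂F₁ (1 + s) (1 - s) (2 : ℂ) (((1 - z : ℝ)) : ℂ) =
      ((1 - z : ℝ) : ℂ)⁻¹ * ((∑' m : ℕ, (((m : ℂ) + 1) * c m - L) *
      (((1 - z) ^ (m + 1) / ((m : ℝ) + 1) : ℝ) : ℂ)) + L * ((Real.log (1 / z) : ℝ) : ℂ)) := by
    rw [ordinaryHypergeometric_eq_tsum]
    refine ((htot.mul_left ((1 - z : ℝ) : ℂ)⁻¹).congr_fun ?_).tsum_eq
    intro m
    have e1 : (m : ℂ) + 1 ≠ 0 := by exact_mod_cast m.succ_ne_zero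
    simp only [smul_eq_mul, hcdef]
    rw [Complex.ofReal_div, Complex.ofReal_pow, Complex.ofReal_add, Complex.ofReal_natCast,
      Complex.ofReal_one]
    generalize ((1 - z : ℝ) : ℂ) = x at *
    field_simp
    ring
  rw [hF]
  have hl : ((Real.log (1 / z) : ℝ) : ℂ) ≠ 0 := by
    rw [Complex.ofReal_ne_zero]; exact h2.ne'
  generalize ((Real.log (1 / z) : ℝ) : ℂ) = l at *
  field_simp
end

section
/- Let n ≥ 2 be an integer and s ∈ ℂ. The function g(z) := √(1−z) · ₂F₁(n/2 + s, n/2 − s, n/2 + 1; 1 − z) satisfies the radial hypergeometric equation E(n, s²) on the interval (0, 1). -/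
open Real Set Complex

theorem hgAux_radius (a b c : ℂ) (hc : ∀ k : ℕ, (k : ℂ) ≠ -c) :
    1 ≤ (ordinaryHypergeometricSeries ℂ a b c).radius := by
  by_cases ha : ∃ k : ℕ, (k : ℂ) = -a
  · obtain ⟨k, hk⟩ := ha
    have : a = -(k : ℂ) := by rw [hk]; ring
    rw [this, ordinaryHypergeometric_radius_top_of_neg_nat₁]; exact le_top
  by_cases hb : ∃ k : ℕ, (k : ℂ) = -b
  · obtain ⟨k, hk⟩ := hb
    have : b = -(k : ℂ) := by rw [hk]; ring
    rw [this, ordinaryHypergeometric_radius_top_of_neg_nat₂]; exact le_top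
  push Not at ha hb
  rw [ordinaryHypergeometricSeries_radius_eq_one ℂ a b c (fun k => ⟨ha k, hb k, hc k⟩)]

theorem hgAux_shift (v w : ℕ → ℂ) (x S : ℂ) (h : HasSum (fun n => v n * x ^ n) S)
    (h0 : w 0 = 0) (h1 : ∀ n, w (n + 1) = v n) : HasSum (fun n => w n * x ^ n) (x * S) := by
  rw [← hasSum_nat_add_iff' 1]
  simp only [Finset.sum_range_one, h0, zero_mul, sub_zero, h1]
  have e : (fun n => v n * x ^ (n + 1)) = fun n => x * (v n * x ^ n) := by
    funext n; ring
  rw [e]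
  exact h.mul_left x

theorem hgAux_taylor (f : ℂ → ℂ) (hf : DifferentiableOn ℂ f (Metric.ball 0 1)) (x : ℂ)
    (hx : x ∈ Metric.ball (0 : ℂ) 1) :
    HasSum (fun n : ℕ => ((n.factorial : ℂ)⁻¹ * iteratedDeriv n f 0) * x ^ n) (f x) := by
  have := Complex.hasSum_taylorSeries_on_ball (r := 1) hf hx
  have e : (fun n : ℕ => ((n.factorial : ℂ)⁻¹ * iteratedDeriv n f 0) * x ^ n) =
      fun n : ℕ => (n.factorial : ℂ)⁻¹ • (x - 0) ^ n • iteratedDeriv n f 0 := by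
    funext n; simp only [smul_eq_mul, sub_zero]; ring
  rw [e]
  exact this

theorem hgAux_analytic (a b c : ℂ) (hc : ∀ k : ℕ, (k : ℂ) ≠ -c) :
    HasFPowerSeriesOnBall (₂F₁ a b c : ℂ → ℂ) (ordinaryHypergeometricSeries ℂ a b c) 0 1 := by
  have hr := hgAux_radius a b c hc
  exact ((ordinaryHypergeometricSeries ℂ a b c).hasFPowerSeriesOnBall
    (lt_of_lt_of_le one_pos hr)).mono one_pos hr

theorem hgAux_diff (a b c : ℂ) (hc : ∀ k : ℕ, (k : ℂ) ≠ -c) :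
    DifferentiableOn ℂ (₂F₁ a b c : ℂ → ℂ) (Metric.ball 0 1) := by
  have := (hgAux_analytic a b c hc).differentiableOn
  rw [← ENNReal.ofReal_one, Metric.eball_ofReal] at this
  exact this

theorem hgAux_coeff (a b c : ℂ) (hc : ∀ k : ℕ, (k : ℂ) ≠ -c) (n : ℕ) :
    iteratedDeriv n (₂F₁ a b c : ℂ → ℂ) 0 =
      n.factorial * ordinaryHypergeometricCoefficient a b c n := by
  have := (hgAux_analytic a b c hc).factorial_smul 1 n
  rw [iteratedDeriv, ← this, ordinaryHypergeometricSeries_apply_eq]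
  simp

theorem hgAux_rec (a b c : ℂ) (hc : ∀ k : ℕ, (k : ℂ) ≠ -c) (n : ℕ) :
    ((n : ℂ) + 1) * (c + n) * ordinaryHypergeometricCoefficient a b c (n + 1) =
      (a + n) * (b + n) * ordinaryHypergeometricCoefficient a b c n := by
  have h1 : (n : ℂ) + 1 ≠ 0 := by exact_mod_cast Nat.succ_ne_zero n
  have h2 : c + n ≠ 0 := fun h => hc n (by linear_combination h)
  simp only [ordinaryHypergeometricCoefficient, ascPochhammer_succ_eval, Nat.factorial_succ,
    Nat.cast_mul, Nat.cast_succ, mul_inv]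
  generalize ((n.factorial : ℂ))⁻¹ = p
  generalize ((ascPochhammer ℂ n).eval c)⁻¹ = q
  field_simp

theorem hgAux_ode (a b c : ℂ) (hc : ∀ k : ℕ, (k : ℂ) ≠ -c) (x : ℂ)
    (hx : x ∈ Metric.ball (0 : ℂ) 1) (F : ℂ → ℂ) (hF : F = ₂F₁ a b c) :
    x * (1 - x) * deriv (deriv F) x + (c - (a + b + 1) * x) * deriv F x - a * b * F x = 0 := by
  have d0 : DifferentiableOn ℂ F (Metric.ball 0 1) := hF ▸ hgAux_diff a b c hc
  have d1 := d0.deriv Metric.isOpen_ball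
  have d2 := d1.deriv Metric.isOpen_ball
  obtain ⟨u, hu⟩ : ∃ u, u = ordinaryHypergeometricCoefficient a b c := ⟨_, rfl⟩
  have s0 : HasSum (fun n : ℕ => u n * x ^ n) (F x) := by
    convert hgAux_taylor F d0 x hx using 3 with n
    rw [hF, hgAux_coeff a b c hc, ← hu]
    have : (n.factorial : ℂ) ≠ 0 := by exact_mod_cast n.factorial_ne_zero
    field_simp
  have s1 : HasSum (fun n : ℕ => (((n : ℂ) + 1) * u (n + 1)) * x ^ n) (deriv F x) := by
    convert hgAux_taylor (deriv F) d1 x hx using 3 with n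
    rw [← iteratedDeriv_succ', hF, hgAux_coeff a b c hc, ← hu, Nat.factorial_succ]
    have : (n.factorial : ℂ) ≠ 0 := by exact_mod_cast n.factorial_ne_zero
    push_cast
    field_simp
  have s2 : HasSum (fun n : ℕ => (((n : ℂ) + 1) * (n + 2) * u (n + 2)) * x ^ n)
      (deriv (deriv F) x) := by
    convert hgAux_taylor (deriv (deriv F)) d2 x hx using 3 with n
    rw [← iteratedDeriv_succ', ← iteratedDeriv_succ', hF, hgAux_coeff a b c hc, ← hu,
      Nat.factorial_succ, Nat.factorial_succ]
    have : (n.factorial : ℂ) ≠ 0 := by exact_mod_cast n.factorial_ne_zero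
    push_cast
    field_simp
    ring
  have t1 := hgAux_shift _ (fun n => (n : ℂ) * u n) x _ s1 (by simp) (by intro n; push_cast; ring)
  have t2 := hgAux_shift _ (fun n => (n : ℂ) * (n + 1) * u (n + 1)) x _ s2 (by simp)
    (by intro n; push_cast; ring)
  have t3 := hgAux_shift _ (fun n => (n : ℂ) * (n - 1) * u n) x _ t2 (by simp)
    (by intro n; push_cast; ring)
  have tot := (((t2.sub t3).add (s1.mul_left c)).sub (t1.mul_left (a + b + 1))).sub
    (s0.mul_left (a * b))
  have z : HasSum (fun _ : ℕ => (0 : ℂ)) 0 := hasSum_zero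
  rw [show (fun _ : ℕ => (0 : ℂ)) = _ from ?_] at z
  · have := tot.unique z
    linear_combination this
  funext n
  have := hgAux_rec a b c hc n
  rw [← hu] at this
  linear_combination -x ^ n * this

theorem green_solution_positive_curvature (n : ℕ) (hn : 2 ≤ n) (s : ℂ)
    (g : ℝ → ℂ)
    (hg : ∀ z : ℝ, g z = (Real.sqrt (1 - z) : ℂ) *
      ₂F₁ ((n : ℂ) / 2 + s) ((n : ℂ) / 2 - s) ((n : ℂ) / 2 + 1) (((1 - z : ℝ)) : ℂ)) :
    SatisfiesRadialHGC n (s ^ 2) g (Ioo 0 1) := by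
  have hc : ∀ k : ℕ, (k : ℂ) ≠ -((n : ℂ) / 2 + 1) := by
    intro k h
    have h2 : ((2 * k + n + 2 : ℕ) : ℂ) = 0 := by push_cast; linear_combination 2 * h
    have := Nat.cast_eq_zero.1 h2
    omega
  obtain ⟨F, hF⟩ : ∃ F : ℂ → ℂ, F = ₂F₁ ((n : ℂ) / 2 + s) ((n : ℂ) / 2 - s) ((n : ℂ) / 2 + 1) :=
    ⟨_, rfl⟩
  have d0 : DifferentiableOn ℂ F (Metric.ball 0 1) := hF ▸ hgAux_diff _ _ _ hc
  have d1 := d0.deriv Metric.isOpen_ball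
  have hmem : ∀ z ∈ Ioo (0 : ℝ) 1, ((1 - z : ℝ) : ℂ) ∈ Metric.ball (0 : ℂ) 1 := by
    intro z hz
    rw [mem_ball_zero_iff, Complex.norm_real, Real.norm_eq_abs, abs_lt]
    constructor <;> linarith [hz.1, hz.2]
  have hcomp : ∀ G : ℂ → ℂ, DifferentiableOn ℂ G (Metric.ball 0 1) → ∀ z ∈ Ioo (0 : ℝ) 1,
      HasDerivAt (fun z : ℝ => G ((1 - z : ℝ) : ℂ)) (-deriv G ((1 - z : ℝ) : ℂ)) z := by
    intro G hG z hz
    have h1 := (hG.differentiableAt (Metric.isOpen_ball.mem_nhds (hmem z hz))).hasDerivAt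
    have h2 : HasDerivAt (fun z : ℝ => ((1 - z : ℝ) : ℂ)) ((-1 : ℝ) : ℂ) z :=
      ((hasDerivAt_id z).const_sub 1).ofReal_comp
    have := HasDerivAt.scomp (h := fun z : ℝ => ((1 - z : ℝ) : ℂ)) z h1 h2
    simpa [Function.comp_def] using this
  have hsq : ∀ z ∈ Ioo (0 : ℝ) 1, HasDerivAt (fun z : ℝ => (Real.sqrt (1 - z) : ℂ))
      (-(1 / (2 * (Real.sqrt (1 - z) : ℂ)))) z := by
    intro z hz
    have h := (((hasDerivAt_id z).const_sub 1).sqrt (by simp; linarith [hz.2])).ofReal_comp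
    have e : (-(1 / (2 * (Real.sqrt (1 - z) : ℂ)))) =
        ((-1 / (2 * Real.sqrt (1 - id z)) : ℝ) : ℂ) := by
      simp only [id]; push_cast; ring
    rw [e]
    exact h
  have hne : ∀ z ∈ Ioo (0 : ℝ) 1, (Real.sqrt (1 - z) : ℂ) ≠ 0 := by
    intro z hz
    exact_mod_cast (Real.sqrt_pos.2 (by linarith [hz.2])).ne'
  have hg' : g = fun z : ℝ => (Real.sqrt (1 - z) : ℂ) * F ((1 - z : ℝ) : ℂ) := by
    funext z; rw [hg, hF]
  have D1 : ∀ z ∈ Ioo (0 : ℝ) 1, deriv g z =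
      -(1 / (2 * (Real.sqrt (1 - z) : ℂ))) * F ((1 - z : ℝ) : ℂ)
        + (Real.sqrt (1 - z) : ℂ) * (-deriv F ((1 - z : ℝ) : ℂ)) := by
    intro z hz
    rw [hg']
    exact ((hsq z hz).mul (hcomp F d0 z hz)).deriv
  intro z hz
  have D2 : deriv (deriv g) z =
      -(1 / (4 * (Real.sqrt (1 - z) : ℂ) ^ 3)) * F ((1 - z : ℝ) : ℂ)
        + (1 / (Real.sqrt (1 - z) : ℂ)) * deriv F ((1 - z : ℝ) : ℂ)
        + (Real.sqrt (1 - z) : ℂ) * deriv (deriv F) ((1 - z : ℝ) : ℂ) := by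
    have e : deriv g =ᶠ[nhds z] (fun z : ℝ => -(1 / (2 * (Real.sqrt (1 - z) : ℂ))) *
        F ((1 - z : ℝ) : ℂ) + (Real.sqrt (1 - z) : ℂ) * (-deriv F ((1 - z : ℝ) : ℂ))) :=
      Filter.eventually_of_mem (isOpen_Ioo.mem_nhds hz) D1
    rw [e.deriv_eq]
    have hs := hsq z hz
    have hi := (((hs.const_mul 2).fun_inv (mul_ne_zero two_ne_zero (hne z hz))).fun_neg.fun_mul
      (hcomp F d0 z hz)).fun_add (hs.fun_mul (hcomp _ d1 z hz).fun_neg)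
    simp only [← one_div] at hi
    rw [hi.deriv]
    have hr0 := hne z hz
    field_simp
    ring
  have ode := hgAux_ode _ _ _ hc _ (hmem z hz) F hF
  have hr : (z : ℂ) = 1 - (Real.sqrt (1 - z) : ℂ) ^ 2 := by
    rw [← Complex.ofReal_pow, Real.sq_sqrt (by linarith [hz.2])]; push_cast; ring
  have hx : ((1 - z : ℝ) : ℂ) = (Real.sqrt (1 - z) : ℂ) ^ 2 := by
    push_cast; linear_combination -hr
  have hr0 := hne z hz
  rw [D2, D1 z hz, show g z = _ from congrFun hg' z]
  clear D2 D1
  rw [hx] at ode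
  simp only [hx, Pi.neg_apply, Pi.inv_apply]
  rw [hr]
  generalize hR : (Real.sqrt (1 - z) : ℂ) = r at *
  generalize deriv (deriv F) (r ^ 2) = F2 at *
  generalize deriv F (r ^ 2) = F1 at *
  generalize F (r ^ 2) = F0 at *
  have e1 : (1 : ℂ) - (1 - r ^ 2) = r ^ 2 := by ring
  rw [e1]
  have e2 : r * (1 / r ^ 2) = 1 / r := by field_simp
  have key : ∀ A : ℂ, A = 0 → r * A = 0 := by intro A hA; rw [hA, mul_zero]
  rw [← key _ ode]
  field_simp
  ring
end

section
/- Let n ≥ 2 be an integer and s ∈ ℂ such that 1 + 2s is not a nonpositive integer. The function h(z) := (1−z)^{1/2 − n/2 − s} · ₂F₁(n/2 + s, s, 1 + 2s; 1/(1−z)), where (1−z)^{w} := exp(w·log(1−z)) with the real logarithm, satisfies the radial hypergeometric equation E(n, s²) on the interval (−∞, 0). -/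
open Real Set Complex

def PSumm (c : ℕ → ℂ) : Prop := ∀ r : ℝ, 0 ≤ r → r < 1 → Summable (fun n => ‖c n‖ * r ^ n)

def dco (c : ℕ → ℂ) : ℕ → ℂ := fun n => ((n : ℂ) + 1) * c (n + 1)

lemma bern_aux (r ρ : ℝ) (hr : 0 ≤ r) (h : r ≤ ρ) (n : ℕ) :
    ((n : ℝ) + 1) * r ^ n * (ρ - r) + r ^ (n + 1) ≤ ρ ^ (n + 1) := by
  induction n with
  | zero => simp
  | succ k ih =>
    have h1 := mul_le_mul_of_nonneg_left ih hr
    have h2 : r ^ (k + 1) * (ρ - r) ≤ ρ ^ (k + 1) * (ρ - r) :=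
      mul_le_mul_of_nonneg_right (pow_le_pow_left₀ hr h _) (by linarith)
    push_cast
    rw [pow_succ] at *
    ring_nf at *
    linarith

lemma PSumm.dco {c : ℕ → ℂ} (hc : PSumm c) : PSumm (dco c) := by
  intro r hr0 hr1
  have hρ : r < (1 + r) / 2 := by linarith
  have hs := (summable_nat_add_iff 1).2 (hc ((1 + r) / 2) (by linarith) (by linarith))
  refine Summable.of_nonneg_of_le (fun n => by positivity) (fun n => ?_)
    (hs.mul_left (((1 + r) / 2 - r)⁻¹))
  have hb := bern_aux r _ hr0 hρ.le n
  have hp : 0 ≤ r ^ (n + 1) := by positivity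
  have hd : 0 < (1 + r) / 2 - r := by linarith
  have : ((n : ℝ) + 1) * r ^ n ≤ ((1 + r) / 2 - r)⁻¹ * ((1 + r) / 2) ^ (n + 1) := by
    rw [inv_mul_eq_div, le_div_iff₀ hd]
    linarith
  have hn : ‖(n : ℂ) + 1‖ = (n : ℝ) + 1 := by
    have : ((n : ℂ) + 1) = ((n + 1 : ℕ) : ℂ) := by push_cast; rfl
    rw [this, Complex.norm_natCast]; push_cast; rfl
  unfold _root_.dco
  rw [norm_mul, hn]
  have := mul_le_mul_of_nonneg_left this (norm_nonneg (c (n + 1)))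
  linarith

lemma PSumm.hasSum {c : ℕ → ℂ} (hc : PSumm c) {x : ℂ} (hx : ‖x‖ < 1) :
    HasSum (fun n => c n * x ^ n) (∑' n, c n * x ^ n) := by
  apply Summable.hasSum
  apply Summable.of_norm
  simpa [norm_mul, norm_pow] using hc ‖x‖ (norm_nonneg _) hx

lemma PSumm.hasDerivAt {c : ℕ → ℂ} (hc : PSumm c) {x : ℂ} (hx : ‖x‖ < 1) :
    HasDerivAt (fun y : ℂ => ∑' n, c n * y ^ n) (∑' n, _root_.dco c n * x ^ n) x := by
  obtain ⟨r, hr, hr1⟩ := exists_between hx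
  have hr0 : 0 ≤ r := (norm_nonneg x).trans hr.le
  have hS : Summable (fun n : ℕ => ‖(n : ℂ) * c n‖ * r ^ (n - 1)) := by
    rw [← summable_nat_add_iff 1]
    simpa [_root_.dco] using hc.dco r hr0 hr1
  have key := hasDerivAt_tsum_of_isPreconnected (𝕜 := ℂ) (t := Metric.ball (0 : ℂ) r) (y₀ := 0)
    (g := fun n y => c n * y ^ n) (g' := fun n y => c n * ((n : ℂ) * y ^ (n - 1)))
    hS Metric.isOpen_ball (convex_ball _ _).isPreconnected
    (fun n y _ => (hasDerivAt_pow n y).const_mul _)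
    (fun n y hy => by
      rw [← mul_assoc, mul_comm (c n), norm_mul, norm_pow]
      gcongr
      simpa using (mem_ball_zero_iff.1 hy).le)
    (by simpa using (norm_nonneg x).trans_lt hr)
    (hc.hasSum (x := 0) (by simp)).summable (y := x) (by simpa using hr)
  have hs2 : Summable (fun n : ℕ => c n * ((n : ℂ) * x ^ (n - 1))) := by
    apply Summable.of_norm_bounded hS
    intro n
    rw [← mul_assoc, mul_comm (c n), norm_mul, norm_pow]
    gcongr
  have e : (∑' n, _root_.dco c n * x ^ n) = ∑' n : ℕ, c n * ((n : ℂ) * x ^ (n - 1)) := by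
    rw [hs2.tsum_eq_zero_add]
    simp only [Nat.cast_zero, zero_mul, mul_zero, zero_add]
    apply tsum_congr
    intro n
    simp [_root_.dco]
    ring
  rw [e]
  exact key

lemma shift_hasSum {d : ℕ → ℂ} {x S : ℂ} (h0 : d 0 = 0)
    (h : HasSum (fun n => d (n + 1) * x ^ n) S) : HasSum (fun n => d n * x ^ n) (x * S) := by
  have h1 := h.mul_left x
  rw [← hasSum_nat_add_iff' 1]
  have e1 : (fun n => d (n + 1) * x ^ (n + 1)) = fun n => x * (d (n + 1) * x ^ n) := by
    ext n; ring
  have e2 : x * S - ∑ i ∈ Finset.range 1, d i * x ^ i = x * S := by simp [h0]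
  rw [e1, e2]
  exact h1

lemma PSumm_hyp (a b c : ℂ) (hc : ∀ m : ℕ, c ≠ -(m : ℂ)) :
    PSumm (ordinaryHypergeometricCoefficient a b c) := by
  have hrad : 1 ≤ (ordinaryHypergeometricSeries ℂ a b c).radius := by
    by_cases ha : ∃ k : ℕ, a = -(k : ℂ)
    · obtain ⟨k, rfl⟩ := ha
      rw [ordinaryHypergeometric_radius_top_of_neg_nat₁]; exact le_top
    by_cases hb : ∃ k : ℕ, b = -(k : ℂ)
    · obtain ⟨k, rfl⟩ := hb
      rw [ordinaryHypergeometric_radius_top_of_neg_nat₂]; exact le_top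
    push Not at ha hb
    rw [ordinaryHypergeometricSeries_radius_eq_one]
    intro k
    refine ⟨fun h => ha k ?_, fun h => hb k ?_, fun h => hc k ?_⟩ <;> rw [h, neg_neg]
  intro r hr0 hr1
  lift r to NNReal using hr0
  have := (ordinaryHypergeometricSeries ℂ a b c).summable_norm_mul_pow (r := r)
    (lt_of_lt_of_le (by exact_mod_cast hr1) hrad)
  simpa [ordinaryHypergeometricSeries, FormalMultilinearSeries.ofScalars_norm] using this

lemma hyp_rec (a b c : ℂ) (hc : ∀ m : ℕ, c ≠ -(m : ℂ)) (n : ℕ) :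
    (c + n) * (((n : ℂ) + 1) * ordinaryHypergeometricCoefficient a b c (n + 1)) =
      (a + n) * (b + n) * ordinaryHypergeometricCoefficient a b c n := by
  have h1 : c + n ≠ 0 := fun h => hc n (eq_neg_of_add_eq_zero_left h)
  have h2 : (n : ℂ) + 1 ≠ 0 := by exact_mod_cast Nat.succ_ne_zero n
  simp only [ordinaryHypergeometricCoefficient, ascPochhammer_succ_eval, Nat.factorial_succ,
    Nat.cast_mul, Nat.cast_add, Nat.cast_one, mul_inv]
  field_simp

lemma hyp_ode (a b c : ℂ) (hc : ∀ m : ℕ, c ≠ -(m : ℂ)) :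
    ∃ F' F'' : ℂ → ℂ, ∀ x : ℂ, ‖x‖ < 1 → HasDerivAt (₂F₁ a b c : ℂ → ℂ) (F' x) x ∧
      HasDerivAt F' (F'' x) x ∧
      x * (1 - x) * F'' x + (c - (a + b + 1) * x) * F' x - a * b * ₂F₁ a b c x = 0 := by
  set C := ordinaryHypergeometricCoefficient a b c with hC
  have hP : PSumm C := PSumm_hyp a b c hc
  have hF : (₂F₁ a b c : ℂ → ℂ) = fun x => ∑' n, C n * x ^ n := by
    rw [ordinaryHypergeometric_eq_tsum]
    simp [hC, ordinaryHypergeometricCoefficient]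
  refine ⟨fun x => ∑' n, dco C n * x ^ n, fun x => ∑' n, dco (dco C) n * x ^ n, fun x hx => ?_⟩
  rw [hF]
  refine ⟨hP.hasDerivAt hx, hP.dco.hasDerivAt hx, ?_⟩
  have s0 := hP.hasSum hx
  have s1 := hP.dco.hasSum hx
  have s2 := hP.dco.dco.hasSum hx
  have t1 : HasSum (fun n : ℕ => ((n : ℂ) * C n) * x ^ n) (x * ∑' n, dco C n * x ^ n) := by
    apply shift_hasSum (d := fun n : ℕ => (n : ℂ) * C n) (by simp)
    simpa [dco] using s1
  have t2 : HasSum (fun n : ℕ => ((n : ℂ) * dco C n) * x ^ n)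
      (x * ∑' n, dco (dco C) n * x ^ n) := by
    apply shift_hasSum (d := fun n : ℕ => (n : ℂ) * dco C n) (by simp)
    convert s2 using 3
    simp [dco]
  have t3 : HasSum (fun n : ℕ => ((n : ℂ) * (n - 1) * C n) * x ^ n)
      (x * (x * ∑' n, dco (dco C) n * x ^ n)) := by
    apply shift_hasSum (d := fun n : ℕ => (n : ℂ) * (n - 1) * C n) (by simp)
    convert t2 using 3
    simp [dco]; ring
  have L := t2.add (s1.mul_left c)
  have R := (t3.add (t1.mul_left (a + b + 1))).add (s0.mul_left (a * b))
  have e : (fun n : ℕ => ((n : ℂ) * dco C n) * x ^ n + c * (dco C n * x ^ n)) =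
      fun n : ℕ => ((n : ℂ) * (n - 1) * C n) * x ^ n + (a + b + 1) * (((n : ℂ) * C n) * x ^ n)
        + a * b * (C n * x ^ n) := by
    ext n
    have := hyp_rec a b c hc n
    rw [← hC] at this
    simp only [dco]
    linear_combination x ^ n * this
  rw [e] at L
  have := L.unique R
  linear_combination this

theorem green_solution_negative_curvature (n : ℕ) (hn : 2 ≤ n) (s : ℂ)
    (hs : ∀ m : ℕ, (1 : ℂ) + 2 * s ≠ -(m : ℂ))
    (h : ℝ → ℂ)
    (hh : ∀ z : ℝ, h z = Complex.exp (((1 : ℂ) / 2 - (n : ℂ) / 2 - s) *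
        (Real.log (1 - z) : ℂ)) *
      ₂F₁ ((n : ℂ) / 2 + s) s (1 + 2 * s) (((1 / (1 - z) : ℝ)) : ℂ)) :
    SatisfiesRadialHGC n (s ^ 2) h (Iio 0) := by
  obtain ⟨F', F'', hode⟩ := hyp_ode ((n : ℂ) / 2 + s) s (1 + 2 * s) hs
  set F : ℂ → ℂ := ₂F₁ ((n : ℂ) / 2 + s) s (1 + 2 * s) with hFdef
  set w : ℂ := (1 : ℂ) / 2 - (n : ℂ) / 2 - s with hw
  set t : ℝ → ℂ := fun z => (((1 / (1 - z) : ℝ)) : ℂ) with ht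
  set E : ℝ → ℂ := fun z => Complex.exp (w * (Real.log (1 - z) : ℂ)) with hE
  have hheq : h = fun z => E z * F (t z) := funext hh
  have htn : ∀ z : ℝ, z < 0 → ‖t z‖ < 1 := by
    intro z hz
    have : (0 : ℝ) < 1 - z := by linarith
    simp only [ht, Complex.norm_real, Real.norm_eq_abs]
    rw [abs_of_pos (by positivity), div_lt_one this]
    linarith
  have hsub : ∀ z : ℝ, HasDerivAt (fun z : ℝ => 1 - z) (-1) z := fun z => by
    simpa using (hasDerivAt_id z).const_sub 1
  have dt : ∀ z : ℝ, z < 0 → HasDerivAt t (t z ^ 2) z := by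
    intro z hz
    have hne : (1 : ℝ) - z ≠ 0 := by linarith
    have h1 : HasDerivAt (fun z : ℝ => 1 / (1 - z)) ((1 / (1 - z)) ^ 2) z := by
      have e1 : (fun z : ℝ => 1 / (1 - z)) = (fun z : ℝ => 1 - z)⁻¹ := by ext y; simp
      have e2 : (1 / (1 - z)) ^ 2 = - -1 / (1 - z) ^ 2 := by field_simp
      rw [e1, e2]
      exact (hsub z).inv hne
    convert h1.ofReal_comp using 1
    simp [ht]
  have dE : ∀ z : ℝ, z < 0 → HasDerivAt E (-w * t z * E z) z := by
    intro z hz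
    have hne : (1 : ℝ) - z ≠ 0 := by linarith
    have h1 := (((hsub z).log hne).ofReal_comp.const_mul w).cexp
    convert h1 using 1
    simp only [ht, hE]
    push_cast
    ring
  have dF : ∀ z : ℝ, z < 0 → HasDerivAt (fun z => F (t z)) (F' (t z) * t z ^ 2) z :=
    fun z hz => (hode (t z) (htn z hz)).1.comp z (dt z hz)
  have dF' : ∀ z : ℝ, z < 0 → HasDerivAt (fun z => F' (t z)) (F'' (t z) * t z ^ 2) z :=
    fun z hz => (hode (t z) (htn z hz)).2.1.comp z (dt z hz)
  have d1 : ∀ z : ℝ, z < 0 → deriv h z =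
      E z * (-w * (t z * F (t z)) + t z ^ 2 * F' (t z)) := by
    intro z hz
    rw [hheq]
    refine (((dE z hz).mul (dF z hz)).deriv).trans ?_
    ring
  intro z hz
  have hz : z < 0 := hz
  have d2 : deriv (deriv h) z = E z * ((-w * t z) * (-w * (t z * F (t z)) + t z ^ 2 * F' (t z))
      + (-w * (t z ^ 2 * F (t z) + t z ^ 3 * F' (t z)) + 2 * t z ^ 3 * F' (t z)
        + t z ^ 4 * F'' (t z))) := by
    have hev : deriv h =ᶠ[nhds z] fun z => E z * (-w * (t z * F (t z)) + t z ^ 2 * F' (t z)) := by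
      filter_upwards [Iio_mem_nhds hz] with y hy using d1 y hy
    rw [hev.deriv_eq]
    refine (((dE z hz).mul ((((dt z hz).mul (dF z hz)).const_mul (-w)).add
      (((dt z hz).pow 2).mul (dF' z hz)))).deriv).trans ?_
    simp only [Pi.mul_apply, Pi.add_apply, Pi.pow_apply]
    push_cast
    ring
  have ode := (hode (t z) (htn z hz)).2.2
  rw [d2, d1 z hz]
  have hhz : h z = E z * F (t z) := by rw [hheq]
  rw [hhz]
  have hu : (1 : ℂ) - z ≠ 0 := by
    have : (1 : ℝ) - z ≠ 0 := by linarith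
    exact_mod_cast this
  have htz : t z = 1 / (1 - (z : ℂ)) := by simp [ht]
  have ht0 : t z ≠ 0 := by rw [htz]; exact one_div_ne_zero hu
  have hzt : (z : ℂ) = 1 - 1 / t z := by rw [htz]; field_simp; ring
  rw [← htz, hzt]
  generalize t z = T at *
  generalize F T = f0 at *
  generalize F' T = f1 at *
  generalize F'' T = f2 at *
  generalize E z = e at *
  rw [hw]
  field_simp
  linear_combination (-16 * e * T) * ode
end

section
/- Let n ≥ 3 be an integer, k > 0, λ > 0, and set s := √(λ/k); assume s − n/2 is not a nonnegative integer. Define the constant C := (k/4)^{n/2 − 1} · Γ(n/2 + s)·Γ(n/2 − s) / ( (n−2) · ω_{n−1} · Γ(n/2 + 1)·Γ(n/2 − 1) ) and the function g(r) := C · cos(√k·r/2) · ₂F₁(n/2 + s, n/2 − s, n/2 + 1; cos²(√k·r/2)) for r ∈ (0, π/√k). Then lim_{r → 0⁺} r^{n−2} · g(r) = 1 / ( (n−2) · ω_{n−1} ); equivalently, g(r) = 1/((n−2)·ω_{n−1}·r^{n−2}) + o(r^{2−n}) as r → 0⁺. -/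
open Real Set Filter Topology

open Asymptotics in
lemma abel_aux (d b : ℕ → ℝ) (hb : ∀ m, 0 ≤ b m) (B : ℝ → ℝ)
    (hB : ∀ x ∈ Ioo (0:ℝ) 1, HasSum (fun m => b m * x ^ m) (B x))
    (hd : d =o[atTop] b) (htop : Tendsto B (𝓝[<] 1) atTop) :
    (fun x => ∑' m, d m * x ^ m) =o[𝓝[<] 1] B := by
  rw [isLittleO_iff] at hd ⊢
  intro c hc
  obtain ⟨N, hN⟩ := eventually_atTop.1 (hd (half_pos hc))
  set M : ℝ := ∑ m ∈ Finset.range N, |d m| with hM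
  have hI : Ioo (0:ℝ) 1 ∈ 𝓝[<] (1:ℝ) := Ioo_mem_nhdsLT (by norm_num)
  filter_upwards [hI, htop.eventually_ge_atTop (2 * M / c), htop.eventually_ge_atTop 0]
    with x hx h1 h0
  have hs : HasSum (fun m => c / 2 * (b m * x ^ m) + (if m ∈ Finset.range N then |d m| else 0))
      (c / 2 * B x + M) := by
    refine ((hB x hx).mul_left _).add ?_
    have := hasSum_sum_of_ne_finset_zero (L := SummationFilter.unconditional ℕ) (f := fun m => if m ∈ Finset.range N then |d m| else 0)
      (s := Finset.range N) (fun b hb => by simp only [hb, if_false])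
    have e : (∑ m ∈ Finset.range N, if m ∈ Finset.range N then |d m| else 0) = M :=
      Finset.sum_congr rfl (fun m hm => by simp only [hm, if_true])
    rw [e] at this
    exact this
  have := tsum_of_norm_bounded hs (f := fun m => d m * x ^ m) (fun m => by
    have hx0 : 0 ≤ x ^ m := pow_nonneg hx.1.le _
    have hx1 : x ^ m ≤ 1 := pow_le_one₀ hx.1.le hx.2.le
    rw [norm_mul, Real.norm_eq_abs, Real.norm_eq_abs, abs_of_nonneg hx0]
    split_ifs with h
    · have := mul_nonneg (hb m) hx0
      nlinarith [mul_le_mul_of_nonneg_left hx1 (abs_nonneg (d m))]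
    · have h2 := hN m (by simpa using h)
      rw [Real.norm_eq_abs, Real.norm_eq_abs, abs_of_nonneg (hb m)] at h2
      nlinarith [mul_le_mul_of_nonneg_right h2 hx0])
  refine this.trans ?_
  rw [Real.norm_eq_abs, abs_of_nonneg h0]
  rw [div_le_iff₀ hc] at h1
  linarith

lemma poch_prod (s : ℝ) (n : ℕ) :
    (ascPochhammer ℝ n).eval s = ∏ j ∈ Finset.range n, (s + j) := by
  induction n with
  | zero => simp
  | succ n ih => rw [ascPochhammer_succ_eval, ih, Finset.prod_range_succ]

lemma poch_ne (s : ℝ) (hs : ∀ m : ℕ, s ≠ -m) (n : ℕ) : (ascPochhammer ℝ n).eval s ≠ 0 := by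
  rw [poch_prod, Finset.prod_ne_zero_iff]
  intro j _ h
  exact hs j (by linarith)

lemma ratio_aux (a b c p : ℝ) (ha : ∀ m : ℕ, a ≠ -m) (hb : ∀ m : ℕ, b ≠ -m)
    (hc : ∀ m : ℕ, c ≠ -m) (hp : ∀ m : ℕ, p ≠ -m) (h : a + b = c + p) :
    Tendsto (fun n : ℕ => (ascPochhammer ℝ n).eval a * (ascPochhammer ℝ n).eval b /
      ((ascPochhammer ℝ n).eval c * (ascPochhammer ℝ n).eval p)) atTop
      (𝓝 (Gamma c * Gamma p / (Gamma a * Gamma b))) := by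
  rw [← tendsto_add_atTop_iff_nat 1]
  have := ((GammaSeq_tendsto_Gamma c).mul (GammaSeq_tendsto_Gamma p)).div
    ((GammaSeq_tendsto_Gamma a).mul (GammaSeq_tendsto_Gamma b))
    (mul_ne_zero (Gamma_ne_zero ha) (Gamma_ne_zero hb))
  refine this.congr' ?_
  filter_upwards [eventually_gt_atTop 0] with n hn
  have hn' : (0:ℝ) < n := by exact_mod_cast hn
  simp only [Pi.div_apply, Pi.mul_apply, GammaSeq, ← poch_prod]
  have h1 := poch_ne a ha (n+1)
  have h2 := poch_ne b hb (n+1)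
  have h3 := poch_ne c hc (n+1)
  have h4 := poch_ne p hp (n+1)
  have h5 : (n:ℝ) ^ a * (n:ℝ) ^ b = (n:ℝ) ^ c * (n:ℝ) ^ p := by
    rw [← rpow_add hn', ← rpow_add hn', h]
  have q1 := (rpow_pos_of_pos hn' a).ne'
  have q2 := (rpow_pos_of_pos hn' b).ne'
  have q3 : (Nat.factorial n : ℝ) ≠ 0 := by positivity
  field_simp
  linear_combination -h5

lemma HasSum.congr_fun_aux {f g : ℕ → ℝ} {t : ℝ} (h : HasSum f t) (e : ∀ m, g m = f m) :
    HasSum g t := by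
  rw [show g = f from funext e]; exact h

lemma binom_aux (p x : ℝ) (hx : x ∈ Ioo (0:ℝ) 1) :
    HasSum (fun m : ℕ => ((ascPochhammer ℝ m).eval p / (Nat.factorial m)) * x ^ m)
      ((1 - x) ^ (-p)) := by
  have h := (one_div_one_sub_rpow_hasFPowerSeriesOnBall_zero p).hasSum (y := x) (by
    simp [Metric.mem_eball, edist_eq_enorm_sub, Real.enorm_eq_ofReal hx.1.le, hx.2])
  simp only [zero_add] at h
  rw [rpow_neg (by linarith [hx.2]), ← one_div]
  refine HasSum.congr_fun_aux h (fun m => ?_)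
  rw [FormalMultilinearSeries.ofScalars_apply_eq, smul_eq_mul]
  congr 1
  rw [Ring.choose_eq_smul, Polynomial.descPochhammer_smeval_eq_ascPochhammer,
    Polynomial.ascPochhammer_smeval_cast, Polynomial.ascPochhammer_smeval_eq_eval]
  rw [show p + m - 1 - m + 1 = p by ring, smul_eq_mul]
  field_simp

lemma hyp_aux (a b c p : ℝ) (ha : ∀ m : ℕ, a ≠ -m) (hb : ∀ m : ℕ, b ≠ -m)
    (hc : ∀ m : ℕ, c ≠ -m) (hp : 0 < p) (h : a + b = c + p) :
    Tendsto (fun x : ℝ => (1 - x) ^ p * ₂F₁ a b c x) (𝓝[<] 1)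
      (𝓝 (Gamma c * Gamma p / (Gamma a * Gamma b))) := by
  set L := Gamma c * Gamma p / (Gamma a * Gamma b) with hL
  have hp' : ∀ m : ℕ, p ≠ -m := fun m hm => by
    have : (0:ℝ) ≤ m := Nat.cast_nonneg m
    linarith
  set u : ℕ → ℝ := fun m => ((ascPochhammer ℝ m).eval p / (Nat.factorial m)) with hu
  set v : ℕ → ℝ := fun m => ((Nat.factorial m : ℝ)⁻¹ * (ascPochhammer ℝ m).eval a *
      (ascPochhammer ℝ m).eval b * ((ascPochhammer ℝ m).eval c)⁻¹) with hv
  have hupos : ∀ m, 0 < u m := fun m => div_pos (ascPochhammer_pos _ _ hp) (by positivity)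
  have hr : Tendsto (fun m => v m / u m) atTop (𝓝 L) := by
    refine (ratio_aux a b c p ha hb hc hp' h).congr (fun m => ?_)
    have h1 := poch_ne c hc m
    have h2 := poch_ne p hp' m
    have q3 : (Nat.factorial m : ℝ) ≠ 0 := by positivity
    simp only [hu, hv]
    field_simp
  have hd : (fun m => v m - L * u m) =o[atTop] u := by
    rw [Asymptotics.isLittleO_iff_tendsto (fun m hm => absurd hm (hupos m).ne')]
    have := hr.sub_const L
    rw [sub_self] at this
    refine this.congr (fun m => ?_)
    have := (hupos m).ne'
    field_simp
  have hI : Ioo (0:ℝ) 1 ∈ 𝓝[<] (1:ℝ) := Ioo_mem_nhdsLT (by norm_num)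
  have h1x : Tendsto (fun x : ℝ => 1 - x) (𝓝[<] 1) (𝓝[>] 0) := by
    refine tendsto_nhdsWithin_iff.2 ⟨?_, ?_⟩
    · have : Tendsto (fun x : ℝ => 1 - x) (𝓝 1) (𝓝 (1 - 1)) := by
        exact Continuous.tendsto (by fun_prop) 1
      rw [sub_self] at this
      exact this.mono_left nhdsWithin_le_nhds
    · filter_upwards [hI] with x hx
      exact sub_pos.2 hx.2
  have htop : Tendsto (fun x : ℝ => (1 - x) ^ (-p)) (𝓝[<] 1) atTop :=
    (tendsto_rpow_neg_nhdsGT_zero (neg_lt_zero.2 hp)).comp h1x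
  have key := abel_aux _ u (fun m => (hupos m).le) _ (fun x hx => binom_aux p x hx) hd htop
  have key2 := (key.tendsto_div_nhds_zero).add_const L
  rw [zero_add] at key2
  refine key2.congr' ?_
  filter_upwards [hI] with x hx
  have hsu := binom_aux p x hx
  have hsd : Summable (fun m => (v m - L * u m) * x ^ m) := by
    refine summable_of_isBigO_nat hsu.summable ?_
    exact hd.isBigO.mul (Asymptotics.isBigO_refl _ _)
  have hF : ₂F₁ a b c x = (∑' m, (v m - L * u m) * x ^ m) + L * (1 - x) ^ (-p) := by
    rw [ordinaryHypergeometric_eq_tsum, ← (hsu.mul_left L).tsum_eq,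
      ← hsd.tsum_add (hsu.mul_left L).summable]
    refine tsum_congr (fun m => ?_)
    simp only [hv, hu, smul_eq_mul]
    ring
  have h0 : (0:ℝ) < 1 - x := sub_pos.2 hx.2
  have h3 := (rpow_pos_of_pos h0 p).ne'
  rw [hF, rpow_neg h0.le]
  field_simp


theorem green_function_pole (n : ℕ) (hn : 3 ≤ n) (k lam : ℝ) (hk : 0 < k) (hlam : 0 < lam)
    (s : ℝ) (hs : s = Real.sqrt (lam / k))
    (hquant : ∀ j : ℕ, s - (n : ℝ) / 2 ≠ j)
    (ω C : ℝ)
    (hω : ω = 2 * π ^ ((n : ℝ) / 2) / Real.Gamma ((n : ℝ) / 2))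
    (hC : C = (k / 4) ^ ((n : ℝ) / 2 - 1) *
      (Real.Gamma ((n : ℝ) / 2 + s) * Real.Gamma ((n : ℝ) / 2 - s)) /
      (((n : ℝ) - 2) * ω * Real.Gamma ((n : ℝ) / 2 + 1) * Real.Gamma ((n : ℝ) / 2 - 1)))
    (g : ℝ → ℝ)
    (hg : ∀ r ∈ Ioo 0 (π / Real.sqrt k),
      g r = C * Real.cos (Real.sqrt k * r / 2) *
        ₂F₁ ((n : ℝ) / 2 + s) ((n : ℝ) / 2 - s) ((n : ℝ) / 2 + 1)
          (Real.cos (Real.sqrt k * r / 2) ^ 2)) :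
    Tendsto (fun r : ℝ => r ^ (n - 2) * g r) (𝓝[>] (0 : ℝ))
      (𝓝 (1 / (((n : ℝ) - 2) * ω))) := by
  have hn3 : (3:ℝ) ≤ n := by exact_mod_cast hn
  have hs0 : 0 ≤ s := hs ▸ Real.sqrt_nonneg _
  set a := (n:ℝ)/2 + s with ha
  set b := (n:ℝ)/2 - s with hb
  set c := (n:ℝ)/2 + 1 with hc
  set p := (n:ℝ)/2 - 1 with hp
  have hp0 : 0 < p := by linarith
  have hpos : ∀ t : ℝ, 0 < t → ∀ m : ℕ, t ≠ -m := fun t ht m hm => by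
    have : (0:ℝ) ≤ m := Nat.cast_nonneg m
    linarith
  have ha' := hpos a (by linarith)
  have hc' := hpos c (by linarith)
  have hb' : ∀ m : ℕ, b ≠ -m := fun m hm => hquant m (by linarith)
  have H := hyp_aux a b c p ha' hb' hc' hp0 (by rw [ha, hb, hc, hp]; ring)
  set K := Real.sqrt k with hK
  have hK0 : 0 < K := Real.sqrt_pos.2 hk
  have hKK : K ^ 2 = k := Real.sq_sqrt hk.le
  have hI : Ioo (0:ℝ) (π / K) ∈ 𝓝[>] (0:ℝ) := Ioo_mem_nhdsGT (by positivity)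
  have hrange : ∀ r ∈ Ioo (0:ℝ) (π / K), 0 < K * r / 2 ∧ K * r / 2 < π / 2 := fun r hr => by
    have h2 := hr.2
    rw [lt_div_iff₀ hK0] at h2
    have := mul_pos hK0 hr.1
    constructor <;> linarith
  have hx : Tendsto (fun r : ℝ => Real.cos (K * r / 2) ^ 2) (𝓝[>] 0) (𝓝[<] 1) := by
    refine tendsto_nhdsWithin_iff.2 ⟨?_, ?_⟩
    · have : Tendsto (fun r : ℝ => Real.cos (K * r / 2) ^ 2) (𝓝 0)
          (𝓝 (Real.cos (K * 0 / 2) ^ 2)) := Continuous.tendsto (by fun_prop) 0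
      simp only [mul_zero, zero_div, Real.cos_zero, one_pow] at this
      exact this.mono_left nhdsWithin_le_nhds
    · filter_upwards [hI] with r hr
      obtain ⟨h1, h2⟩ := hrange r hr
      have := Real.sin_pos_of_pos_of_lt_pi h1 (by linarith [Real.pi_pos])
      have h3 := Real.sin_sq_add_cos_sq (K * r / 2)
      simp only [mem_Iio]
      nlinarith
  have hcos : Tendsto (fun r : ℝ => Real.cos (K * r / 2)) (𝓝[>] 0) (𝓝 1) := by
    have : Tendsto (fun r : ℝ => Real.cos (K * r / 2)) (𝓝 0)
        (𝓝 (Real.cos (K * 0 / 2))) := Continuous.tendsto (by fun_prop) 0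
    simp only [mul_zero, zero_div, Real.cos_zero] at this
    exact this.mono_left nhdsWithin_le_nhds
  have hsin : Tendsto (fun r : ℝ => Real.sin (K * r / 2) / r) (𝓝[>] 0) (𝓝 (K / 2)) := by
    have hder : HasDerivAt (fun r : ℝ => Real.sin (K * r / 2)) (K / 2) 0 := by
      have h1 : HasDerivAt (fun r : ℝ => K * r / 2) (K * 1 / 2) 0 :=
        ((hasDerivAt_id (0:ℝ)).const_mul K).div_const 2
      have := h1.sin
      simpa using this
    have := hder.tendsto_slope.mono_left (nhdsWithin_mono (0:ℝ) (fun r (hr : 0 < r) => hr.ne'))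
    refine this.congr (fun r => ?_)
    simp [slope_def_field]
  have hpow : Tendsto (fun r : ℝ => (Real.sin (K * r / 2) / r) ^ (n - 2)) (𝓝[>] 0)
      (𝓝 ((K / 2) ^ (n - 2))) := hsin.pow _
  have hKne : (K / 2) ^ (n - 2) ≠ 0 := by positivity
  have hbig := ((((H.comp hx).mul hcos).div hpow hKne).const_mul C)
  have hcast : ((n - 2 : ℕ) : ℝ) = 2 * p := by
    rw [Nat.cast_sub (by omega), hp]; push_cast; ring
  have hsqp : ∀ t : ℝ, 0 ≤ t → (t ^ 2) ^ p = t ^ (n - 2) := fun t ht => by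
    rw [← Real.rpow_natCast t (n - 2), hcast, Real.rpow_mul ht, Real.rpow_two]
  have hGb := Real.Gamma_ne_zero hb'
  have hGa := Real.Gamma_ne_zero ha'
  have hGc := Real.Gamma_ne_zero hc'
  have hGp := Real.Gamma_ne_zero (hpos p hp0)
  have hω0 : ω ≠ 0 := by
    have := Real.Gamma_pos_of_pos (show (0:ℝ) < (n:ℝ)/2 by linarith)
    rw [hω]; positivity
  have hn2 : (n:ℝ) - 2 ≠ 0 := by linarith
  have hval : C * (Gamma c * Gamma p / (Gamma a * Gamma b) * 1 / (K / 2) ^ (n - 2))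
      = 1 / (((n : ℝ) - 2) * ω) := by
    have : (k / 4) ^ p = (K / 2) ^ (n - 2) := by
      rw [← hsqp (K / 2) (by positivity), div_pow, hKK]; norm_num
    rw [hC, this]
    field_simp
  rw [hval] at hbig
  refine hbig.congr' ?_
  filter_upwards [hI] with r hr
  obtain ⟨h1, h2⟩ := hrange r hr
  have hsp := Real.sin_pos_of_pos_of_lt_pi h1 (by linarith [Real.pi_pos])
  have hr0 : 0 < r := hr.1
  have h3 : 1 - Real.cos (K * r / 2) ^ 2 = Real.sin (K * r / 2) ^ 2 := by
    linarith [Real.sin_sq_add_cos_sq (K * r / 2)]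
  simp only [Function.comp_apply, Pi.div_apply, Pi.mul_apply]
  rw [hg r hr, h3, hsqp _ hsp.le, div_pow]
  have := pow_pos hsp (n - 2)
  have := pow_pos hr0 (n - 2)
  field_simp
end

section
/- Let n ≥ 2 be an integer and k > 0, and let f : ℝ → ℝ be a smooth function whose (compact) support is contained in the open interval (0, π/√k). Then ∫₀^{π/√k} (T_M f)(r)·f(r)·m(r) dr ≤ 0, i.e. the operator −T_M is nonnegative on compactly supported smooth functions with respect to the radial measure dμ = m(r)dr. -/
open Real Set MeasureTheory

/-- The radial operator `T_M` on the sphere of curvature `k > 0` in dimension `n`. -/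
noncomputable def radialOp (n : ℕ) (k : ℝ) (f : ℝ → ℝ) (r : ℝ) : ℝ :=
  deriv (deriv f) r + ((n : ℝ) - 1) * Real.sqrt k * Real.cot (Real.sqrt k * r) * deriv f r
    - k * ((n : ℝ) - 1) / 4 * ((Real.cos (Real.sqrt k * r / 2))⁻¹ ^ 2 + (n : ℝ) - 1) * f r

/-- The density of the radial measure `dμ = m(r) dr`. -/
noncomputable def radialDensity (n : ℕ) (k : ℝ) (r : ℝ) : ℝ :=
  (Real.sin (Real.sqrt k * r) / Real.sqrt k) ^ (n - 1)

theorem radialOp_nonpositive (n : ℕ) (hn : 2 ≤ n) (k : ℝ) (hk : 0 < k)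
    (f : ℝ → ℝ) (hf : ContDiff ℝ (⊤ : ℕ∞) f)
    (hfs : tsupport f ⊆ Ioo 0 (π / Real.sqrt k)) :
    ∫ r in Ioo (0 : ℝ) (π / Real.sqrt k), radialOp n k f r * f r * radialDensity n k r ≤ 0 := by
  obtain ⟨j, rfl⟩ : ∃ j, n = j + 2 := ⟨n - 2, by omega⟩
  have hs : 0 < Real.sqrt k := Real.sqrt_pos.mpr hk
  set s := Real.sqrt k with hsdef
  have hb : 0 < π / s := div_pos Real.pi_pos hs
  have hf2 : ContDiff ℝ 2 f := contDiff_infty.mp hf 2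
  have hf1 : ContDiff ℝ 1 (deriv f) := by
    have : ContDiff ℝ (1 + 1) f := by simpa [one_add_one_eq_two] using hf2
    exact (contDiff_succ_iff_deriv.mp this).2.2
  have c0 : Continuous f := hf2.continuous
  have c1 : Continuous (deriv f) := hf1.continuous
  have c2 : Continuous (deriv (deriv f)) := hf1.continuous_deriv le_rfl
  have d0 : ∀ x, HasDerivAt f (deriv f x) x := fun x =>
    ((hf2.differentiable (by norm_num)) x).hasDerivAt
  have d1 : ∀ x, HasDerivAt (deriv f) (deriv (deriv f) x) x := fun x =>
    ((hf1.differentiable (by norm_num)) x).hasDerivAt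
  have dm : ∀ x, HasDerivAt (fun r => (Real.sin (s * r) / s) ^ (j + 1))
      (((j : ℝ) + 1) * (Real.sin (s * x) / s) ^ j * Real.cos (s * x)) x := by
    intro x
    have h1 : HasDerivAt (fun r => s * r) s x := by
      simpa using (hasDerivAt_id x).const_mul s
    have h2 := ((h1.sin).div_const s).pow (j + 1)
    have h3 : ((j + 1 : ℕ) : ℝ) * (Real.sin (s * x) / s) ^ (j + 1 - 1) * (Real.cos (s * x) * s / s)
        = ((j : ℝ) + 1) * (Real.sin (s * x) / s) ^ j * Real.cos (s * x) := by
      rw [show j + 1 - 1 = j from rfl, mul_div_cancel_right₀ _ hs.ne']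
      push_cast
      ring
    rw [h3] at h2
    exact h2
  have f0 : f 0 = 0 := by
    apply image_eq_zero_of_notMem_tsupport
    intro h; exact absurd (hfs h).1 (lt_irrefl _)
  have fb : f (π / s) = 0 := by
    apply image_eq_zero_of_notMem_tsupport
    intro h; exact absurd (hfs h).2 (lt_irrefl _)
  set G' : ℝ → ℝ := fun x =>
    (((j : ℝ) + 1) * (Real.sin (s * x) / s) ^ j * Real.cos (s * x)) * (deriv f x * f x)
      + (Real.sin (s * x) / s) ^ (j + 1) *
        (deriv (deriv f) x * f x + deriv f x * deriv f x) with hG'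
  have cG : Continuous G' := by
    rw [hG']; fun_prop
  have hint : ∫ r in Ioo (0 : ℝ) (π / s), G' r = 0 := by
    rw [← integral_Ioc_eq_integral_Ioo, ← intervalIntegral.integral_of_le hb.le]
    rw [intervalIntegral.integral_eq_sub_of_hasDerivAt (f' := G')
      (f := fun r => (Real.sin (s * r) / s) ^ (j + 1) * (deriv f r * f r))
      (fun x _ => (dm x).mul ((d1 x).mul (d0 x))) (cG.intervalIntegrable _ _)]
    simp [f0, fb]
  by_cases hI : IntegrableOn
      (fun r => radialOp (j + 2) k f r * f r * radialDensity (j + 2) k r) (Ioo 0 (π / s))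
  · refine le_trans ?_ hint.le
    apply setIntegral_mono_on hI
      ((cG.integrableOn_Icc).mono_set Ioo_subset_Icc_self) measurableSet_Ioo
    intro x hx
    have hsin : 0 < Real.sin (s * x) := by
      apply Real.sin_pos_of_pos_of_lt_pi (mul_pos hs hx.1)
      have := (lt_div_iff₀ hs).mp hx.2
      linarith
    have hm : 0 < (Real.sin (s * x) / s) := div_pos hsin hs
    have hV : 0 ≤ k * ((j : ℝ) + 1) / 4 * ((Real.cos (s * x / 2))⁻¹ ^ 2 + (j : ℝ) + 1) := by
      positivity
    have key : radialOp (j + 2) k f x * f x * radialDensity (j + 2) k x = G' x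
        - (Real.sin (s * x) / s) ^ (j + 1) * (deriv f x) ^ 2
        - k * ((j : ℝ) + 1) / 4 * ((Real.cos (s * x / 2))⁻¹ ^ 2 + (j : ℝ) + 1)
          * (Real.sin (s * x) / s) ^ (j + 1) * f x ^ 2 := by
      have hc : s * Real.cot (s * x) * (Real.sin (s * x) / s) = Real.cos (s * x) := by
        rw [Real.cot_eq_cos_div_sin]
        field_simp
      simp only [radialOp, radialDensity, hG', ← hsdef]
      rw [show j + 2 - 1 = j + 1 from rfl, ← hc]
      push_cast
      ring
    have h1 := mul_nonneg (pow_pos hm (j + 1)).le (sq_nonneg (deriv f x))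
    have h2 := mul_nonneg (mul_nonneg hV (pow_pos hm (j + 1)).le) (sq_nonneg (f x))
    show radialOp (j + 2) k f x * f x * radialDensity (j + 2) k x ≤ G' x
    rw [key]
    linarith
  · rw [integral_undef hI]
end

section
/- Let n ≥ 2 be an integer and σ ∈ ℝ. If w : (−∞, −1) → ℂ is twice differentiable, satisfies the radial hypergeometric equation E(n, −σ²) on (−∞, −1), and is square-integrable with respect to the weight (z(z−1))^{n/2−1}, i.e. ∫_{−∞}^{−1} |w(z)|² · (z(z−1))^{n/2−1} dz < ∞, then w is identically zero. (Hence for nonnegative spectral parameter the eigenvalue equation admits no nonzero solution square-integrable at infinity, so the spectrum in the negative-curvature case is purely continuous.) -/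
open Real Set Complex MeasureTheory

lemma aux_mono {R : ℝ} {f f' : ℝ → ℝ} (h : ∀ r ∈ Ioi R, HasDerivAt f (f' r) r)
    (h0 : ∀ r ∈ Ioi R, 0 ≤ f' r) : MonotoneOn f (Ioi R) := by
  apply monotoneOn_of_deriv_nonneg (convex_Ioi R)
  · exact fun r hr => (h r hr).continuousAt.continuousWithinAt
  · intro r hr
    rw [interior_Ioi] at hr
    exact (h r hr).differentiableAt.differentiableWithinAt
  · intro r hr
    rw [interior_Ioi] at hr
    rw [(h r hr).deriv]; exact h0 r hr

lemma aux_le_lim {R L : ℝ} {f : ℝ → ℝ} (h : MonotoneOn f (Ioi R))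
    (hl : Filter.Tendsto f Filter.atTop (nhds L)) : ∀ r ∈ Ioi R, f r ≤ L := by
  intro r hr
  apply ge_of_tendsto hl
  filter_upwards [Filter.eventually_ge_atTop r] with s hs
  exact h hr (lt_of_lt_of_le hr hs) hs

lemma core {R : ℝ} {u v Q Q' : ℝ → ℝ}
    (hu : ∀ r ∈ Ioi R, HasDerivAt u (v r) r)
    (hv : ∀ r ∈ Ioi R, HasDerivAt v (-(Q r * u r)) r)
    (hQ : ∀ r ∈ Ioi R, HasDerivAt Q (Q' r) r)
    (hpos : ∀ r ∈ Ioi R, 0 < Q r)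
    (hneg : ∀ r ∈ Ioi R, Q' r ≤ 0)
    (hint : IntegrableOn (fun r => u r ^ 2) (Ioi R))
    (hcase : (∃ c, 0 < c ∧ ∀ r ∈ Ioi R, c ≤ Q r) ∨
      (∃ c C, 0 < c ∧ 0 < C ∧ ∀ r ∈ Ioi R, c * rexp (-r) ≤ Q r ∧ Q r ≤ C * rexp (-r))) :
    ∀ r ∈ Ioi R, u r = 0 ∧ v r = 0 := by
  -- step 1
  have hE : MonotoneOn (fun r => -(v r ^ 2 + Q r * u r ^ 2)) (Ioi R) := by
    apply aux_mono (f' := fun r => - (Q' r * u r ^ 2))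
    · intro r hr
      refine HasDerivAt.congr_deriv ((((hv r hr).pow 2).add ((hQ r hr).mul ((hu r hr).pow 2))).neg) ?_
      simp; ring
    · intro r hr
      have := mul_nonneg (neg_nonneg.2 (hneg r hr)) (sq_nonneg (u r))
      linarith
  have hQm : MonotoneOn (fun r => -Q r) (Ioi R) := by
    apply aux_mono (f' := fun r => - (Q' r))
    · intro r hr
      exact (hQ r hr).neg
    · intro r hr
      linarith [hneg r hr]
  have hR1 : R + 1 ∈ Ioi R := by simp
  obtain ⟨B, hB⟩ : ∃ B : ℝ, ∀ r ∈ Ioi (R+1), |v r| ≤ B := by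
    refine ⟨√(v (R+1) ^ 2 + Q (R+1) * u (R+1) ^ 2), fun r hr => ?_⟩
    have hr' : r ∈ Ioi R := lt_trans (by simp) (mem_Ioi.1 hr)
    have h := hE hR1 hr' (le_of_lt hr)
    simp only at h
    apply Real.abs_le_sqrt
    have := mul_nonneg (hpos r hr').le (sq_nonneg (u r))
    linarith
  -- step 2
  have hu0 : Filter.Tendsto u Filter.atTop (nhds 0) := by
    have hsub : Ioi (R+1) ⊆ Ioi R := Ioi_subset_Ioi (by linarith)
    have hint1 := hint.mono_set hsub
    have hcv : ContinuousOn v (Ioi (R+1)) :=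
      fun r hr => (hv r (hsub hr)).continuousAt.continuousWithinAt
    have hi3 : IntegrableOn (fun r => (3 * v r) * u r ^ 2) (Ioi (R+1)) := by
      refine Integrable.bdd_mul (c := 3 * B) hint1 ?_ ?_
      · exact (hcv.const_smul (3:ℝ)).aestronglyMeasurable measurableSet_Ioi
      · refine (ae_restrict_iff' measurableSet_Ioi).2 (Filter.Eventually.of_forall fun r hr => ?_)
        rw [norm_mul]
        simp only [Real.norm_eq_abs]
        rw [abs_of_pos (by norm_num : (0:ℝ) < 3)]
        linarith [hB r hr]
    have hl := tendsto_limUnder_of_hasDerivAt_of_integrableOn_Ioi (f := fun r => u r ^ 3)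
      (f' := fun r => (3 * v r) * u r ^ 2) (a := R+1) (fun r hr => by
        refine HasDerivAt.congr_deriv ((hu r (hsub hr)).pow 3) ?_
        simp; ring) hi3
    set L := Filter.limUnder Filter.atTop (fun r => u r ^ 3) with hL
    have h1 : Filter.Tendsto (fun r => |u r|) Filter.atTop (nhds (|L| ^ (1/3:ℝ))) := by
      have := (hl.abs).rpow_const (p := (1/3:ℝ)) (Or.inr (by norm_num))
      refine this.congr fun r => ?_
      rw [abs_pow, ← Real.rpow_natCast, ← Real.rpow_mul (abs_nonneg _)]
      norm_num
    have h2 : Filter.Tendsto (fun r => u r ^ 2) Filter.atTop (nhds ((|L| ^ (1/3:ℝ))^2)) := by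
      refine (h1.pow 2).congr fun r => by rw [sq_abs]
    have h3 := IntegrableAtFilter.eq_zero_of_tendsto (μ := volume) (l := Filter.atTop)
      ⟨Ioi R, Filter.Ioi_mem_atTop R, hint⟩ (by
        intro s hs
        obtain ⟨b, hb⟩ := Filter.mem_atTop_sets.1 hs
        rw [← top_le_iff, ← Real.volume_Ici (a := b)]
        exact measure_mono hb) h2
    have h4 : |L| ^ (1/3:ℝ) = 0 := by simpa using h3
    rw [h4] at h1
    exact (tendsto_zero_iff_abs_tendsto_zero _).2 h1
  -- step 3
  have hv0 : Filter.Tendsto v Filter.atTop (nhds 0) := by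
    have hK := hpos _ hR1
    set K := Q (R+1)
    rw [Metric.tendsto_atTop]
    intro ε hε
    obtain ⟨N, hN⟩ := (Metric.tendsto_atTop.1 hu0) (ε / (2 + K)) (by positivity)
    refine ⟨max N (R+2), fun r hr => ?_⟩
    have hrN : N ≤ r := le_trans (le_max_left _ _) hr
    have hrR : R + 2 ≤ r := le_trans (le_max_right _ _) hr
    have hin : ∀ s, r ≤ s → s ∈ Ioi R := fun s hs => by simp; linarith
    obtain ⟨ξ, hξ, h1⟩ := exists_hasDerivAt_eq_slope u v (by linarith : r < r + 1)
      (fun s hs => (hu s (hin s hs.1)).continuousAt.continuousWithinAt)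
      (fun s hs => hu s (hin s hs.1.le))
    obtain ⟨η, hη, h2⟩ := exists_hasDerivAt_eq_slope v (fun s => -(Q s * u s)) hξ.1
      (fun s hs => (hv s (hin s hs.1)).continuousAt.continuousWithinAt)
      (fun s hs => hv s (hin s hs.1.le))
    have hd : ξ - r ≠ 0 := by linarith [hξ.1]
    rw [eq_div_iff hd] at h2
    have hQη : Q η ≤ K := by
      have := hQm hR1 (hin η hη.1.le) (by linarith [hη.1])
      simp only at this
      linarith
    have a1 := hN r hrN
    have a2 := hN (r+1) (by linarith)
    have a3 := hN η (by linarith [hη.1])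
    simp only [Real.dist_eq, sub_zero] at a1 a2 a3 ⊢
    set δ := ε / (2 + K)
    have hδ : (2 + K) * δ = ε := by simp only [δ]; field_simp
    have e : v r = u (r+1) - u r + (Q η * u η) * (ξ - r) := by
      have : r + 1 - r = 1 := by ring
      rw [this, div_one] at h1
      linarith
    have hQη0 := hpos η (hin η hη.1.le)
    have b : |(Q η * u η) * (ξ - r)| ≤ K * δ := by
      rw [abs_mul, abs_mul, abs_of_pos hQη0, abs_of_pos (by linarith [hξ.1] : 0 < ξ - r)]
      have : Q η * |u η| ≤ K * δ := mul_le_mul hQη a3.le (abs_nonneg _) hK.le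
      have h5 : Q η * |u η| * (ξ - r) ≤ Q η * |u η| * 1 :=
        mul_le_mul_of_nonneg_left (by linarith [hξ.2]) (by positivity)
      linarith
    rw [e, ← hδ]
    have := abs_add_le (u (r+1) - u r) ((Q η * u η) * (ξ - r))
    have := abs_sub (u (r+1)) (u r)
    linarith
  -- step 4
  have hF : MonotoneOn (fun r => u r ^ 2 + v r ^ 2 / Q r) (Ioi R) := by
    apply aux_mono (f' := fun r => -(Q' r) * v r ^ 2 / Q r ^ 2)
    · intro r hr
      have hq := (hpos r hr).ne'
      refine HasDerivAt.congr_deriv (((hu r hr).pow 2).add (((hv r hr).pow 2).div (hQ r hr) hq)) ?_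
      simp
      field_simp
      ring
    · intro r hr
      have := neg_nonneg.2 (hneg r hr)
      positivity
  have hG : Filter.Tendsto (fun r => v r ^ 2 / Q r) Filter.atTop (nhds 0) := by
    rcases hcase with ⟨c, hc, hcQ⟩ | ⟨c, C, hc, hC, hcQ⟩
    · have : Filter.Tendsto (fun r => v r ^ 2 / c) Filter.atTop (nhds 0) := by
        simpa using (hv0.pow 2).div_const c
      refine squeeze_zero' ?_ ?_ this
      · filter_upwards [Filter.eventually_gt_atTop R] with r hr
        have := hpos r hr
        positivity
      · filter_upwards [Filter.eventually_gt_atTop R] with r hr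
        have := hcQ r hr
        gcongr
    · obtain ⟨N, hN⟩ := (Metric.tendsto_atTop.1 hu0) 1 one_pos
      have hR2 : Ioi (max N R) ⊆ Ioi R := Ioi_subset_Ioi (le_max_right _ _)
      have he : ∀ r : ℝ, HasDerivAt (fun r => C * rexp (-r)) (-(C * rexp (-r))) r := by
        intro r
        refine HasDerivAt.congr_deriv (((hasDerivAt_neg r).exp).const_mul C) ?_
        ring
      have he0 : Filter.Tendsto (fun r => C * rexp (-r)) Filter.atTop (nhds 0) := by
        simpa using (Real.tendsto_exp_neg_atTop_nhds_zero).const_mul C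
      have hb : ∀ r ∈ Ioi (max N R), |Q r * u r| ≤ C * rexp (-r) := by
        intro r hr
        have h1 := hN r (le_trans (le_max_left _ _) (le_of_lt hr))
        rw [Real.dist_eq, sub_zero] at h1
        have h2 := hpos r (hR2 hr)
        rw [abs_mul, abs_of_pos h2]
        nlinarith [(hcQ r (hR2 hr)).2, abs_nonneg (u r)]
      have m1 : MonotoneOn (fun r => v r - C * rexp (-r)) (Ioi (max N R)) := by
        refine aux_mono (fun r hr => (hv r (hR2 hr)).sub (he r)) fun r hr => ?_
        have := abs_le.1 (hb r hr)
        linarith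
      have m2 : MonotoneOn (fun r => -v r - C * rexp (-r)) (Ioi (max N R)) := by
        refine aux_mono (fun r hr => (hv r (hR2 hr)).neg.sub (he r)) fun r hr => ?_
        have := abs_le.1 (hb r hr)
        linarith
      have l1 := aux_le_lim m1 (by simpa using hv0.sub he0)
      have l2 := aux_le_lim m2 (by simpa using hv0.neg.sub he0)
      have : Filter.Tendsto (fun r => C ^ 2 / c * rexp (-r)) Filter.atTop (nhds 0) := by
        simpa using (Real.tendsto_exp_neg_atTop_nhds_zero).const_mul (C^2 / c)
      refine squeeze_zero' ?_ ?_ this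
      · filter_upwards [Filter.eventually_gt_atTop R] with r hr
        have := hpos r hr
        positivity
      · filter_upwards [Filter.eventually_gt_atTop (max N R)] with r hr
        have h1 := l1 r hr
        have h2 := l2 r hr
        have h3 := hcQ r (hR2 hr)
        have h4 := Real.exp_pos (-r)
        have h5 : v r ^ 2 ≤ (C * rexp (-r)) ^ 2 := by
          apply sq_le_sq' <;> linarith
        calc v r ^ 2 / Q r ≤ (C * rexp (-r)) ^ 2 / (c * rexp (-r)) := by
              have := h3.1
              gcongr
          _ = _ := by field_simp
  have hlim : Filter.Tendsto (fun r => u r ^ 2 + v r ^ 2 / Q r) Filter.atTop (nhds 0) := by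
    simpa using (hu0.pow 2).add hG
  intro r hr
  have h1 := aux_le_lim hF hlim r hr

  have hq := hpos r hr
  have h2 : 0 ≤ v r ^ 2 / Q r := by positivity
  have h3 := sq_nonneg (u r)
  constructor
  · have : u r ^ 2 = 0 := by linarith
    simpa using this
  · have : v r ^ 2 / Q r = 0 := by linarith
    simpa [hq.ne'] using this

lemma back {R₀ R : ℝ} {u v Q : ℝ → ℝ}
    (hu : ∀ r ∈ Ioi R₀, HasDerivAt u (v r) r)
    (hv : ∀ r ∈ Ioi R₀, HasDerivAt v (-(Q r * u r)) r)
    (hQ : ContinuousOn Q (Ioi R₀))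
    (h0 : ∀ r ∈ Ioi R, u r = 0 ∧ v r = 0) : ∀ r ∈ Ioi R₀, u r = 0 := by
  intro r hr
  set T := max R r + 1
  have hrT : r ≤ T := by have := le_max_right R r; simp only [T]; linarith
  have hRT : R < T := by have := le_max_left R r; simp only [T]; linarith
  have hsub : Icc r T ⊆ Ioi R₀ := fun s hs => lt_of_lt_of_le hr hs.1
  obtain ⟨K, hK⟩ := isCompact_Icc.exists_bound_of_continuousOn (hQ.mono hsub)
  have hm : MonotoneOn (fun s => (u s ^ 2 + v s ^ 2) * rexp ((1 + K) * s)) (Icc r T) := by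
    have hd : ∀ s ∈ Icc r T, HasDerivAt (fun s => (u s ^ 2 + v s ^ 2) * rexp ((1 + K) * s))
      ((2 * (1 - Q s) * (u s * v s) + (1 + K) * (u s ^ 2 + v s ^ 2)) * rexp ((1 + K) * s)) s := by
      intro s hs
      refine HasDerivAt.congr_deriv ((((hu s (hsub hs)).pow 2).add ((hv s (hsub hs)).pow 2)).mul
        (((hasDerivAt_id s).const_mul (1 + K)).exp)) ?_
      simp; ring
    apply monotoneOn_of_deriv_nonneg (convex_Icc r T)
    · exact fun s hs => (hd s hs).continuousAt.continuousWithinAt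
    · intro s hs
      exact (hd s (interior_subset hs)).differentiableAt.differentiableWithinAt
    · intro s hs
      have hs := interior_subset hs
      rw [(hd s hs).deriv]
      apply mul_nonneg _ (Real.exp_pos _).le
      have h1 := abs_le.1 (hK s hs)
      nlinarith [mul_nonneg (by linarith : 0 ≤ K - Q s) (sq_nonneg (u s - v s)), mul_nonneg (by linarith : 0 ≤ K + Q s) (sq_nonneg (u s + v s)), sq_nonneg (u s - v s), sq_nonneg (u s + v s)]
  have := hm (left_mem_Icc.2 hrT) (right_mem_Icc.2 hrT) hrT
  simp only [(h0 T hRT).1, (h0 T hRT).2] at this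
  have h2 : u r ^ 2 + v r ^ 2 ≤ 0 := by
    by_contra hcon
    push Not at hcon
    have := mul_pos hcon (Real.exp_pos ((1 + K) * r))
    simp at *
    linarith
  have : u r ^ 2 = 0 := by nlinarith [sq_nonneg (u r), sq_nonneg (v r)]
  simpa using this

lemma real_main (n : ℕ) (hn : 2 ≤ n) (σ : ℝ) (p p1 p2 : ℝ → ℝ)
    (hp : ∀ z ∈ Iio (-1 : ℝ), HasDerivAt p (p1 z) z)
    (hp1 : ∀ z ∈ Iio (-1 : ℝ), HasDerivAt p1 (p2 z) z)
    (hE : ∀ z ∈ Iio (-1 : ℝ), z * (1 - z) * p2 z + ((n:ℝ) / 2 - n * z) * p1 z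
      - (((n:ℝ) - 1) / 4 * ((n:ℝ) - 1 + 1 / (1 - z)) + σ ^ 2) * p z = 0)
    (hL2 : IntegrableOn
      (fun z : ℝ => p z ^ 2 * (z * (z - 1)) ^ ((n : ℝ) / 2 - 1)) (Iio (-1))) :
    ∀ z ∈ Iio (-1 : ℝ), p z = 0 := by
  obtain ⟨a, ha⟩ : ∃ a : ℝ, a = ((n:ℝ) - 1) / 2 := ⟨_, rfl⟩
  have hna : (n:ℝ) = 2 * a + 1 := by rw [ha]; ring
  have ha0 : 0 < a := by
    have : (2:ℝ) ≤ n := by exact_mod_cast hn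
    linarith
  rw [hna] at hE hL2
  set r₀ := arcosh 3
  have hr₀ : 0 < r₀ := arcosh_pos (by norm_num)
  have hcosh : ∀ r ∈ Ioi r₀, 3 < Real.cosh r := by
    intro r hr
    rw [← Real.cosh_arcosh (by norm_num : (1:ℝ) ≤ 3)]
    rw [Real.cosh_lt_cosh, abs_of_pos hr₀, abs_of_pos (hr₀.trans hr)]
    exact hr
  have hsinh : ∀ r ∈ Ioi r₀, 0 < Real.sinh r := fun r hr => Real.sinh_pos_iff.2 (hr₀.trans hr)
  set Z : ℝ → ℝ := fun r => (1 - Real.cosh r) / 2 with hZ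
  have hZm : ∀ r ∈ Ioi r₀, Z r ∈ Iio (-1 : ℝ) := by
    intro r hr
    have := hcosh r hr
    simp only [hZ, mem_Iio]; linarith
  have hZd : ∀ r, HasDerivAt Z (-(Real.sinh r) / 2) r := fun r =>
    (((Real.hasDerivAt_cosh r).const_sub 1).div_const 2)
  set u : ℝ → ℝ := fun r => Real.sinh r ^ a * p (Z r) with hu_def
  set v : ℝ → ℝ := fun r => Real.sinh r ^ a * (a * Real.cosh r / Real.sinh r * p (Z r)
    - Real.sinh r / 2 * p1 (Z r)) with hv_def
  set Q : ℝ → ℝ := fun r => σ ^ 2 + a * (Real.cosh r - a) / Real.sinh r ^ 2 with hQ_def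
  set Q' : ℝ → ℝ := fun r => a * (-1 - Real.cosh r ^ 2 + 2 * a * Real.cosh r) / Real.sinh r ^ 3
    with hQ'_def
  have hS : ∀ r ∈ Ioi r₀, HasDerivAt (fun r => Real.sinh r ^ a)
      (Real.sinh r ^ a * (a * Real.cosh r / Real.sinh r)) r := by
    intro r hr
    have hs := hsinh r hr
    refine HasDerivAt.congr_deriv ((Real.hasDerivAt_sinh r).rpow_const (Or.inl hs.ne')) ?_
    rw [Real.rpow_sub_one hs.ne']
    field_simp
  have hpZ : ∀ r ∈ Ioi r₀, HasDerivAt (fun r => p (Z r)) (p1 (Z r) * (-(Real.sinh r) / 2)) r :=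
    fun r hr => (hp _ (hZm r hr)).comp r (hZd r)
  have hp1Z : ∀ r ∈ Ioi r₀, HasDerivAt (fun r => p1 (Z r)) (p2 (Z r) * (-(Real.sinh r) / 2)) r :=
    fun r hr => (hp1 _ (hZm r hr)).comp r (hZd r)
  have hu : ∀ r ∈ Ioi r₀, HasDerivAt u (v r) r := by
    intro r hr
    refine HasDerivAt.congr_deriv ((hS r hr).mul (hpZ r hr)) ?_
    simp only [hv_def]
    ring
  have hv : ∀ r ∈ Ioi r₀, HasDerivAt v (-(Q r * u r)) r := by
    intro r hr
    have hs := hsinh r hr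
    have hc := hcosh r hr
    have hcs := Real.cosh_sq r
    refine HasDerivAt.congr_deriv ((hS r hr).mul
      (((((Real.hasDerivAt_cosh r).const_mul a).div (Real.hasDerivAt_sinh r) hs.ne').mul
        (hpZ r hr)).sub (((Real.hasDerivAt_sinh r).div_const 2).mul (hp1Z r hr)))) ?_
    have he := hE _ (hZm r hr)
    simp only [hQ_def, hu_def]
    generalize p (Z r) = A at *
    generalize p1 (Z r) = B at *
    generalize p2 (Z r) = D at *
    have e1 : Z r * (1 - Z r) = - Real.sinh r ^ 2 / 4 := by
      simp only [hZ]; linear_combination (-1/4) * hcs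
    have e2 : 1 / (1 - Z r) = 2 * (Real.cosh r - 1) / Real.sinh r ^ 2 := by
      have : 1 - Z r ≠ 0 := by simp only [hZ]; linarith
      rw [div_eq_div_iff this (by positivity)]
      simp only [hZ]; linear_combination -hcs
    rw [e1, e2] at he
    have e3 : Z r = (1 - Real.cosh r) / 2 := rfl
    rw [e3] at he
    generalize Real.sinh r ^ a = T at *
    have hD : Real.sinh r ^ 2 * D = 4 * (((2 * a + 1) / 2 - (2 * a + 1) * ((1 - Real.cosh r) / 2)) * B
      - ((2 * a + 1 - 1) / 4 * (2 * a + 1 - 1 + 2 * (Real.cosh r - 1) / Real.sinh r ^ 2) + σ ^ 2) * A) := by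
      linear_combination (-4) * he
    simp only [Pi.div_apply, Pi.mul_apply, Pi.sub_apply]
    generalize Real.cosh r = c at *
    generalize Real.sinh r = s at *
    have hD' : D = 4 * (((2 * a + 1) / 2 - (2 * a + 1) * ((1 - c) / 2)) * B
      - ((2 * a + 1 - 1) / 4 * (2 * a + 1 - 1 + 2 * (c - 1) / s ^ 2) + σ ^ 2) * A) / s ^ 2 := by
      rw [eq_div_iff (by positivity)]; linarith
    subst hD'
    field_simp
    ring_nf
    grind
  have hQ : ∀ r ∈ Ioi r₀, HasDerivAt Q (Q' r) r := by
    intro r hr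
    have hs := hsinh r hr
    have hcs := Real.cosh_sq r
    refine HasDerivAt.congr_deriv (((((Real.hasDerivAt_cosh r).sub_const a).const_mul a).div
      ((Real.hasDerivAt_sinh r).pow 2) (pow_ne_zero 2 hs.ne')).const_add (σ ^ 2)) ?_
    simp only [hQ'_def, Pi.pow_apply]
    generalize Real.cosh r = c at *
    generalize Real.sinh r = s at *
    field_simp
    simp
    field_simp
    linear_combination (-1) * hcs
  -- integrability
  have hint : IntegrableOn (fun r => u r ^ 2) (Ioi r₀) := by
    have hinj : InjOn Z (Ioi r₀) := by
      intro r hr s hs h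
      have h1 : Real.cosh r = Real.cosh s := by simp only [hZ] at h; linarith
      rw [← Real.arcosh_cosh (hr₀.trans hr).le, h1, Real.arcosh_cosh (hr₀.trans hs).le]
    have h1 := (integrableOn_image_iff_integrableOn_abs_deriv_smul measurableSet_Ioi
      (fun r _ => (hZd r).hasDerivWithinAt) hinj _).1
      (hL2.mono_set (image_subset_iff.2 hZm))
    have h2 : IntegrableOn _ (Ioi r₀) := h1.const_mul (2 * (4:ℝ) ^ (a - 1/2))
    refine h2.congr_fun ?_ measurableSet_Ioi
    intro r hr
    have hs := hsinh r hr
    have hcs := Real.cosh_sq r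
    have e1 : Z r * (Z r - 1) = Real.sinh r ^ 2 / 4 := by
      simp only [hZ]; linear_combination (1/4) * hcs
    simp only [hu_def, e1, smul_eq_mul]
    have e2 : (2 * a + 1) / 2 - 1 = a - 1/2 := by ring
    rw [e2, abs_of_neg (by linarith), Real.div_rpow (by positivity) (by positivity)]
    have e3 : (Real.sinh r ^ 2) ^ (a - 1/2) = (Real.sinh r ^ a) ^ 2 / Real.sinh r := by
      rw [← Real.rpow_natCast, ← Real.rpow_natCast, ← Real.rpow_mul hs.le, ← Real.rpow_mul hs.le,
        ← Real.rpow_sub_one hs.ne']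
      congr 1; push_cast; ring
    rw [e3]
    have : (4:ℝ) ^ (a - 1/2) ≠ 0 := by positivity
    field_simp
  -- apply core on a far half line
  set R := max r₀ (max 1 (arcosh (max 1 (2 * a))))
  have hsub : Ioi R ⊆ Ioi r₀ := Ioi_subset_Ioi (le_max_left _ _)
  have hR1 : ∀ r ∈ Ioi R, 1 < r := fun r hr =>
    lt_of_le_of_lt (le_trans (le_max_left _ _) (le_max_right _ _)) hr
  have hRa : ∀ r ∈ Ioi R, 2 * a ≤ Real.cosh r := by
    intro r hr
    have h1 : arcosh (max 1 (2 * a)) < r :=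
      lt_of_le_of_lt (le_trans (le_max_right _ _) (le_max_right _ _)) hr
    have h2 : Real.cosh (arcosh (max 1 (2 * a))) ≤ Real.cosh r := by
      rw [Real.cosh_le_cosh, abs_of_nonneg (arcosh_nonneg (le_max_left _ _)),
        abs_of_pos (by linarith [hR1 r hr])]
      exact h1.le
    rw [Real.cosh_arcosh (le_max_left _ _)] at h2
    exact le_trans (le_max_right _ _) h2
  have hV : ∀ r ∈ Ioi R, a / 2 * rexp (-r) ≤ a * (Real.cosh r - a) / Real.sinh r ^ 2 ∧
      a * (Real.cosh r - a) / Real.sinh r ^ 2 ≤ 16 * a * rexp (-r) := by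
    intro r hr
    have h1 := hR1 r hr
    have h2 := hRa r hr
    have hs := hsinh r (hsub hr)
    have hc := hcosh r (hsub hr)
    have hcs := Real.cosh_sq r
    have hex : rexp (-r) = (rexp r)⁻¹ := Real.exp_neg r
    have hx2 : 2 < rexp r := by
      have := Real.add_one_lt_exp (show r ≠ 0 by linarith); linarith
    have hc' := Real.cosh_eq r
    have hs' := Real.sinh_eq r
    rw [hex] at *
    set X := rexp r
    have hXi : X⁻¹ < 1 := inv_lt_one_of_one_lt₀ (by linarith)
    have hXp : 0 < X⁻¹ := by positivity
    have hcX : Real.cosh r ≤ X := by linarith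
    have hsX : X / 4 ≤ Real.sinh r := by linarith
    constructor
    · rw [← div_eq_mul_inv, div_le_div_iff₀ (by linarith) (by positivity)]
      have k1 : Real.sinh r ^ 2 ≤ Real.cosh r * X := by nlinarith
      have k2 : Real.cosh r / 2 ≤ Real.cosh r - a := by linarith
      have k3 : Real.cosh r / 2 * X ≤ (Real.cosh r - a) * X :=
        mul_le_mul_of_nonneg_right k2 (by linarith)
      nlinarith
    · rw [← div_eq_mul_inv, div_le_div_iff₀ (by positivity) (by linarith)]
      have k1 : X ^ 2 ≤ 16 * Real.sinh r ^ 2 := by nlinarith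
      have k2 : (Real.cosh r - a) * X ≤ X * X :=
        mul_le_mul_of_nonneg_right (by linarith) (by linarith)
      nlinarith
  have hVp : ∀ r ∈ Ioi R, 0 < a * (Real.cosh r - a) / Real.sinh r ^ 2 := fun r hr =>
    lt_of_lt_of_le (by positivity) (hV r hr).1
  have h0 := core (R := R) (u := u) (v := v) (Q := Q) (Q' := Q')
    (fun r hr => hu r (hsub hr)) (fun r hr => hv r (hsub hr)) (fun r hr => hQ r (hsub hr))
    (fun r hr => by have := hVp r hr; simp only [hQ_def]; positivity)
    (fun r hr => by
      have hs := hsinh r (hsub hr)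
      have h2 := hRa r hr
      have hc := hcosh r (hsub hr)
      simp only [hQ'_def]
      apply div_nonpos_of_nonpos_of_nonneg _ (by positivity)
      apply mul_nonpos_of_nonneg_of_nonpos ha0.le
      nlinarith)
    (hint.mono_set hsub)
    (by
      by_cases hσ : σ = 0
      · right
        refine ⟨a / 2, 16 * a, by positivity, by positivity, fun r hr => ?_⟩
        simpa [hQ_def, hσ] using hV r hr
      · left
        refine ⟨σ ^ 2, by positivity, fun r hr => ?_⟩
        have := hVp r hr
        simp only [hQ_def]; linarith)
  have hfin := back hu hv (fun r hr => (hQ r hr).continuousAt.continuousWithinAt) h0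
  intro z hz
  have hz' : (3:ℝ) < 1 - 2 * z := by have := mem_Iio.1 hz; linarith
  have hr : arcosh (1 - 2 * z) ∈ Ioi r₀ :=
    (arcosh_lt_arcosh (by norm_num) (by linarith)).2 hz'
  have h := hfin _ hr
  have hs := hsinh _ hr
  have e : Z (arcosh (1 - 2 * z)) = z := by
    simp only [hZ]
    rw [Real.cosh_arcosh (by linarith)]; ring
  simp only [hu_def, e] at h
  have : Real.sinh (arcosh (1 - 2 * z)) ^ a ≠ 0 := by positivity
  exact (mul_eq_zero.1 h).resolve_left this

theorem no_square_integrable_eigenfunction (n : ℕ) (hn : 2 ≤ n) (σ : ℝ)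
    (w : ℝ → ℂ)
    (hdiff : ∀ z ∈ Iio (-1 : ℝ), DifferentiableAt ℝ w z)
    (hdiff2 : ∀ z ∈ Iio (-1 : ℝ), DifferentiableAt ℝ (deriv w) z)
    (hE : SatisfiesRadialHGC n (-(σ : ℂ) ^ 2) w (Iio (-1)))
    (hL2 : IntegrableOn
      (fun z : ℝ => ‖w z‖ ^ 2 * (z * (z - 1)) ^ ((n : ℝ) / 2 - 1)) (Iio (-1))) :
    ∀ z ∈ Iio (-1 : ℝ), w z = 0 := by
  have hE' : ∀ z ∈ Iio (-1 : ℝ), ((z * (1 - z) : ℝ) : ℂ) * deriv (deriv w) z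
      + (((n:ℝ) / 2 - n * z : ℝ) : ℂ) * deriv w z
      - (((((n:ℝ) - 1) / 4 * ((n:ℝ) - 1 + 1 / (1 - z)) + σ ^ 2) : ℝ) : ℂ) * w z = 0 := by
    intro z hz
    rw [← hE z hz]
    push_cast
    ring
  have key : ∀ L : ℂ →L[ℝ] ℝ, (∀ c : ℂ, |L c| ≤ ‖c‖) → ∀ z ∈ Iio (-1 : ℝ), L (w z) = 0 := by
    intro L hL
    refine real_main n hn σ (fun z => L (w z)) (fun z => L (deriv w z))
      (fun z => L (deriv (deriv w) z)) ?_ ?_ ?_ ?_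
    · exact fun z hz => L.hasFDerivAt.comp_hasDerivAt z (hdiff z hz).hasDerivAt
    · exact fun z hz => L.hasFDerivAt.comp_hasDerivAt z (hdiff2 z hz).hasDerivAt
    · intro z hz
      have := congrArg L (hE' z hz)
      simp only [← Complex.real_smul] at this
      simpa only [map_sub, map_add, map_smul, smul_eq_mul, map_zero] using this
    · refine Integrable.mono hL2 ?_ ?_
      · refine ContinuousOn.aestronglyMeasurable ?_ measurableSet_Iio
        intro z hz
        apply ContinuousAt.continuousWithinAt
        have hz' := mem_Iio.1 hz
        refine ContinuousAt.mul ?_ ?_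
        · exact (L.continuous.continuousAt.comp (hdiff z hz).continuousAt).pow 2
        · refine ContinuousAt.rpow_const (by fun_prop) (Or.inl ?_)
          nlinarith
      · refine (ae_restrict_iff' measurableSet_Iio).2 (Filter.Eventually.of_forall fun z hz => ?_)
        rw [norm_mul, norm_mul]
        gcongr
        rw [norm_pow, norm_pow, norm_norm, Real.norm_eq_abs]
        gcongr
        exact hL _
  intro z hz
  apply Complex.ext
  · exact key Complex.reCLM (fun c => Complex.abs_re_le_norm c) z hz
  · exact key Complex.imCLM (fun c => Complex.abs_im_le_norm c) z hz
end

section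
/- Let n ≥ 2 be an integer and let h : ℝ × ℝ^{n−1} → ℂ be a smooth compactly supported function. For α ∈ ℂ with Re α > n, the function (t, x) ↦ (t² − ‖x‖²)^{(α−n)/2} · h(t, x), where (t² − ‖x‖²)^{w} := exp(w·log(t² − ‖x‖²)) with the real logarithm, is integrable over the solid forward light cone { (t, x) ∈ ℝ × ℝ^{n−1} : t > ‖x‖ }, and the map α ↦ ( π^{1−n/2} · 2^{1−α} / ( Γ(α/2) · Γ((α−n)/2 + 1) ) ) · ∫_{t > ‖x‖} (t² − ‖x‖²)^{(α−n)/2} · h(t, x) dt dx is holomorphic on the half-plane { α ∈ ℂ : Re α > n }. -/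
open Real Set Complex MeasureTheory Filter

theorem riesz_bound (l L x d R : ℝ) (hl : l ≤ L) (hL : 0 ≤ L) (hd : 0 < d) (hx : d ≤ x)
    (hR : x ≤ R) : |l| * Real.exp (x * l) ≤ L * Real.exp (R * L) + 1 / d := by
  have hx0 : 0 < x := hd.trans_le hx
  rcases le_total 0 l with h0 | h0
  · rw [abs_of_nonneg h0]
    have h1 : Real.exp (x * l) ≤ Real.exp (R * L) := by
      apply Real.exp_le_exp.2
      exact mul_le_mul hR hl h0 (hx0.le.trans hR)
    have h2 : l * Real.exp (x * l) ≤ L * Real.exp (R * L) :=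
      mul_le_mul hl h1 (Real.exp_pos _).le hL
    have : 0 < 1 / d := by positivity
    linarith
  · rw [abs_of_nonpos h0]
    have h1 : (-l) * d ≤ Real.exp (-(x * l)) := by
      have := Real.add_one_le_exp (-(x * l))
      nlinarith
    have h3 : -l * Real.exp (x * l) ≤ 1 / d := by
      rw [le_div_iff₀ hd]
      calc -l * Real.exp (x * l) * d = ((-l) * d) * Real.exp (x * l) := by ring
        _ ≤ Real.exp (-(x * l)) * Real.exp (x * l) :=
          mul_le_mul_of_nonneg_right h1 (Real.exp_pos _).le
        _ = 1 := by rw [← Real.exp_add]; simp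
    have : 0 ≤ L * Real.exp (R * L) := by positivity
    linarith

theorem riesz_distribution_holomorphic (n : ℕ) (hn : 2 ≤ n)
    (h : ℝ × EuclideanSpace ℝ (Fin (n - 1)) → ℂ)
    (hsm : ContDiff ℝ (⊤ : ℕ∞) h) (hsupp : HasCompactSupport h) :
    (∀ α : ℂ, (n : ℝ) < α.re →
      IntegrableOn
        (fun p : ℝ × EuclideanSpace ℝ (Fin (n - 1)) =>
          Complex.exp ((α - (n : ℂ)) / 2 * (Real.log (p.1 ^ 2 - ‖p.2‖ ^ 2) : ℂ)) * h p)
        {p : ℝ × EuclideanSpace ℝ (Fin (n - 1)) | ‖p.2‖ < p.1}) ∧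
    DifferentiableOn ℂ
      (fun α : ℂ =>
        ((π ^ (1 - (n : ℝ) / 2) : ℝ) : ℂ) * Complex.exp ((1 - α) * (Real.log 2 : ℂ)) /
          (Complex.Gamma (α / 2) * Complex.Gamma ((α - (n : ℂ)) / 2 + 1)) *
        ∫ p in {p : ℝ × EuclideanSpace ℝ (Fin (n - 1)) | ‖p.2‖ < p.1},
          Complex.exp ((α - (n : ℂ)) / 2 * (Real.log (p.1 ^ 2 - ‖p.2‖ ^ 2) : ℂ)) * h p)
      {α : ℂ | (n : ℝ) < α.re} := by
  have hcont : Continuous h := hsm.continuous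
  have hint : Integrable h := hcont.integrable_of_hasCompactSupport hsupp
  obtain ⟨L, hL0, hL⟩ : ∃ L : ℝ, 0 ≤ L ∧ ∀ p : ℝ × EuclideanSpace ℝ (Fin (n - 1)), h p ≠ 0 →
      Real.log (p.1 ^ 2 - ‖p.2‖ ^ 2) ≤ L := by
    have hc : Continuous (fun p : ℝ × EuclideanSpace ℝ (Fin (n - 1)) =>
      p.1 ^ 2 - ‖p.2‖ ^ 2) := by fun_prop
    obtain ⟨C, hC⟩ := hsupp.isCompact.exists_bound_of_continuousOn hc.continuousOn
    refine ⟨max C 0, le_max_right _ _, fun p hp => ?_⟩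
    have h1 := hC p (subset_tsupport _ hp)
    rw [Real.norm_eq_abs] at h1
    rw [← Real.log_abs]
    exact ((Real.log_le_self (abs_nonneg _)).trans h1).trans (le_max_left _ _)
  have hlm : Measurable (fun p : ℝ × EuclideanSpace ℝ (Fin (n - 1)) =>
      (Real.log (p.1 ^ 2 - ‖p.2‖ ^ 2) : ℂ)) := by fun_prop
  have hre : ∀ (α : ℂ) (l : ℝ), ‖Complex.exp ((α - (n : ℂ)) / 2 * (l : ℂ))‖
      = Real.exp ((α.re - n) / 2 * l) := by
    intro α l
    rw [Complex.norm_exp, Complex.re_mul_ofReal]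
    congr 2
    simp
  have hmeas : ∀ α : ℂ, AEStronglyMeasurable
      (fun p : ℝ × EuclideanSpace ℝ (Fin (n - 1)) =>
          Complex.exp ((α - (n : ℂ)) / 2 * (Real.log (p.1 ^ 2 - ‖p.2‖ ^ 2) : ℂ)) * h p)
      volume := by
    intro α
    exact ((Complex.measurable_exp.comp (hlm.const_mul _)).aestronglyMeasurable).mul
      hcont.aestronglyMeasurable
  have hI : ∀ α : ℂ, (n : ℝ) < α.re → Integrable
        (fun p : ℝ × EuclideanSpace ℝ (Fin (n - 1)) =>
          Complex.exp ((α - (n : ℂ)) / 2 * (Real.log (p.1 ^ 2 - ‖p.2‖ ^ 2) : ℂ)) * h p) := by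
    intro α hα
    refine Integrable.mono' (hint.norm.const_mul (Real.exp ((α.re - n) / 2 * L))) (hmeas α) ?_
    refine Eventually.of_forall fun p => ?_
    rw [norm_mul, hre]
    by_cases hp : h p = 0
    · simp [hp]
    · refine mul_le_mul_of_nonneg_right (Real.exp_le_exp.2 ?_) (norm_nonneg _)
      exact mul_le_mul_of_nonneg_left (hL p hp) (by linarith)
  refine ⟨fun α hα => (hI α hα).integrableOn, ?_⟩
  intro α hα
  have hα' : (n : ℝ) < α.re := hα
  have hn0 : (0 : ℝ) ≤ n := Nat.cast_nonneg n
  apply DifferentiableAt.differentiableWithinAt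
  apply DifferentiableAt.mul
  · have g1 : DifferentiableAt ℂ (fun α : ℂ => Complex.Gamma (α / 2)) α := by
      apply DifferentiableAt.comp (g := Complex.Gamma) (f := fun α : ℂ => α / 2)
      · apply Complex.differentiableAt_Gamma
        intro m hm
        have := congrArg Complex.re hm
        simp at this
        have hm0 : (0 : ℝ) ≤ m := Nat.cast_nonneg m
        linarith
      · fun_prop
    have g2 : DifferentiableAt ℂ (fun α : ℂ => Complex.Gamma ((α - (n : ℂ)) / 2 + 1)) α := by
      apply DifferentiableAt.comp (g := Complex.Gamma) (f := fun α : ℂ => (α - (n : ℂ)) / 2 + 1)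
      · apply Complex.differentiableAt_Gamma
        intro m hm
        have := congrArg Complex.re hm
        simp at this
        have hm0 : (0 : ℝ) ≤ m := Nat.cast_nonneg m
        linarith
      · fun_prop
    refine DifferentiableAt.div (by fun_prop) (g1.mul g2) (mul_ne_zero ?_ ?_)
    · apply Complex.Gamma_ne_zero_of_re_pos
      simp
      linarith
    · apply Complex.Gamma_ne_zero_of_re_pos
      simp
      linarith
  · obtain ⟨d, hd, hdα⟩ : ∃ d : ℝ, 0 < d ∧ n + 2 * d < α.re :=
      ⟨(α.re - n) / 4, by linarith, by linarith⟩
    set R : ℝ := (α.re + 1 - n) / 2 with hRdef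
    have hs : {β : ℂ | n + 2 * d < β.re ∧ β.re < α.re + 1} ∈ nhds α := by
      apply IsOpen.mem_nhds
      · exact (isOpen_lt continuous_const Complex.continuous_re).inter
          (isOpen_lt Complex.continuous_re continuous_const)
      · exact ⟨hdα, by linarith⟩
    refine (hasDerivAt_integral_of_dominated_loc_of_deriv_le
      (μ := volume.restrict {p : ℝ × EuclideanSpace ℝ (Fin (n - 1)) | ‖p.2‖ < p.1})
      (F := fun (α : ℂ) (p : ℝ × EuclideanSpace ℝ (Fin (n - 1))) =>
        Complex.exp ((α - (n : ℂ)) / 2 * (Real.log (p.1 ^ 2 - ‖p.2‖ ^ 2) : ℂ)) * h p)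
      (F' := fun (α : ℂ) (p : ℝ × EuclideanSpace ℝ (Fin (n - 1))) =>
        (1 / 2 * (Real.log (p.1 ^ 2 - ‖p.2‖ ^ 2) : ℂ)) *
        (Complex.exp ((α - (n : ℂ)) / 2 * (Real.log (p.1 ^ 2 - ‖p.2‖ ^ 2) : ℂ)) * h p))
      (bound := fun p => (L * Real.exp (R * L) + 1 / d) * ‖h p‖)
      hs ?_ ?_ ?_ ?_ ?_ ?_).2.differentiableAt
    · exact Eventually.of_forall fun β => (hmeas β).restrict
    · exact (hI α hα').integrableOn
    · exact ((hlm.const_mul _).aestronglyMeasurable.mul (hmeas α)).restrict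
    · refine Eventually.of_forall fun p β hβ => ?_
      obtain ⟨hβ1, hβ2⟩ := hβ
      rw [norm_mul, norm_mul, norm_mul, hre, Complex.norm_real, Real.norm_eq_abs]
      by_cases hp : h p = 0
      · simp [hp]
      · have hb := riesz_bound (Real.log (p.1 ^ 2 - ‖p.2‖ ^ 2)) L ((β.re - n) / 2) d R
          (hL p hp) hL0 hd (by linarith) (by rw [hRdef]; linarith)
        rw [← mul_assoc]
        refine mul_le_mul_of_nonneg_right ?_ (norm_nonneg _)
        have h2 : ‖(1 / 2 : ℂ)‖ = 1 / 2 := by norm_num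
        rw [h2]
        have h3 : 0 ≤ |Real.log (p.1 ^ 2 - ‖p.2‖ ^ 2)| *
          Real.exp ((β.re - n) / 2 * Real.log (p.1 ^ 2 - ‖p.2‖ ^ 2)) := by positivity
        linarith
    · exact (hint.norm.const_mul _).integrableOn
    · refine Eventually.of_forall fun p β _ => ?_
      have h1 : HasDerivAt (fun β : ℂ => (β - (n : ℂ)) / 2 *
          (Real.log (p.1 ^ 2 - ‖p.2‖ ^ 2) : ℂ))
          (1 / 2 * (Real.log (p.1 ^ 2 - ‖p.2‖ ^ 2) : ℂ)) β :=
        (((hasDerivAt_id β).sub_const _).div_const 2).mul_const _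
      exact (h1.cexp.mul_const (h p)).congr_deriv (by ring)
end
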